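/- arXiv:0909.4760 — 2 statements merged into one kernel-verified Lean document; each statement's English description precedes it below -/
import Mathlib

section
/- Let r ≥ 1, k ≥ 1 and N ≥ 1 be integers. Work in the free group F on the generators a_1, …, a_r, t. Let W = t^{ε_1} W_1 t^{ε_2} W_2 ⋯ t^{ε_k} W_k, where each ε_i is a nonzero integer and each W_i is a nonempty reduced word in the letters a_1, …, a_r. Suppose that W_1, …, W_k freely generate a subgroup of the free group on a_1, …, a_r, i.e. the homomorphism from the free group of rank k to the free group on a_1, …, a_r sending the i-th basis element to W_i is injective. Then the one-relator group G = ⟨a_1, …, a_r, t ∣ W^N⟩, i.e. the quotient of F by the normal closure of W^N, is coherent. -/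
/-- A word over the alphabet `α` (a list of letters with exponents `±1`) is *reduced*
if it contains no adjacent pair of the form `(s, e) (s, ¬e)`. -/
def WordReduced {α : Type*} (w : List (α × Bool)) : Prop :=
  List.Chain' (fun p q => ¬(p.1 = q.1 ∧ p.2 = !q.2)) w

/-- A group is *finitely presented* if it is isomorphic to the quotient of a free group
on a finite set of generators by the normal closure of a finite set of relators. -/
def FinitelyPresentedGroup (G : Type*) [Group G] : Prop :=
  ∃ (α : Type) (_ : Fintype α) (rels : Finset (FreeGroup α)),
    Nonempty (PresentedGroup (rels : Set (FreeGroup α)) ≃* G)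

/-- A group is *coherent* if every finitely generated subgroup is finitely presented. -/
def CoherentGroup (G : Type*) [Group G] : Prop :=
  ∀ H : Subgroup G, H.FG → FinitelyPresentedGroup H

/-- The word `a^e` : the letter `a` repeated `|e|` times, with exponent sign that of `e`. -/
def letterPow {α : Type*} (a : α) (e : ℤ) : List (α × Bool) :=
  List.replicate e.natAbs (a, decide (0 < e))

/-- Re-express a word over the alphabet `α` as a word over a larger alphabet `β`
via a map `f : α → β` of alphabets. -/
def embedWord {α β : Type*} (f : α → β) (w : List (α × Bool)) : List (β × Bool) :=
  w.map fun p => (f p.1, p.2)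

/-- The word `W = t^{ε₁} W₁ t^{ε₂} W₂ ⋯ t^{ε_k} W_k` over the alphabet
`Fin r ⊕ Unit`, where `Sum.inl i` is the generator `aᵢ` and `Sum.inr ()` is `t`. -/
def windmillWord (r k : ℕ) (ε : Fin k → ℤ) (Wi : Fin k → List (Fin r × Bool)) :
    List ((Fin r ⊕ Unit) × Bool) :=
  ((List.finRange k).map fun i =>
    letterPow (Sum.inr () : Fin r ⊕ Unit) (ε i) ++ embedWord Sum.inl (Wi i)).flatten


/-! ### Ordered products -/

/-- Ordered product of the first `n` terms of a sequence. -/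
def prodTo {M : Type*} [Monoid M] (v : ℕ → M) : ℕ → M
  | 0 => 1
  | n + 1 => prodTo v n * v n

theorem prodTo_congr {M : Type*} [Monoid M] {v w : ℕ → M} {n : ℕ}
    (h : ∀ j, j < n → v j = w j) : prodTo v n = prodTo w n := by
  induction n with
  | zero => rfl
  | succ n ih =>
    simp only [prodTo]
    rw [ih (fun j hj => h j (by omega)), h n (by omega)]

theorem prodTo_add {M : Type*} [Monoid M] (v : ℕ → M) (m n : ℕ) :
    prodTo v (m + n) = prodTo v m * prodTo (fun j => v (m + j)) n := by
  induction n with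
  | zero => simp [prodTo]
  | succ n ih => rw [← add_assoc]; simp only [prodTo]; rw [ih, mul_assoc]

theorem prodTo_map {M M' : Type*} [Monoid M] [Monoid M'] (φ : M →* M') (v : ℕ → M) (n : ℕ) :
    φ (prodTo v n) = prodTo (fun j => φ (v j)) n := by
  induction n with
  | zero => simp [prodTo]
  | succ n ih => simp [prodTo, ih]

theorem prodTo_update_fix {M : Type*} [Group M] (v : ℕ → M) (n j0 : ℕ) (hj : j0 < n) :
    ∃ z, prodTo (Function.update v j0 z) n = 1 := by
  obtain ⟨d, rfl⟩ : ∃ d, n = j0 + (1 + d) := ⟨n - j0 - 1, by omega⟩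
  refine ⟨(prodTo v j0)⁻¹ * (prodTo (fun j => v (j0 + (1 + j))) d)⁻¹, ?_⟩
  rw [prodTo_add, prodTo_add]
  rw [prodTo_congr (v := Function.update v j0 _) (w := v)
    (fun j hj => by rw [Function.update_of_ne (by omega)])]
  have h : ∀ z j, Function.update v j0 z (j0 + (1 + j)) = v (j0 + (1 + j)) :=
    fun z j => Function.update_of_ne (by omega) _ _
  simp only [h]
  simp [prodTo]

theorem prodTo_periodic_mul {M : Type*} [Group M] (v : ℕ → M) (k : ℕ)
    (hv : ∀ j, v (j + k) = v j) (N : ℕ) : prodTo v (k * N) = prodTo v k ^ N := by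
  induction N with
  | zero => simp [prodTo]
  | succ N ih =>
    rw [Nat.mul_succ, prodTo_add, ih, pow_succ]
    congr 1
    refine prodTo_congr fun j _ => ?_
    have : ∀ N, v (k * N + j) = v j := by
      intro N
      induction N with
      | zero => simp
      | succ N ih => rw [show k * (N + 1) + j = (k * N + j) + k by ring, hv, ih]
    exact this N

theorem prodTo_rotate {M : Type*} [Group M] (v : ℕ → M) (n k : ℕ)
    (hv : ∀ j, v (j + n) = v j) (h : prodTo v n = 1) :
    prodTo (fun j => v (j + k)) n = 1 := by
  have h1 := prodTo_add v k n
  rw [add_comm k n, prodTo_add v n k, h, one_mul,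
    prodTo_congr (v := fun j => v (n + j)) (w := v) (fun j _ => by rw [add_comm, hv])] at h1
  have h2 : prodTo (fun j => v (k + j)) n = 1 := by
    simpa using h1
  simpa [add_comm] using h2

/-! ### Cosets -/

theorem exists_coset_rep {K G : Type*} [Group K] [Group G] (ι : K →* G)
    (hι : Function.Injective ι) :
    ∃ (rep : G → G) (co : G → K), (∀ g, g = rep g * ι (co g)) ∧
      (∀ g κ, rep (g * ι κ) = rep g) ∧ (∀ g κ, co (g * ι κ) = co g * κ) := by
  classical
  let rep : G → G := fun g => (QuotientGroup.mk (s := ι.range) g).out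
  have hrep : ∀ g, ∃ κ, g = rep g * ι κ := by
    intro g
    have h : (QuotientGroup.mk (s := ι.range) (rep g)) = QuotientGroup.mk g :=
      QuotientGroup.out_eq' _
    obtain ⟨κ, hκ⟩ := QuotientGroup.eq.1 h
    exact ⟨κ, by rw [hκ]; group⟩
  choose co hco using hrep
  have hr : ∀ g κ, rep (g * ι κ) = rep g := by
    intro g κ
    simp only [rep]
    congr 1
    refine QuotientGroup.eq.2 ⟨κ⁻¹, by simp⟩
  refine ⟨rep, co, hco, hr, fun g κ => hι ?_⟩
  have h1 := hco (g * ι κ)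
  rw [hr] at h1
  rw [map_mul]
  apply mul_left_cancel (a := rep g)
  rw [← h1, ← mul_assoc, ← hco]

theorem exists_int_prod {Λ : Type*} [Group Λ] (w : ℤ → Λ) :
    ∃ P : ℤ → Λ, ∀ n, P (n + 1) = P n * w n := by
  refine ⟨fun n => if 0 ≤ n then prodTo (fun i => w i) n.toNat
    else prodTo (fun i => (w (-(i + 1 : ℤ)))⁻¹) (-n).toNat, fun n => ?_⟩
  rcases le_or_gt 0 n with h | h
  · obtain ⟨m, rfl⟩ := Int.eq_ofNat_of_zero_le h
    have h2 : ((m : ℤ) + 1).toNat = m + 1 := by omega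
    simp [h2, prodTo, show (0 : ℤ) ≤ (m : ℤ) + 1 by omega]
  · obtain ⟨m, rfl⟩ : ∃ m : ℕ, n = -((m : ℤ) + 1) := ⟨(-n - 1).toNat, by omega⟩
    have h2 : ((m : ℤ) + 1).toNat = m + 1 := by omega
    have h3 : ¬ (0 : ℤ) ≤ -((m : ℤ) + 1) := by omega
    rcases Nat.eq_zero_or_pos m with rfl | hm
    · simp [prodTo]
    · have h4 : ¬ (0 : ℤ) ≤ -((m : ℤ) + 1) + 1 := by omega
      have h5 : (-(-((m : ℤ) + 1) + 1)).toNat = m := by omega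
      have h6 : (-(-((m : ℤ) + 1))).toNat = m + 1 := by omega
      simp only [h3, h4, if_false, h5, h6, prodTo]
      simp

/-- In a group with an element `z` of infinite order one can solve `β(g)⁻¹ β(g z) = u(g)`. -/
theorem exists_solve_infinite {G Λ : Type*} [Group G] [Group Λ] (z : G)
    (hz : ∀ m : ℤ, z ^ m = 1 → m = 0) (u : G → Λ) :
    ∃ β : G → Λ, ∀ g, (β g)⁻¹ * β (g * z) = u g := by
  have hinj : Function.Injective (zpowersHom G z) := by
    rw [injective_iff_map_eq_one]
    intro a ha
    rw [zpowersHom_apply] at ha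
    exact hz _ ha
  obtain ⟨rep, co, h1, h2, h3⟩ := exists_coset_rep (zpowersHom G z) hinj
  have hP : ∀ r : G, ∃ P : ℤ → Λ, ∀ n, P (n + 1) = P n * u (r * z ^ n) :=
    fun r => exists_int_prod _
  choose P hP using hP
  refine ⟨fun g => P (rep g) (Multiplicative.toAdd (co g)), fun g => ?_⟩
  have hz1 : z = zpowersHom G z (Multiplicative.ofAdd 1) := by simp [zpowersHom_apply]
  have e2 : rep (g * z) = rep g := by
    conv_lhs => rw [hz1]
    exact h2 _ _
  have e3 : co (g * z) = co g * Multiplicative.ofAdd 1 := by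
    conv_lhs => rw [hz1]
    exact h3 _ _
  simp only [e2, e3, toAdd_mul, toAdd_ofAdd, hP]
  have := h1 g
  rw [zpowersHom_apply] at this
  rw [← this]
  simp


/-! ### Invariant equivalence relations on lines -/

section Lines

variable {G : Type} [Group G]

/-- An equivalence relation on `G`, invariant under left multiplication by `L`, whose classes are
contained in the lines `p ⟨t⟩`. -/
structure LineRel (t : G) (L : Subgroup G) (E : G → G → Prop) : Prop where
  eqv : Equivalence E
  line : ∀ p q, E p q → ∃ m : ℤ, q = p * t ^ m
  inv : ∀ l p q, l ∈ L → E p q → E (l * p) (l * q)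

/-- Points which are not the top of their class. -/
def NN (t : G) (E : G → G → Prop) : Set G := {p | ∃ m : ℤ, 0 < m ∧ E p (p * t ^ m)}

/-- Cells all of whose arcs are in the relation. -/
def CC (t : G) (n : ℕ) (P : ℕ → G) (e : ℕ → ℤ) (E : G → G → Prop) : Set G :=
  {g | ∀ j, j < n → E (g * P j) (g * P j * t ^ e j)}

/-- The relation obtained by adding an orbit of links. -/
def addLink (L : Subgroup G) (E : G → G → Prop) (a b : G) : G → G → Prop :=
  Relation.EqvGen (fun p q => E p q ∨ ∃ l ∈ L, p = l * a ∧ q = l * b)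

theorem addLink_le {L : Subgroup G} {E : G → G → Prop} {a b : G} {p q : G} (h : E p q) :
    addLink L E a b p q := Relation.EqvGen.rel _ _ (Or.inl h)

theorem addLink_link {L : Subgroup G} {E : G → G → Prop} {a b : G} {l : G} (hl : l ∈ L) :
    addLink L E a b (l * a) (l * b) := Relation.EqvGen.rel _ _ (Or.inr ⟨l, hl, rfl, rfl⟩)

theorem addLink_min {L : Subgroup G} {E : G → G → Prop} {a b : G} (R : G → G → Prop)
    (hR : Equivalence R) (h1 : ∀ p q, E p q → R p q) (h2 : ∀ l ∈ L, R (l * a) (l * b))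
    {p q : G} (h : addLink L E a b p q) : R p q := by
  unfold addLink at h
  induction h with
  | rel x y h =>
    rcases h with h | ⟨l, hl, rfl, rfl⟩
    · exact h1 _ _ h
    · exact h2 l hl
  | refl x => exact hR.refl x
  | symm x y _ ih => exact hR.symm ih
  | trans x y z _ _ ih1 ih2 => exact hR.trans ih1 ih2

theorem addLink_eqv (L : Subgroup G) (E : G → G → Prop) (a b : G) :
    Equivalence (addLink L E a b) := Relation.EqvGen.is_equivalence _

theorem addLink_lineRel {t : G} {L : Subgroup G} {E : G → G → Prop} (hE : LineRel t L E)
    {a b : G} (hab : ∃ m : ℤ, b = a * t ^ m) : LineRel t L (addLink L E a b) := by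
  refine ⟨addLink_eqv _ _ _ _, ?_, ?_⟩
  · intro p q h
    refine addLink_min (fun p q => ∃ m : ℤ, q = p * t ^ m) ⟨?_, ?_, ?_⟩ hE.line ?_ h
    · intro x; exact ⟨0, by simp⟩
    · rintro x y ⟨m, rfl⟩; exact ⟨-m, by simp⟩
    · rintro x y z ⟨m, rfl⟩ ⟨m', rfl⟩; exact ⟨m + m', by rw [zpow_add, mul_assoc]⟩
    · rintro l _
      obtain ⟨m, rfl⟩ := hab
      exact ⟨m, by rw [mul_assoc]⟩
  · intro l p q hl h
    have he := addLink_eqv L E a b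
    refine addLink_min (fun p q => addLink L E a b (l * p) (l * q)) ⟨?_, ?_, ?_⟩ ?_ ?_ h
    · intro x; exact he.refl _
    · intro x y h; exact he.symm h
    · intro x y z h h'; exact he.trans h h'
    · intro p q h; exact addLink_le (hE.inv _ _ _ hl h)
    · intro l' hl'
      have := addLink_link (E := E) (a := a) (b := b) (L.mul_mem hl hl')
      simpa [mul_assoc] using this

theorem LineRel.top_unique {t : G} {L : Subgroup G} {E : G → G → Prop} (hE : LineRel t L E)
    {p q : G} (hp : p ∉ NN t E) (hq : q ∉ NN t E) (h : E p q) : p = q := by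
  obtain ⟨m, rfl⟩ := hE.line _ _ h
  rcases lt_trichotomy m 0 with hm | hm | hm
  · exact absurd ⟨-m, by omega, by simpa using hE.eqv.symm h⟩ hq
  · simp [hm]
  · exact absurd ⟨m, hm, h⟩ hp

theorem LineRel.NN_inv {t : G} {L : Subgroup G} {E : G → G → Prop} (hE : LineRel t L E)
    {l p : G} (hl : l ∈ L) : l * p ∈ NN t E ↔ p ∈ NN t E := by
  constructor
  · rintro ⟨m, hm, h⟩
    refine ⟨m, hm, ?_⟩
    have := hE.inv _ _ _ (L.inv_mem hl) h
    simpa [mul_assoc] using this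
  · rintro ⟨m, hm, h⟩
    refine ⟨m, hm, ?_⟩
    have := hE.inv _ _ _ hl h
    simpa [mul_assoc] using this

theorem LineRel.inv' {t : G} {L : Subgroup G} {E : G → G → Prop} (hE : LineRel t L E)
    {l p q : G} (hl : l ∈ L) (h : E (l * p) q) : E p (l⁻¹ * q) := by
  have := hE.inv _ _ _ (L.inv_mem hl) h
  simpa using this

theorem NN_addLink_unaffected {t : G} {L : Subgroup G} {E : G → G → Prop} (hE : LineRel t L E)
    {a b p : G} (hp : p ∉ NN t E) (ha : ∀ l ∈ L, ¬ E (l * a) p) (hb : ∀ l ∈ L, ¬ E (l * b) p) :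
    p ∉ NN t (addLink L E a b) := by
  rintro ⟨m, hm, h⟩
  have := addLink_min (fun z w => (E z p ↔ E w p)) ⟨fun _ => Iff.rfl, fun h => h.symm,
    fun h h' => h.trans h'⟩ ?_ ?_ h
  · exact hp ⟨m, hm, hE.eqv.symm (this.1 (hE.eqv.refl p))⟩
  · intro z w hzw
    exact ⟨fun h => hE.eqv.trans (hE.eqv.symm hzw) h, fun h => hE.eqv.trans hzw h⟩
  · intro l hl
    exact ⟨fun h => absurd h (ha l hl), fun h => absurd h (hb l hl)⟩

theorem NN_addLink_high {t : G} {L : Subgroup G} {E E' : G → G → Prop} (hE : LineRel t L E)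
    {a b m q : G} (hm : m ∉ NN t E) (ham : E a m) (hq : q ∉ NN t E) (hbq : E b q)
    (hmq : ∃ i : ℤ, 0 < i ∧ q = m * t ^ i) (hne : ∀ l ∈ L, q ≠ l * m)
    (hmin : ∀ R : G → G → Prop, Equivalence R → (∀ p q, E p q → R p q) →
      (∀ l ∈ L, R (l * a) (l * b)) → ∀ p q, E' p q → R p q)
    {l0 : G} (hl0 : l0 ∈ L) : l0 * q ∉ NN t E' := by
  classical
  rintro ⟨i, hi, h⟩
  obtain ⟨j, hj, hqj⟩ := hmq
  let φ : G → G := fun z => if h : ∃ l, l ∈ L ∧ E z (l * m) then h.choose * q else z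
  have φ1 : ∀ z l, l ∈ L → E z (l * m) → φ z = l * q := by
    intro z l hl hz
    have hex : ∃ l, l ∈ L ∧ E z (l * m) := ⟨l, hl, hz⟩
    have h1 := hex.choose_spec
    have h2 : hex.choose * m = l * m :=
      hE.top_unique (by rwa [hE.NN_inv h1.1]) (by rwa [hE.NN_inv hl])
        (hE.eqv.trans (hE.eqv.symm h1.2) hz)
    simp only [φ, dif_pos hex]
    rw [mul_right_cancel h2]
  have φ0 : ∀ z, (¬ ∃ l, l ∈ L ∧ E z (l * m)) → φ z = z := by
    intro z hz
    simp only [φ, dif_neg hz]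
  have key := hmin (fun z w => E (φ z) (φ w)) ⟨fun _ => hE.eqv.refl _, fun h => hE.eqv.symm h,
    fun h h' => hE.eqv.trans h h'⟩ ?_ ?_ _ _ h
  · have hp : l0 * q ∉ NN t E := by rwa [hE.NN_inv hl0]
    have hφp : φ (l0 * q) = l0 * q := by
      apply φ0
      rintro ⟨l, hl, h1⟩
      have h2 := hE.top_unique hp (by rwa [hE.NN_inv hl]) h1
      refine hne (l0⁻¹ * l) (L.mul_mem (L.inv_mem hl0) hl) ?_
      rw [mul_assoc, ← h2]; simp
    simp only [hφp] at key
    by_cases hex : ∃ l, l ∈ L ∧ E (l0 * q * t ^ i) (l * m)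
    · obtain ⟨l, hl, h1⟩ := hex
      rw [φ1 _ l hl h1] at key
      have h2 := hE.top_unique hp (by rwa [hE.NN_inv hl]) key
      have h3 : l * m ∉ NN t E := by rwa [hE.NN_inv hl]
      refine h3 ⟨j + i, by omega, ?_⟩
      have h4 : l * m * t ^ (j + i) = l0 * q * t ^ i := by
        rw [h2, hqj, zpow_add]; group
      rw [h4]
      exact hE.eqv.symm h1
    · rw [φ0 _ hex] at key
      exact hp ⟨i, hi, key⟩
  · intro z w hzw
    by_cases hex : ∃ l, l ∈ L ∧ E z (l * m)
    · obtain ⟨l, hl, h1⟩ := hex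
      rw [φ1 z l hl h1, φ1 w l hl (hE.eqv.trans (hE.eqv.symm hzw) h1)]
      exact hE.eqv.refl _
    · rw [φ0 z hex, φ0 w]
      · exact hzw
      · rintro ⟨l, hl, h1⟩
        exact hex ⟨l, hl, hE.eqv.trans hzw h1⟩
  · intro l hl
    rw [φ1 _ l hl (hE.inv _ _ _ hl ham), φ0]
    · exact hE.inv _ _ _ hl (hE.eqv.symm hbq)
    · rintro ⟨l', hl', h1⟩
      have h2 := hE.eqv.trans (hE.inv _ _ _ hl (hE.eqv.symm hbq)) h1
      have h3 := hE.top_unique (by rwa [hE.NN_inv hl]) (by rwa [hE.NN_inv hl']) h2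
      refine hne (l⁻¹ * l') (L.mul_mem (L.inv_mem hl) hl') ?_
      rw [mul_assoc, ← h3]; simp

theorem NN_addLink {t : G} {L : Subgroup G} {E : G → G → Prop} (hE : LineRel t L E)
    {a b : G} (hab : ∃ m : ℤ, b = a * t ^ m) :
    NN t (addLink L E a b) ⊆ NN t E ∨ ∃ m, m ∉ NN t E ∧ (E a m ∨ E b m) ∧
      ∀ p ∈ NN t (addLink L E a b), p ∈ NN t E ∨ ∃ l ∈ L, p = l * m := by
  have top_of : ∀ c l p, l ∈ L → p ∉ NN t E → E (l * c) p → ∃ m, m ∉ NN t E ∧ E c m ∧ p = l * m := by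
    intro c l p hl hp h
    exact ⟨l⁻¹ * p, by rwa [hE.NN_inv (L.inv_mem hl)], hE.inv' hl h, by simp⟩
  have main : ∀ p ∈ NN t (addLink L E a b), p ∉ NN t E →
      (∃ l ∈ L, ∃ m, m ∉ NN t E ∧ E a m ∧ p = l * m) ∨
      (∃ l ∈ L, ∃ m, m ∉ NN t E ∧ E b m ∧ p = l * m) := by
    intro p hp hp'
    by_contra hcon
    push Not at hcon
    refine NN_addLink_unaffected hE hp' ?_ ?_ hp
    · intro l hl h
      obtain ⟨m, h1, h2, h3⟩ := top_of a l p hl hp' h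
      exact hcon.1 l hl m h1 h2 h3
    · intro l hl h
      obtain ⟨m, h1, h2, h3⟩ := top_of b l p hl hp' h
      exact hcon.2 l hl m h1 h2 h3
  have uniq : ∀ c m m', E c m → E c m' → m ∉ NN t E → m' ∉ NN t E → m = m' :=
    fun c m m' h h' hm hm' => hE.top_unique hm hm' (hE.eqv.trans (hE.eqv.symm h) h')
  by_cases hA : ∃ m, m ∉ NN t E ∧ E a m
  · obtain ⟨ma, hma, hama⟩ := hA
    by_cases hB : ∃ m, m ∉ NN t E ∧ E b m
    · obtain ⟨mb, hmb, hbmb⟩ := hB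
      right
      have main' : ∀ p ∈ NN t (addLink L E a b), p ∉ NN t E →
          (∃ l ∈ L, p = l * ma) ∨ (∃ l ∈ L, p = l * mb) := by
        intro p hp hp'
        rcases main p hp hp' with ⟨l, hl, m, h1, h2, h3⟩ | ⟨l, hl, m, h1, h2, h3⟩
        · left; exact ⟨l, hl, by rw [h3, uniq a m ma h2 hama h1 hma]⟩
        · right; exact ⟨l, hl, by rw [h3, uniq b m mb h2 hbmb h1 hmb]⟩
      obtain ⟨i, hi⟩ : ∃ i : ℤ, mb = ma * t ^ i := by
        obtain ⟨x, hx⟩ := hab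
        obtain ⟨y, hy⟩ := hE.line _ _ hama
        obtain ⟨z, hz⟩ := hE.line _ _ hbmb
        refine ⟨-y + x + z, ?_⟩
        rw [hz, hx, hy, zpow_add, zpow_add]; group
      by_cases horb : ∃ l ∈ L, mb = l * ma
      · obtain ⟨l0, hl0, h0⟩ := horb
        refine ⟨ma, hma, Or.inl hama, fun p hp => ?_⟩
        by_cases hp' : p ∈ NN t E
        · exact Or.inl hp'
        rcases main' p hp hp' with h | ⟨l, hl, rfl⟩
        · exact Or.inr h
        · exact Or.inr ⟨l * l0, L.mul_mem hl hl0, by rw [h0, mul_assoc]⟩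
      · rcases lt_trichotomy i 0 with hneg | h0 | hpos
        · refine ⟨mb, hmb, Or.inr hbmb, fun p hp => ?_⟩
          by_cases hp' : p ∈ NN t E
          · exact Or.inl hp'
          rcases main' p hp hp' with ⟨l, hl, rfl⟩ | h
          · exfalso
            refine NN_addLink_high hE hmb hbmb hma hama ⟨-i, by omega, by rw [hi]; simp⟩ ?_ ?_ hl hp
            · intro l' hl' h
              exact horb ⟨l'⁻¹, L.inv_mem hl', by rw [h]; simp⟩
            · intro R hR h1 h2 p q h
              exact addLink_min R hR h1 (fun l hl => hR.symm (h2 l hl)) h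
          · exact Or.inr h
        · exact absurd ⟨1, L.one_mem, by rw [hi, h0]; simp⟩ horb
        · refine ⟨ma, hma, Or.inl hama, fun p hp => ?_⟩
          by_cases hp' : p ∈ NN t E
          · exact Or.inl hp'
          rcases main' p hp hp' with h | ⟨l, hl, rfl⟩
          · exact Or.inr h
          · exfalso
            refine NN_addLink_high hE hma hama hmb hbmb ⟨i, hpos, hi⟩ ?_ ?_ hl hp
            · intro l' hl' h
              exact horb ⟨l', hl', h⟩
            · intro R hR h1 h2 p q h
              exact addLink_min R hR h1 h2 h
    · right
      refine ⟨ma, hma, Or.inl hama, fun p hp => ?_⟩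
      by_cases hp' : p ∈ NN t E
      · exact Or.inl hp'
      rcases main p hp hp' with ⟨l, hl, m, h1, h2, h3⟩ | ⟨l, hl, m, h1, h2, h3⟩
      · exact Or.inr ⟨l, hl, by rw [h3, uniq a m ma h2 hama h1 hma]⟩
      · exact absurd ⟨m, h1, h2⟩ hB
  · by_cases hB : ∃ m, m ∉ NN t E ∧ E b m
    · obtain ⟨mb, hmb, hbmb⟩ := hB
      right
      refine ⟨mb, hmb, Or.inr hbmb, fun p hp => ?_⟩
      by_cases hp' : p ∈ NN t E
      · exact Or.inl hp'
      rcases main p hp hp' with ⟨l, hl, m, h1, h2, h3⟩ | ⟨l, hl, m, h1, h2, h3⟩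
      · exact absurd ⟨m, h1, h2⟩ hA
      · exact Or.inr ⟨l, hl, by rw [h3, uniq b m mb h2 hbmb h1 hmb]⟩
    · left
      intro p hp
      by_contra hp'
      rcases main p hp hp' with ⟨l, hl, m, h1, h2, h3⟩ | ⟨l, hl, m, h1, h2, h3⟩
      · exact hA ⟨m, h1, h2⟩
      · exact hB ⟨m, h1, h2⟩

/-- Solving for an `E`-invariant correction with prescribed jump along an orbit of links. -/
theorem exists_correction {t : G} {L : Subgroup G} {E : G → G → Prop} (hE : LineRel t L E)
    (ht : ∀ m : ℤ, t ^ m = 1 → m = 0)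
    {a b m : G} (hab : ∃ m : ℤ, b = a * t ^ m) (hnab : ¬ E a b) (hm : m ∉ NN t E) (ham : E a m)
    {Λ : Type} [Group Λ] (u : G → Λ) :
    ∃ β : G → Λ, (∀ p q, E p q → β p = β q) ∧ ∀ l ∈ L, (β (l * a))⁻¹ * β (l * b) = u l := by
  classical
  -- functions of the form `p ↦ c l` if `p E l m`, else `1`
  have build : ∀ c : G → Λ, ∃ β : G → Λ, (∀ p q, E p q → β p = β q) ∧
      (∀ l ∈ L, ∀ p, E p (l * m) → β p = c l) ∧
      (∀ p, (¬ ∃ l, l ∈ L ∧ E p (l * m)) → β p = 1) := by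
    intro c
    let β : G → Λ := fun z => if h : ∃ l, l ∈ L ∧ E z (l * m) then c h.choose else 1
    have φ1 : ∀ l, l ∈ L → ∀ z, E z (l * m) → β z = c l := by
      intro l hl z hz
      have hex : ∃ l, l ∈ L ∧ E z (l * m) := ⟨l, hl, hz⟩
      have h1 := hex.choose_spec
      have h2 : hex.choose * m = l * m :=
        hE.top_unique (by rwa [hE.NN_inv h1.1]) (by rwa [hE.NN_inv hl])
          (hE.eqv.trans (hE.eqv.symm h1.2) hz)
      simp only [β, dif_pos hex]
      rw [mul_right_cancel h2]
    have φ0 : ∀ z, (¬ ∃ l, l ∈ L ∧ E z (l * m)) → β z = 1 := by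
      intro z hz
      simp only [β, dif_neg hz]
    refine ⟨β, ?_, φ1, φ0⟩
    intro p q hpq
    by_cases hex : ∃ l, l ∈ L ∧ E p (l * m)
    · obtain ⟨l, hl, h1⟩ := hex
      rw [φ1 l hl p h1, φ1 l hl q (hE.eqv.trans (hE.eqv.symm hpq) h1)]
    · rw [φ0 p hex, φ0 q]
      rintro ⟨l, hl, h1⟩
      exact hex ⟨l, hl, hE.eqv.trans hpq h1⟩
  by_cases hb : ∃ z, z ∈ L ∧ E b (z * m)
  · obtain ⟨z, hz, hbz⟩ := hb
    obtain ⟨i, hi⟩ : ∃ i : ℤ, z * m = m * t ^ i := by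
      obtain ⟨x, hx⟩ := hab
      obtain ⟨y, hy⟩ := hE.line _ _ ham
      obtain ⟨w, hw⟩ := hE.line _ _ hbz
      refine ⟨-y + x + w, ?_⟩
      rw [hw, hx, hy, zpow_add, zpow_add]; group
    have hi0 : i ≠ 0 := by
      rintro rfl
      apply hnab
      rw [hi] at hbz
      exact hE.eqv.trans ham (hE.eqv.symm (by simpa using hbz))
    have hzm : z = m * t ^ i * m⁻¹ := by rw [← hi]; group
    have hzinf : ∀ n : ℤ, z ^ n = 1 → n = 0 := by
      intro n hn
      rw [hzm, conj_zpow, ← zpow_mul, conj_eq_one_iff] at hn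
      have := ht _ hn
      rcases mul_eq_zero.1 this with h | h
      · exact absurd h hi0
      · exact h
    obtain ⟨c, hc⟩ := exists_solve_infinite z hzinf u
    obtain ⟨β, h1, h2, _⟩ := build c
    refine ⟨β, h1, fun l hl => ?_⟩
    rw [h2 l hl _ (hE.inv _ _ _ hl ham), h2 (l * z) (L.mul_mem hl hz), hc]
    have := hE.inv _ _ _ hl hbz
    rwa [← mul_assoc] at this
  · obtain ⟨β, h1, h2, h3⟩ := build (fun l => (u l)⁻¹)
    refine ⟨β, h1, fun l hl => ?_⟩
    rw [h2 l hl _ (hE.inv _ _ _ hl ham), h3]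
    · simp
    · rintro ⟨l', hl', h⟩
      refine hb ⟨l⁻¹ * l', L.mul_mem (L.inv_mem hl) hl', ?_⟩
      rw [mul_assoc]
      exact hE.inv' hl h

end Lines


section Forced

variable {G : Type} [Group G]

/-- The projection of `G` to the set of orbits `L \ G`. -/
def orb (L : Subgroup G) (g : G) : Quotient (QuotientGroup.rightRel L) := Quotient.mk _ g

theorem orb_eq {L : Subgroup G} {g h : G} : orb L g = orb L h ↔ ∃ l ∈ L, h = l * g := by
  unfold orb
  rw [Quotient.eq, QuotientGroup.rightRel_apply]
  constructor
  · intro hh; exact ⟨_, hh, by simp⟩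
  · rintro ⟨l, hl, rfl⟩; simpa using hl

theorem orb_mul {L : Subgroup G} {l g : G} (hl : l ∈ L) : orb L (l * g) = orb L g :=
  (orb_eq.2 ⟨l, hl, rfl⟩).symm

/-- Product of the values along the boundary of the cell at `g`. -/
def cellProd (t : G) (n : ℕ) (P : ℕ → G) (e : ℕ → ℤ) {Λ : Type} [Group Λ] (f : G → Λ) (g : G) :
    Λ := prodTo (fun j => (f (g * P j))⁻¹ * f (g * P j * t ^ e j)) n

theorem CC_orb_le (t : G) (L : Subgroup G) (n : ℕ) (hn : 0 < n) (P : ℕ → G) (e : ℕ → ℤ)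
    (he : e 0 ≠ 0) (E : G → G → Prop) (hE : LineRel t L E) (hfin : (orb L '' NN t E).Finite) :
    (orb L '' CC t n P e E).Finite ∧
      (orb L '' CC t n P e E).ncard ≤ (orb L '' NN t E).ncard := by
  classical
  obtain ⟨d, hd⟩ : ∃ d : G, ∀ g ∈ CC t n P e E, g * d ∈ NN t E := by
    rcases lt_or_gt_of_ne he with h | h
    · refine ⟨P 0 * t ^ e 0, fun g hg => ⟨- e 0, by omega, ?_⟩⟩
      have := hE.eqv.symm (hg 0 hn)
      simpa [mul_assoc] using this
    · refine ⟨P 0, fun g hg => ⟨e 0, h, hg 0 hn⟩⟩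
  let φ : Quotient (QuotientGroup.rightRel L) → Quotient (QuotientGroup.rightRel L) :=
    Quotient.lift (fun g => orb L (g * d)) (by
      intro a b hab
      obtain ⟨l, hl, rfl⟩ := orb_eq.1 (Quotient.sound hab : orb L a = orb L b)
      show orb L (a * d) = orb L (l * a * d)
      rw [mul_assoc, orb_mul hl])
  have hφ : ∀ g, φ (orb L g) = orb L (g * d) := fun g => rfl
  have hinj : Function.Injective φ := by
    intro x y
    refine Quotient.inductionOn₂ x y fun a b h => ?_
    change orb L (a * d) = orb L (b * d) at h
    obtain ⟨l, hl, hb⟩ := orb_eq.1 h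
    refine orb_eq.2 ⟨l, hl, ?_⟩
    rw [← mul_assoc] at hb
    exact mul_right_cancel hb
  have hmaps : ∀ x ∈ orb L '' CC t n P e E, φ x ∈ orb L '' NN t E := by
    rintro _ ⟨g, hg, rfl⟩
    exact ⟨g * d, hd g hg, rfl⟩
  have hle : φ '' (orb L '' CC t n P e E) ⊆ orb L '' NN t E := by
    rintro _ ⟨x, hx, rfl⟩; exact hmaps x hx
  refine ⟨Set.Finite.of_finite_image (hfin.subset hle) hinj.injOn, ?_⟩
  exact Set.ncard_le_ncard_of_injOn φ hmaps hinj.injOn hfin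

/-- The class of relations under consideration. -/
structure GoodRel (t : G) (L : Subgroup G) (B : Finset G) (E : G → G → Prop) : Prop where
  rel : LineRel t L E
  fin : (orb L '' NN t E).Finite
  links : ∀ r ∈ B, E r (r * t)

/-- The complexity. -/
noncomputable def cx (t : G) (L : Subgroup G) (n : ℕ) (P : ℕ → G) (e : ℕ → ℤ)
    (E : G → G → Prop) : ℕ :=
  (orb L '' NN t E).ncard - (orb L '' CC t n P e E).ncard

theorem addLink_fin {t : G} {L : Subgroup G} {E : G → G → Prop} (hE : LineRel t L E)
    {a b : G} (hab : ∃ m : ℤ, b = a * t ^ m) (hfin : (orb L '' NN t E).Finite) :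
    (orb L '' NN t (addLink L E a b)).Finite ∧
    ((orb L '' NN t (addLink L E a b)).ncard ≤ (orb L '' NN t E).ncard ∨
      ((orb L '' NN t (addLink L E a b)).ncard ≤ (orb L '' NN t E).ncard + 1 ∧
        ∃ m, m ∉ NN t E ∧ (E a m ∨ E b m))) := by
  rcases NN_addLink hE hab with h | ⟨m, hm, hm', h⟩
  · have h1 := Set.image_mono (f := orb L) h
    exact ⟨hfin.subset h1, Or.inl (Set.ncard_le_ncard h1 hfin)⟩
  · have h1 : orb L '' NN t (addLink L E a b) ⊆ insert (orb L m) (orb L '' NN t E) := by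
      rintro _ ⟨p, hp, rfl⟩
      rcases h p hp with h | ⟨l, hl, rfl⟩
      · exact Or.inr ⟨p, h, rfl⟩
      · exact Or.inl (orb_mul hl)
    have h2 := hfin.insert (orb L m)
    exact ⟨h2.subset h1, Or.inr ⟨(Set.ncard_le_ncard h1 h2).trans (Set.ncard_insert_le _ _),
      m, hm, hm'⟩⟩

theorem addLink_good {t : G} {L : Subgroup G} {B : Finset G} {E : G → G → Prop}
    (hE : GoodRel t L B E) {a b : G} (hab : ∃ m : ℤ, b = a * t ^ m) :
    GoodRel t L B (addLink L E a b) :=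
  ⟨addLink_lineRel hE.rel hab, (addLink_fin hE.rel hab hE.fin).1,
    fun r hr => addLink_le (hE.links r hr)⟩

theorem exists_good (t : G) (ht : ∀ m : ℤ, t ^ m = 1 → m = 0) (L : Subgroup G) (B : Finset G) :
    ∃ E, GoodRel t L B E := by
  classical
  induction B using Finset.induction_on with
  | empty =>
    refine ⟨Eq, ⟨eq_equivalence, ?_, ?_⟩, ?_, by simp⟩
    · rintro p q rfl; exact ⟨0, by simp⟩
    · rintro l p q _ rfl; rfl
    · have : NN t (Eq : G → G → Prop) = ∅ := by
        ext p
        simp only [NN, Set.mem_setOf_eq, Set.mem_empty_iff_false, iff_false, not_exists, not_and]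
        intro m hm h
        have := ht m (by simpa using h)
        omega
      rw [this]; simp
  | insert a B _ ih =>
    obtain ⟨E, hE⟩ := ih
    have hab : ∃ m : ℤ, a * t = a * t ^ m := ⟨1, by simp⟩
    refine ⟨addLink L E a (a * t), ?_⟩
    have h := addLink_good hE hab
    refine ⟨h.rel, h.fin, ?_⟩
    intro r hr
    rcases Finset.mem_insert.1 hr with rfl | hr
    · simpa using addLink_link (E := E) (a := r) (b := r * t) L.one_mem
    · exact h.links r hr

theorem CC_inv {t : G} {L : Subgroup G} {n : ℕ} {P : ℕ → G} {e : ℕ → ℤ} {E : G → G → Prop}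
    (hE : LineRel t L E) {l g : G} (hl : l ∈ L) (hg : g ∈ CC t n P e E) :
    l * g ∈ CC t n P e E := by
  intro j hj
  have := hE.inv _ _ _ hl (hg j hj)
  simpa [mul_assoc] using this

theorem CC_inv' {t : G} {L : Subgroup G} {n : ℕ} {P : ℕ → G} {e : ℕ → ℤ} {E : G → G → Prop}
    (hE : LineRel t L E) {l g : G} (hl : l ∈ L) (hg : l * g ∈ CC t n P e E) :
    g ∈ CC t n P e E := by
  have := CC_inv hE (L.inv_mem hl) hg
  simpa using this

/-- The forced step. -/
theorem forced_step (t : G) (ht : ∀ m : ℤ, t ^ m = 1 → m = 0) (L : Subgroup G) (n : ℕ)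
    (P : ℕ → G) (e : ℕ → ℤ) (he : e 0 ≠ 0) (B : Finset G) (E : G → G → Prop)
    (hE : GoodRel t L B E)
    (hmin : ∀ E', GoodRel t L B E' → cx t L n P e E ≤ cx t L n P e E')
    {Λ : Type} [Group Λ] (f : G → Λ) (hf : ∀ g ∈ CC t n P e E, cellProd t n P e f g = 1)
    (g : G) (j0 : ℕ) (hj0 : j0 < n)
    (hg : ∀ j, j < n → j ≠ j0 → E (g * P j) (g * P j * t ^ e j))
    (hg0 : ¬ E (g * P j0) (g * P j0 * t ^ e j0)) :
    ∃ (E' : G → G → Prop) (f' : G → Λ), GoodRel t L B E' ∧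
      (∀ E'', GoodRel t L B E'' → cx t L n P e E' ≤ cx t L n P e E'') ∧
      (∀ p q, E p q → E' p q) ∧ (∀ p q, E p q → (f' p)⁻¹ * f' q = (f p)⁻¹ * f q) ∧
      (∀ g ∈ CC t n P e E', cellProd t n P e f' g = 1) ∧ g ∈ CC t n P e E' := by
  classical
  have hn : 0 < n := by omega
  set a := g * P j0 with ha
  set b := g * P j0 * t ^ e j0 with hb
  have hab : ∃ m : ℤ, b = a * t ^ m := ⟨_, rfl⟩
  set E' := addLink L E a b with hE'
  have hE'g : GoodRel t L B E' := addLink_good hE hab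
  have hle : ∀ p q, E p q → E' p q := fun p q h => addLink_le h
  have hgE' : g ∈ CC t n P e E' := by
    intro j hj
    by_cases h : j = j0
    · subst h
      simpa using addLink_link (E := E) (a := a) (b := b) L.one_mem
    · exact hle _ _ (hg j hj h)
  have hgE : g ∉ CC t n P e E := fun h => hg0 (h j0 hj0)
  obtain ⟨hCf, hCle⟩ := CC_orb_le t L n hn P e he E hE.rel hE.fin
  obtain ⟨hCf', hCle'⟩ := CC_orb_le t L n hn P e he E' hE'g.rel hE'g.fin
  have hsub : insert (orb L g) (orb L '' CC t n P e E) ⊆ orb L '' CC t n P e E' := by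
    rintro _ (rfl | ⟨x, hx, rfl⟩)
    · exact ⟨g, hgE', rfl⟩
    · exact ⟨x, fun j hj => hle _ _ (hx j hj), rfl⟩
  have hnot : orb L g ∉ orb L '' CC t n P e E := by
    rintro ⟨x, hx, hxg⟩
    obtain ⟨l, hl, rfl⟩ := orb_eq.1 hxg
    exact hgE (CC_inv hE.rel hl hx)
  have hcard1 := Set.ncard_insert_of_notMem hnot hCf
  have hcard2 := Set.ncard_le_ncard hsub hCf'
  have hmin' := hmin E' hE'g
  have hfin := addLink_fin hE.rel hab hE.fin
  rw [← hE'] at hfin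
  unfold cx at hmin'
  obtain ⟨hcard3, m, hm, hmab⟩ := hfin.2.resolve_left (by intro h; omega)
  have heq : insert (orb L g) (orb L '' CC t n P e E) = orb L '' CC t n P e E' :=
    Set.eq_of_subset_of_ncard_le hsub (by omega) hCf'
  have hcx : cx t L n P e E' ≤ cx t L n P e E := by
    unfold cx; omega
  -- the needed correction values
  have hu : ∀ l : G, ∃ z : Λ, prodTo (Function.update
      (fun j => (f (l * g * P j))⁻¹ * f (l * g * P j * t ^ e j)) j0 z) n = 1 :=
    fun l => prodTo_update_fix _ n j0 hj0
  choose z hz using hu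
  obtain ⟨β, hβ1, hβ2⟩ : ∃ β : G → Λ, (∀ p q, E p q → β p = β q) ∧
      ∀ l ∈ L, (β (l * a))⁻¹ * β (l * b) = f (l * a) * z l * (f (l * b))⁻¹ := by
    rcases hmab with h | h
    · exact exists_correction hE.rel ht hab hg0 hm h (fun l => f (l * a) * z l * (f (l * b))⁻¹)
    · obtain ⟨β, h1, h2⟩ := exists_correction hE.rel ht (a := b) (b := a) (m := m)
        ⟨-e j0, by simp [hb, ha]⟩ (fun h => hg0 (hE.rel.eqv.symm h)) hm h
        (fun l => (f (l * a) * z l * (f (l * b))⁻¹)⁻¹)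
      refine ⟨β, h1, fun l hl => ?_⟩
      have := congrArg (·⁻¹) (h2 l hl)
      simpa using this
  have hagree : ∀ p q, E p q → (β p * f p)⁻¹ * (β q * f q) = (f p)⁻¹ * f q := by
    intro p q h
    rw [hβ1 p q h]; group
  refine ⟨E', fun p => β p * f p, hE'g, fun E'' h => hcx.trans (hmin E'' h), hle, hagree, ?_, hgE'⟩
  intro g' hg'
  have : orb L g' ∈ insert (orb L g) (orb L '' CC t n P e E) := by
    rw [heq]; exact ⟨g', hg', rfl⟩
  rcases this with h | ⟨x, hx, hxg⟩
  · obtain ⟨l, hl, rfl⟩ := orb_eq.1 h.symm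
    unfold cellProd
    rw [← hz l]
    refine prodTo_congr fun j hj => ?_
    by_cases hjj : j = j0
    · subst hjj
      rw [Function.update_self]
      have := hβ2 l hl
      rw [ha, hb] at this
      simp only [← mul_assoc] at this
      simp only [mul_inv_rev]
      have h3 : (β (l * g * P j))⁻¹ * β (l * g * P j * t ^ e j) =
        f (l * g * P j) * z l * (f (l * g * P j * t ^ e j))⁻¹ := this
      calc _ = (f (l * g * P j))⁻¹ * ((β (l * g * P j))⁻¹ * β (l * g * P j * t ^ e j)) *
            f (l * g * P j * t ^ e j) := by group
        _ = _ := by rw [h3]; group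
    · rw [Function.update_of_ne hjj]
      apply hagree
      have := hE.rel.inv _ _ _ hl (hg j hj hjj)
      simpa [mul_assoc] using this
  · obtain ⟨l, hl, rfl⟩ := orb_eq.1 hxg
    have hx' := CC_inv hE.rel hl hx
    rw [← hf _ hx']
    exact prodTo_congr fun j hj => hagree _ _ (hx' j hj)

theorem thmY [Countable G] (t : G) (ht : ∀ m : ℤ, t ^ m = 1 → m = 0) (L : Subgroup G) (n : ℕ)
    (hn : 0 < n) (P : ℕ → G) (e : ℕ → ℤ) (he : e 0 ≠ 0) (B : Finset G) :
    ∃ E0 : G → G → Prop, LineRel t L E0 ∧ (orb L '' CC t n P e E0).Finite ∧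
      (∀ r ∈ B, E0 r (r * t)) ∧
      ∀ (Λ : Type) [Group Λ] (f : G → Λ), (∀ g ∈ CC t n P e E0, cellProd t n P e f g = 1) →
      ∃ (E : G → G → Prop) (f' : G → Λ), Equivalence E ∧
        (∀ p q, E p q → ∃ m : ℤ, q = p * t ^ m) ∧ (∀ p q, E0 p q → E p q) ∧
        (∀ p q, E0 p q → (f' p)⁻¹ * f' q = (f p)⁻¹ * f q) ∧
        (∀ g j0, j0 < n → (∀ j, j < n → j ≠ j0 → E (g * P j) (g * P j * t ^ e j)) →
          g ∈ CC t n P e E) ∧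
        (∀ g ∈ CC t n P e E, cellProd t n P e f' g = 1) := by
  classical
  obtain ⟨E0, hE0, hmin⟩ : ∃ E0, GoodRel t L B E0 ∧
      ∀ E', GoodRel t L B E' → cx t L n P e E0 ≤ cx t L n P e E' := by
    obtain ⟨E0, h1, h2⟩ := (measure (cx t L n P e)).wf.has_min {E | GoodRel t L B E}
      (exists_good t ht L B)
    exact ⟨E0, h1, fun E' h => not_lt.1 (h2 E' h)⟩
  refine ⟨E0, hE0.rel, (CC_orb_le t L n hn P e he E0 hE0.rel hE0.fin).1, hE0.links, ?_⟩
  intro Λ _ f hf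
  let St := {s : (G → G → Prop) × (G → Λ) // GoodRel t L B s.1 ∧
    (∀ E', GoodRel t L B E' → cx t L n P e s.1 ≤ cx t L n P e E') ∧
    (∀ g ∈ CC t n P e s.1, cellProd t n P e s.2 g = 1)}
  have hstep : ∀ (g : G) (s : St), ∃ s' : St, (∀ p q, s.1.1 p q → s'.1.1 p q) ∧
      (∀ p q, s.1.1 p q → (s'.1.2 p)⁻¹ * s'.1.2 q = (s.1.2 p)⁻¹ * s.1.2 q) ∧
      ((∃ j0, j0 < n ∧ ∀ j, j < n → j ≠ j0 → s.1.1 (g * P j) (g * P j * t ^ e j)) →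
        g ∈ CC t n P e s'.1.1) := by
    rintro g ⟨⟨E, f⟩, hE, hm, hf⟩
    by_cases h : ∃ j0, j0 < n ∧ ∀ j, j < n → j ≠ j0 → E (g * P j) (g * P j * t ^ e j)
    · obtain ⟨j0, hj0, h⟩ := h
      by_cases h0 : E (g * P j0) (g * P j0 * t ^ e j0)
      · refine ⟨⟨⟨E, f⟩, hE, hm, hf⟩, fun _ _ h => h, fun _ _ _ => rfl, fun _ j hj => ?_⟩
        by_cases hjj : j = j0
        · subst hjj; exact h0
        · exact h j hj hjj
      · obtain ⟨E', f', h1, h2, h3, h4, h5, h6⟩ :=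
          forced_step t ht L n P e he B E hE hm f hf g j0 hj0 h h0
        exact ⟨⟨⟨E', f'⟩, h1, h2, h5⟩, h3, h4, fun _ => h6⟩
    · exact ⟨⟨⟨E, f⟩, hE, hm, hf⟩, fun _ _ h => h, fun _ _ _ => rfl, fun h' => absurd h' h⟩
  choose step hs1 hs2 hs3 using hstep
  obtain ⟨en, hen⟩ := exists_surjective_nat G
  let seq : ℕ → St := fun i => Nat.rec (⟨⟨E0, f⟩, hE0, hmin, hf⟩ : St)
    (fun i s => step (en (Nat.unpair i).1) s) i
  have seq_succ : ∀ i, seq (i + 1) = step (en (Nat.unpair i).1) (seq i) := fun i => rfl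
  have seq_zero : seq 0 = ⟨⟨E0, f⟩, hE0, hmin, hf⟩ := rfl
  have mono : ∀ i d p q, (seq i).1.1 p q → (seq (i + d)).1.1 p q ∧
      ((seq (i + d)).1.2 p)⁻¹ * (seq (i + d)).1.2 q = ((seq i).1.2 p)⁻¹ * (seq i).1.2 q := by
    intro i d p q h
    induction d with
    | zero => exact ⟨h, rfl⟩
    | succ d ih =>
      rw [← add_assoc, seq_succ]
      exact ⟨hs1 _ _ _ _ ih.1, (hs2 _ _ _ _ ih.1).trans ih.2⟩
  have mono1 : ∀ i j p q, i ≤ j → (seq i).1.1 p q → (seq j).1.1 p q := by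
    intro i j p q hij h
    obtain ⟨d, rfl⟩ := Nat.exists_eq_add_of_le hij
    exact (mono i d p q h).1
  have mono2 : ∀ i j p q, i ≤ j → (seq i).1.1 p q →
      ((seq j).1.2 p)⁻¹ * (seq j).1.2 q = ((seq i).1.2 p)⁻¹ * (seq i).1.2 q := by
    intro i j p q hij h
    obtain ⟨d, rfl⟩ := Nat.exists_eq_add_of_le hij
    exact (mono i d p q h).2
  let E : G → G → Prop := fun p q => ∃ i, (seq i).1.1 p q
  have hEeqv : Equivalence E := by
    refine ⟨fun p => ⟨0, hE0.rel.eqv.refl p⟩, ?_, ?_⟩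
    · rintro p q ⟨i, h⟩; exact ⟨i, (seq i).2.1.rel.eqv.symm h⟩
    · rintro p q r ⟨i, h⟩ ⟨j, h'⟩
      exact ⟨max i j, (seq _).2.1.rel.eqv.trans (mono1 _ _ _ _ (le_max_left i j) h)
        (mono1 _ _ _ _ (le_max_right i j) h')⟩
  let S : Setoid G := ⟨E, hEeqv⟩
  let rep : G → G := fun p => (Quotient.mk S p).out
  have hrep : ∀ p, ∃ i, (seq i).1.1 (rep p) p := fun p => Quotient.mk_out (s := S) p
  have hrep' : ∀ p q, E p q → rep p = rep q := by
    intro p q h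
    simp only [rep]
    rw [Quotient.sound (s := S) h]
  choose st hst using hrep
  let f' : G → Λ := fun p => ((seq (st p)).1.2 (rep p))⁻¹ * (seq (st p)).1.2 p
  have hf' : ∀ i p q, (seq i).1.1 p q →
      (f' p)⁻¹ * f' q = ((seq i).1.2 p)⁻¹ * (seq i).1.2 q := by
    intro i p q h
    have hr := hrep' p q ⟨i, h⟩
    set M := max i (max (st p) (st q)) with hM
    have h1 : f' p = ((seq M).1.2 (rep p))⁻¹ * (seq M).1.2 p :=
      (mono2 _ M _ _ (by omega) (hst p)).symm
    have h2 : f' q = ((seq M).1.2 (rep q))⁻¹ * (seq M).1.2 q :=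
      (mono2 _ M _ _ (by omega) (hst q)).symm
    rw [h1, h2, ← hr, ← mono2 i M p q (by omega) h]
    group
  have hcomp : ∀ (Q : ℕ → Prop) (g : G), (∀ j, j < n → Q j → E (g * P j) (g * P j * t ^ e j)) →
      ∃ i, ∀ j, j < n → Q j → (seq i).1.1 (g * P j) (g * P j * t ^ e j) := by
    intro Q g h
    have : ∀ j, ∃ i, j < n → Q j → (seq i).1.1 (g * P j) (g * P j * t ^ e j) := by
      intro j
      by_cases h1 : j < n ∧ Q j
      · obtain ⟨i, hi⟩ := h j h1.1 h1.2
        exact ⟨i, fun _ _ => hi⟩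
      · exact ⟨0, fun h2 h3 => absurd ⟨h2, h3⟩ h1⟩
    choose i hi using this
    refine ⟨(Finset.range n).sup i, fun j hj hQ => mono1 (i j) _ _ _ ?_ (hi j hj hQ)⟩
    exact Finset.le_sup (f := i) (Finset.mem_range.2 hj)
  refine ⟨E, f', hEeqv, ?_, ?_, ?_, ?_, ?_⟩
  · rintro p q ⟨i, h⟩; exact (seq i).2.1.rel.line _ _ h
  · intro p q h; exact ⟨0, h⟩
  · intro p q h; exact hf' 0 p q h
  · intro g j0 hj0 h
    obtain ⟨i, hi⟩ := hcomp (fun j => j ≠ j0) g h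
    obtain ⟨a, rfl⟩ := hen g
    have hle : i ≤ Nat.pair a i := Nat.right_le_pair a i
    have := hs3 (en a) (seq (Nat.pair a i)) ⟨j0, hj0, fun j hj hjj =>
      mono1 _ _ _ _ hle (hi j hj hjj)⟩
    intro j hj
    refine ⟨Nat.pair a i + 1, ?_⟩
    rw [seq_succ, Nat.unpair_pair]
    exact this j hj
  · intro g hg
    obtain ⟨i, hi⟩ := hcomp (fun _ => True) g (fun j hj _ => hg j hj)
    rw [← (seq i).2.2.2 g (fun j hj => hi j hj trivial)]
    exact prodTo_congr fun j hj => hf' i _ _ (hi j hj trivial)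

end Forced


/-! ### Extension to all cells -/

theorem exists_equiv_over {A B Z : Type} (f : A → Z) (f' : B → Z)
    (h : ∀ z, Nonempty ({a // f a = z} ≃ {b // f' b = z})) :
    ∃ e : A ≃ B, ∀ a, f' (e a) = f a := by
  refine ⟨((Equiv.sigmaFiberEquiv f).symm.trans (Equiv.sigmaCongrRight fun z => (h z).some)).trans
    (Equiv.sigmaFiberEquiv f'), fun a => ?_⟩
  exact ((h (f a)).some ⟨a, rfl⟩).2

section Ext

variable {G : Type} [Group G]

theorem partialProd_add (v : ℕ → G) (k : ℕ) (hv : ∀ j, v (j + k) = v j) (j : ℕ) :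
    prodTo v (j + k) = prodTo v k * prodTo v j := by
  rw [add_comm, prodTo_add]
  congr 1
  exact prodTo_congr fun i _ => by rw [add_comm, hv]

theorem step4 (t : G) (k N : ℕ) (hk : 0 < k) (hN : 0 < N) (e : ℕ → ℤ) (x : ℕ → G)
    (he : ∀ j, e (j + k) = e j) (hx : ∀ j, x (j + k) = x j)
    (P : ℕ → G) (hP : P = prodTo (fun j => t ^ e j * x j)) (hP1 : P (k * N) = 1)
    {K : Type} [Group K] (ι : K →* G) (hι : Function.Injective ι) (τ : K) (ξ : ℕ → K)
    (hτ : ι τ = t) (hξ : ∀ j, ι (ξ j) = x j)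
    (huniv : ∀ (M : Type) [Group M] (T : M) (X : ℕ → M), (∀ j, X (j + k) = X j) →
      prodTo (fun j => T ^ e j * X j) (k * N) = 1 → ∃ φ : K →* M, φ τ = T ∧ ∀ j, φ (ξ j) = X j)
    (hgen : ∀ H : Subgroup K, τ ∈ H → (∀ j, ξ j ∈ H) → ∀ κ, κ ∈ H)
    {Λ : Type} [Group Λ] (E : G → G → Prop) (hE : Equivalence E)
    (hline : ∀ p q, E p q → ∃ m : ℤ, q = p * t ^ m) (f : G → Λ)
    (hclosed : ∀ g j0, j0 < k * N → (∀ j, j < k * N → j ≠ j0 →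
      E (g * P j) (g * P j * t ^ e j)) → g ∈ CC t (k * N) P e E)
    (hf : ∀ g ∈ CC t (k * N) P e E, cellProd t (k * N) P e f g = 1) :
    ∃ σ : G → Λ, (∀ p q, E p q → (σ p)⁻¹ * σ q = (f p)⁻¹ * f q) ∧
      ∀ g, cellProd t (k * N) P e σ g = 1 := by
  classical
  set n := k * N with hn
  have hkn : k ≤ n := Nat.le_mul_of_pos_right k hN
  have hn0 : 0 < n := lt_of_lt_of_le hk hkn
  have hv : ∀ j, (fun j => t ^ e j * x j) (j + k) = (fun j => t ^ e j * x j) j := by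
    intro j; simp only [he, hx]
  have hPadd : ∀ j, P (j + k) = P k * P j := by
    intro j; rw [hP]; exact partialProd_add _ k hv j
  have hP0 : P 0 = 1 := by rw [hP]; rfl
  have hPsucc : ∀ j, P (j + 1) = P j * (t ^ e j * x j) := by intro j; rw [hP]; rfl
  have hPkN : P k ^ N = 1 := by
    rw [← hP1, hP, hn, prodTo_periodic_mul _ k hv]
  have hen : ∀ j, e (j + n) = e j := by
    intro j
    have : ∀ a, e (j + k * a) = e j := by
      intro a
      induction a with
      | zero => simp
      | succ a ih => rw [Nat.mul_succ, ← add_assoc, he, ih]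
    exact this N
  have hPn : ∀ j, P (j + n) = P j := by
    intro j
    have : ∀ a, P (j + k * a) = P k ^ a * P j := by
      intro a
      induction a with
      | zero => simp
      | succ a ih => rw [Nat.mul_succ, ← add_assoc, hPadd, ih, pow_succ', mul_assoc]
    rw [hn, this, hPkN, one_mul]
  have hPmul : ∀ a j, P (j + k * a) = P k ^ a * P j := by
    intro a j
    induction a with
    | zero => simp
    | succ a ih => rw [Nat.mul_succ, ← add_assoc, hPadd, ih, pow_succ', mul_assoc]
  let S := {s : G → Λ // ∀ p q, E p q → (s p)⁻¹ * s q = (f p)⁻¹ * f q}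
  let R : G → (ℕ → S) → Prop := fun g c => (∀ j, c (j + n) = c j) ∧
    prodTo (fun j => ((c j).1 (g * P j))⁻¹ * (c j).1 (g * P j * t ^ e j)) n = 1
  have hext : ∀ g j0, j0 < n → ∀ s : S, ∃ c, R g c ∧ c j0 = s := by
    intro g j0 hj0 s
    by_cases h : ∀ j, j < n → j ≠ j0 → E (g * P j) (g * P j * t ^ e j)
    · have hg := hclosed g j0 hj0 h
      refine ⟨fun _ => s, ⟨fun _ => rfl, ?_⟩, rfl⟩
      rw [← hf g hg]
      exact prodTo_congr fun j hj => s.2 _ _ (hg j hj)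
    · push Not at h
      obtain ⟨j1, hj1, hne, hnot⟩ := h
      set a := g * P j1 with ha
      set b := g * P j1 * t ^ e j1 with hb
      obtain ⟨z, hz⟩ := prodTo_update_fix
        (fun j => (s.1 (g * P j))⁻¹ * s.1 (g * P j * t ^ e j)) n j1 hj1
      -- modify `s` on the block of `b`
      let β : G → Λ := fun p => if E p b then s.1 a * z * (s.1 b)⁻¹ else 1
      have hβ : ∀ p q, E p q → β p = β q := by
        intro p q hpq
        have : E p b ↔ E q b := ⟨fun h => hE.trans (hE.symm hpq) h, fun h => hE.trans hpq h⟩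
        simp only [β, this]
      let s' : S := ⟨fun p => β p * s.1 p, by
        intro p q hpq
        show (β p * s.1 p)⁻¹ * (β q * s.1 q) = _
        rw [← s.2 p q hpq, hβ p q hpq]; group⟩
      refine ⟨fun j => if j % n = j1 then s' else s, ⟨fun j => by simp, ?_⟩, ?_⟩
      · rw [← hz]
        refine prodTo_congr fun j hj => ?_
        simp only [Nat.mod_eq_of_lt hj]
        by_cases hjj : j = j1
        · subst hjj
          simp only [if_true, Function.update_self]
          show (β a * s.1 a)⁻¹ * (β b * s.1 b) = z
          have h1 : β a = 1 := by simp only [β, if_neg hnot]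
          have h2 : β b = s.1 a * z * (s.1 b)⁻¹ := by simp only [β, if_pos (hE.refl b)]
          rw [h1, h2]; group
        · rw [if_neg hjj, Function.update_of_ne hjj]
      · simp only [Nat.mod_eq_of_lt hj0]
        rw [if_neg (Ne.symm hne)]
  let B := ℕ → (ℕ → S)
  let Ωc := {gc : G × (ℕ → S) // R gc.1 gc.2} × B
  let Ω := G × S × B
  have hψ0 : ∀ i, i < k → ∃ ψ : Ωc ≃ Ω, ∀ ω, ((ψ ω).1, (ψ ω).2.1) =
      (ω.1.1.1 * P i, ω.1.1.2 i) := by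
    intro i hi
    refine exists_equiv_over (fun ω : Ωc => (ω.1.1.1 * P i, ω.1.1.2 i))
      (fun ω : Ω => (ω.1, ω.2.1)) ?_
    rintro ⟨g, s⟩
    have e1 : Nonempty ({b : Ω // (b.1, b.2.1) = (g, s)} ≃ B) := by
      refine ⟨⟨fun b => b.1.2.2, fun b => ⟨(g, s, b), rfl⟩, ?_, fun b => rfl⟩⟩
      rintro ⟨⟨g', s', b⟩, h⟩
      obtain ⟨rfl, rfl⟩ := Prod.mk.inj h
      rfl
    obtain ⟨c0, hc0, hc0i⟩ := hext (g * (P i)⁻¹) i (lt_of_lt_of_le hi hkn) s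
    let F1 : {a : Ωc // (a.1.1.1 * P i, a.1.1.2 i) = (g, s)} → B :=
      fun a m => Nat.casesOn m a.1.1.1.2 a.1.2
    let F2 : B → {a : Ωc // (a.1.1.1 * P i, a.1.1.2 i) = (g, s)} :=
      fun b => ⟨(⟨(g * (P i)⁻¹, c0), hc0⟩, b), by simp [hc0i]⟩
    have hF1 : Function.Injective F1 := by
      rintro ⟨⟨⟨⟨g1, c1⟩, h1⟩, b1⟩, h1'⟩ ⟨⟨⟨⟨g2, c2⟩, h2⟩, b2⟩, h2'⟩ hh
      have hc : c1 = c2 := congrFun hh 0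
      have hb : b1 = b2 := by
        funext m; exact congrFun hh (m + 1)
      have hg1 := (Prod.mk.inj h1').1
      have hg2 := (Prod.mk.inj h2').1
      have hg : g1 = g2 := mul_right_cancel (hg1.trans hg2.symm)
      subst hc hb hg
      rfl
    have hF2 : Function.Injective F2 := by
      intro b b' hh
      exact congrArg (fun a => a.1.2) hh
    obtain ⟨F, hF⟩ := Function.Embedding.schroeder_bernstein hF1 hF2
    exact ⟨(Equiv.ofBijective F hF).trans e1.some.symm⟩
  choose ψ0 hψ0 using hψ0
  let rotf : Ωc → Ωc := fun ω => (⟨(ω.1.1.1 * P k, fun j => ω.1.1.2 (j + k)), by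
    obtain ⟨⟨⟨g, c⟩, hc1, hc2⟩, b⟩ := ω
    replace hc1 : ∀ j, c (j + n) = c j := hc1
    refine ⟨fun j => ?_, ?_⟩
    · show c (j + n + k) = c (j + k)
      rw [← hc1 (j + k)]
      exact congrArg c (by ring)
    · have := prodTo_rotate (fun j => ((c j).1 (g * P j))⁻¹ * (c j).1 (g * P j * t ^ e j)) n k
        (fun j => by simp only [hc1, hPn, hen]) hc2
      simpa only [hPadd, he, mul_assoc] using this⟩, ω.2)
  have rot_iter : ∀ a ω, ((rotf^[a] ω).1.1.1 = ω.1.1.1 * P k ^ a) ∧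
      (∀ j, (rotf^[a] ω).1.1.2 j = ω.1.1.2 (j + k * a)) ∧ (rotf^[a] ω).2 = ω.2 := by
    intro a ω
    induction a with
    | zero => simp
    | succ a ih =>
      rw [Function.iterate_succ_apply']
      refine ⟨?_, ?_, ih.2.2⟩
      · show (rotf^[a] ω).1.1.1 * P k = _
        rw [ih.1, pow_succ, mul_assoc]
      · intro j
        show (rotf^[a] ω).1.1.2 (j + k) = _
        rw [ih.2.1]
        exact congrArg _ (by ring)
  have rotN : rotf^[N] = id := by
    funext ω
    obtain ⟨h1, h2, h3⟩ := rot_iter N ω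
    refine Prod.ext (Subtype.ext (Prod.ext ?_ (funext fun j => ?_))) h3
    · rw [h1, hPkN, mul_one]; rfl
    · rw [h2, ← hn, ω.1.2.1]; rfl
  have rotbij : Function.Bijective rotf := by
    obtain ⟨N', rfl⟩ : ∃ N', N = N' + 1 := ⟨N - 1, by omega⟩
    constructor
    · have h : Function.Injective (rotf^[N'] ∘ rotf) := by
        rw [← Function.iterate_succ, rotN]; exact Function.injective_id
      exact h.of_comp
    · have h : Function.Surjective (rotf ∘ rotf^[N']) := by
        rw [← Function.iterate_succ', rotN]; exact Function.surjective_id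
      exact h.of_comp
  let rot : ℕ → Ωc ≃ Ωc := fun a => Equiv.ofBijective (rotf^[a]) (rotbij.iterate a)
  let ψ : ℕ → Ωc ≃ Ω := fun j => (rot (j / k)).trans (ψ0 (j % k) (Nat.mod_lt _ hk))
  have hψ : ∀ j ω, (ψ j ω).1 = ω.1.1.1 * P j ∧ (ψ j ω).2.1 = ω.1.1.2 j := by
    intro j ω
    have h := Prod.mk.inj (hψ0 (j % k) (Nat.mod_lt _ hk) (rotf^[j / k] ω))
    obtain ⟨h1, h2, h3⟩ := rot_iter (j / k) ω
    have hj : j % k + k * (j / k) = j := Nat.mod_add_div j k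
    constructor
    · refine h.1.trans ?_
      rw [h1, mul_assoc, ← hPmul, hj]
    · refine h.2.trans ?_
      rw [h2, hj]
  have hψk : ∀ a j ω, ψ (j + k * a) ω = ψ j (rotf^[a] ω) := by
    intro a j ω
    show ψ0 ((j + k * a) % k) (Nat.mod_lt _ hk) (rotf^[(j + k * a) / k] ω) =
      ψ0 (j % k) (Nat.mod_lt _ hk) (rotf^[j / k] (rotf^[a] ω))
    have e1 : (j + k * a) / k = j / k + a := Nat.add_mul_div_left j a hk
    have e2 : (j + k * a) % k = j % k := Nat.add_mul_mod_self_left j k a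
    rw [← Function.iterate_add_apply, e1]
    congr 2
  let T : Equiv.Perm Ω := Equiv.prodCongr (Equiv.mulRight t) (Equiv.refl _)
  have hT : ∀ (m : ℤ) ω, (T ^ m) ω = (ω.1 * t ^ m, ω.2) := by
    have hTp : ∀ (m : ℕ) ω, (T ^ m) ω = (ω.1 * t ^ m, ω.2) := by
      intro m
      induction m with
      | zero => intro ω; simp
      | succ m ih =>
        intro ω
        rw [pow_succ', Equiv.Perm.mul_apply, ih]
        show (ω.1 * t ^ m * t, ω.2) = _
        rw [pow_succ, mul_assoc]
    intro m ω
    obtain ⟨m, rfl | rfl⟩ := m.eq_nat_or_neg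
    · simpa using hTp m ω
    · rw [zpow_neg, zpow_natCast, Equiv.Perm.inv_eq_iff_eq, hTp]
      simp
  let X : ℕ → Equiv.Perm Ω := fun j => ((ψ j).symm.trans (ψ (j + 1)) : Equiv.Perm Ω) * (T ^ e j)⁻¹
  have hX : ∀ j, X (j + k) = X j := by
    intro j
    have : ((ψ (j + k)).symm.trans (ψ (j + k + 1)) : Equiv.Perm Ω) =
        ((ψ j).symm.trans (ψ (j + 1)) : Equiv.Perm Ω) := by
      ext1 ω
      obtain ⟨z, rfl⟩ := (ψ (j + k)).surjective ω
      have h1 := hψk 1 j z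
      have h2 := hψk 1 (j + 1) z
      rw [mul_one] at h1 h2
      simp only [Equiv.trans_apply, Equiv.symm_apply_apply]
      rw [show j + k + 1 = j + 1 + k by ring, h1, h2, Equiv.symm_apply_apply]
    simp only [X, he]
    rw [this]
  have hprod : ∀ j, prodTo (fun j => MulOpposite.op T ^ e j * MulOpposite.op (X j)) j =
      MulOpposite.op ((ψ 0).symm.trans (ψ j) : Equiv.Perm Ω) := by
    intro j
    induction j with
    | zero => simp [prodTo]; rfl
    | succ j ih =>
      simp only [prodTo]
      rw [ih, ← MulOpposite.op_zpow, ← MulOpposite.op_mul, ← MulOpposite.op_mul]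
      congr 1
      simp only [X, inv_mul_cancel_right]
      ext1 ω
      simp [Equiv.Perm.mul_apply]
  obtain ⟨φ, hφτ, hφξ⟩ := huniv (Equiv.Perm Ω)ᵐᵒᵖ (MulOpposite.op T)
    (fun j => MulOpposite.op (X j)) (fun j => by simp only [hX]) (by
      rw [hprod]
      rw [← MulOpposite.op_one]
      congr 1
      ext1 ω
      have h := hψk N 0 ((ψ 0).symm ω)
      rw [zero_add, rotN] at h
      show ψ (k * N) ((ψ 0).symm ω) = ω
      rw [h]; simp)
  let act : K → Equiv.Perm Ω := fun κ => (φ κ).unop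
  have act_mul : ∀ κ κ' ω, act (κ * κ') ω = act κ' (act κ ω) := by
    intro κ κ' ω
    simp only [act, map_mul, MulOpposite.unop_mul, Equiv.Perm.mul_apply]
  have act_fst : ∀ κ ω, (act κ ω).1 = ω.1 * ι κ := by
    let H : Subgroup K :=
      { carrier := {κ | ∀ ω, (act κ ω).1 = ω.1 * ι κ}
        one_mem' := by intro ω; simp [act]
        mul_mem' := by
          intro a b ha hb ω
          rw [act_mul, hb, ha, map_mul, mul_assoc]
        inv_mem' := by
          intro a ha ω
          have h1 := ha (act a⁻¹ ω)
          rw [← act_mul, inv_mul_cancel] at h1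
          have h2 : act 1 ω = ω := by simp [act]
          rw [h2] at h1
          rw [h1, map_inv]; simp }
    refine hgen H ?_ ?_
    · intro ω
      simp only [act, hφτ, hτ]
      rfl
    · intro j ω
      simp only [act, hφξ, hξ, MulOpposite.unop_op, X, Equiv.Perm.mul_apply, ← zpow_neg, hT,
        Equiv.trans_apply]
      rw [(hψ _ _).1]
      have h1 := (hψ j ((ψ j).symm (ω.1 * t ^ (-e j), ω.2))).1
      rw [Equiv.apply_symm_apply] at h1
      rw [hPsucc, ← mul_assoc, ← h1]
      simp [mul_assoc]
  obtain ⟨rep, co, hc1, hc2, hc3⟩ := exists_coset_rep ι hι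
  let s0 : S := ⟨f, fun _ _ _ => rfl⟩
  let b0 : B := fun _ _ => s0
  let ω : G → Ω := fun p => act (co p) (rep p, s0, b0)
  have hω1 : ∀ p, (ω p).1 = p := by
    intro p
    show (act (co p) (rep p, s0, b0)).1 = p
    rw [act_fst]; exact (hc1 p).symm
  have hω2 : ∀ p κ, ω (p * ι κ) = act κ (ω p) := by
    intro p κ
    simp only [ω]
    rw [hc2, hc3, act_mul]
  have hωt : ∀ p (m : ℤ), (ω (p * t ^ m)).2 = (ω p).2 := by
    intro p m
    rw [← hτ, ← map_zpow, hω2]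
    simp only [act, map_zpow, hφτ, ← MulOpposite.op_zpow, MulOpposite.unop_op, hT]
  refine ⟨fun p => (ω p).2.1.1 p, ?_, ?_⟩
  · intro p q h
    obtain ⟨m, rfl⟩ := hline p q h
    show ((ω p).2.1.1 p)⁻¹ * (ω (p * t ^ m)).2.1.1 (p * t ^ m) = _
    rw [hωt]
    exact (ω p).2.1.2 _ _ h
  · intro g
    set z := (ψ 0).symm (ω g) with hz
    have hz' : ψ 0 z = ω g := by simp [hz]
    have hgz : z.1.1.1 = g := by
      have := (hψ 0 z).1
      rw [hz', hω1, hP0, mul_one] at this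
      exact this.symm
    have hωP : ∀ j, ω (g * P j) = ψ j z := by
      intro j
      have h1 : P j = ι (prodTo (fun j => τ ^ e j * ξ j) j) := by
        rw [prodTo_map, hP]
        simp only [map_mul, map_zpow, hτ, hξ]
      rw [h1, hω2]
      simp only [act]
      rw [prodTo_map]
      simp only [map_mul, map_zpow, hφτ, hφξ]
      rw [hprod]
      simp [hz]
    have hz1 := z.1.2.2
    rw [hgz] at hz1
    rw [← hz1]
    refine prodTo_congr fun j hj => ?_
    show ((ω (g * P j)).2.1.1 (g * P j))⁻¹ *
      (ω (g * P j * t ^ e j)).2.1.1 (g * P j * t ^ e j) = _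
    rw [hωt, hωP, (hψ j z).2]

end Ext

/-! ### From edge labels to a function on the group -/

section Step5

variable {G : Type} [Group G]

theorem step5 (t : G) (n : ℕ) (e : ℕ → ℤ) {A : Type} [Group A] (ιA : A →* G) (w : ℕ → A)
    (P : ℕ → G) (hP : P = prodTo (fun j => t ^ e j * ιA (w j))) (hP1 : P n = 1)
    (huniv : ∀ (M : Type) [Group M] (T : M) (α : A →* M),
      prodTo (fun j => T ^ e j * α (w j)) n = 1 → ∃ φ : G →* M, φ t = T ∧ ∀ a, φ (ιA a) = α a)
    (hgen : ∀ H : Subgroup G, t ∈ H → (∀ a, ιA a ∈ H) → ∀ g, g ∈ H)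
    {Λ : Type} [Group Λ] (σ : G → Λ) (hσ : ∀ g, cellProd t n P e σ g = 1) :
    ∃ F : G → Λ, F 1 = 1 ∧ (∀ p a, F (p * ιA a) = F p) ∧
      ∀ p (m : ℤ), F (p * t ^ m) = F p * ((σ p)⁻¹ * σ (p * t ^ m)) := by
  classical
  let Ω := G × Λ
  let T : Equiv.Perm Ω :=
    { toFun := fun y => (y.1 * t, y.2 * ((σ y.1)⁻¹ * σ (y.1 * t)))
      invFun := fun y => (y.1 * t⁻¹, y.2 * ((σ y.1)⁻¹ * σ (y.1 * t⁻¹)))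
      left_inv := by rintro ⟨p, v⟩; simp [mul_assoc]
      right_inv := by rintro ⟨p, v⟩; simp [mul_assoc] }
  have hTp : ∀ (m : ℕ) (y : Ω), (T ^ m) y = (y.1 * t ^ m, y.2 * ((σ y.1)⁻¹ * σ (y.1 * t ^ m))) := by
    intro m
    induction m with
    | zero => intro y; simp
    | succ m ih =>
      intro y
      rw [pow_succ', Equiv.Perm.mul_apply, ih]
      show (y.1 * t ^ m * t, _) = _
      rw [pow_succ]
      simp [mul_assoc]
  have hT : ∀ (m : ℤ) (y : Ω),
      (T ^ m) y = (y.1 * t ^ m, y.2 * ((σ y.1)⁻¹ * σ (y.1 * t ^ m))) := by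
    intro m y
    obtain ⟨m, rfl | rfl⟩ := m.eq_nat_or_neg
    · simpa using hTp m y
    · rw [zpow_neg, zpow_natCast, Equiv.Perm.inv_eq_iff_eq, hTp]
      simp [mul_assoc]
  let α : A →* (Equiv.Perm Ω)ᵐᵒᵖ :=
    { toFun := fun a => MulOpposite.op (Equiv.prodCongr (Equiv.mulRight (ιA a)) (Equiv.refl _))
      map_one' := by
        rw [← MulOpposite.op_one]
        congr 1
        ext1 y
        simp
      map_mul' := by
        intro a b
        rw [← MulOpposite.op_mul]
        congr 1
        ext1 y
        obtain ⟨p, v⟩ := y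
        simp [Equiv.Perm.mul_apply, mul_assoc] }
  have hα : ∀ a (y : Ω), (α a).unop y = (y.1 * ιA a, y.2) := fun a y => rfl
  have hPsucc : ∀ j, P (j + 1) = P j * (t ^ e j * ιA (w j)) := by intro j; rw [hP]; rfl
  have hP0 : P 0 = 1 := by rw [hP]; rfl
  have hprod : ∀ j (y : Ω),
      (prodTo (fun j => MulOpposite.op T ^ e j * α (w j)) j).unop y =
      (y.1 * P j, y.2 * cellProd t j P e σ y.1) := by
    intro j y
    induction j with
    | zero => simp [prodTo, hP0, cellProd]
    | succ j ih =>
      simp only [prodTo, cellProd]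
      rw [MulOpposite.unop_mul, Equiv.Perm.mul_apply, ih, MulOpposite.unop_mul,
        Equiv.Perm.mul_apply, ← MulOpposite.op_zpow, MulOpposite.unop_op, hT, hα, hPsucc]
      simp [mul_assoc, cellProd]
  obtain ⟨φ, hφt, hφA⟩ := huniv (Equiv.Perm Ω)ᵐᵒᵖ (MulOpposite.op T) α (by
    apply MulOpposite.unop_injective
    ext1 y
    rw [hprod, hP1, hσ]
    simp)
  let act : G → Equiv.Perm Ω := fun g => (φ g).unop
  have act_mul : ∀ κ κ' ω, act (κ * κ') ω = act κ' (act κ ω) := by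
    intro κ κ' ω
    simp only [act, map_mul, MulOpposite.unop_mul, Equiv.Perm.mul_apply]
  have act_fst : ∀ κ ω, (act κ ω).1 = ω.1 * κ := by
    let H : Subgroup G :=
      { carrier := {κ | ∀ ω, (act κ ω).1 = ω.1 * κ}
        one_mem' := by intro ω; simp [act]
        mul_mem' := by
          intro a b ha hb ω
          rw [act_mul, hb, ha, mul_assoc]
        inv_mem' := by
          intro a ha ω
          have h1 := ha (act a⁻¹ ω)
          rw [← act_mul, inv_mul_cancel] at h1
          have h2 : act 1 ω = ω := by simp [act]
          rw [h2] at h1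
          rw [h1]; simp }
    refine hgen H ?_ ?_
    · intro ω
      simp only [act, hφt]
      rfl
    · intro a ω
      simp only [act, hφA]
      rfl
  have h11 : ∀ g, act g (1, 1) = (g, (act g (1, 1)).2) := by
    intro g
    refine Prod.ext ?_ rfl
    rw [act_fst]; simp
  refine ⟨fun g => (act g (1, 1)).2, by simp [act], ?_, ?_⟩
  · intro p a
    show (act (p * ιA a) (1, 1)).2 = _
    rw [act_mul, h11 p]
    simp only [act, hφA, hα]
  · intro p m
    show (act (p * t ^ m) (1, 1)).2 = _
    rw [act_mul, h11 p]
    have : act (t ^ m) = T ^ m := by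
      simp only [act, map_zpow, hφt, ← MulOpposite.op_zpow, MulOpposite.unop_op]
    rw [this, hT]

end Step5

/-! ### Retracts of finitely presented groups -/

theorem finitelyPresented_of_retract {α : Type} [Fintype α] {L : Type} [Group L]
    (π : FreeGroup α →* L) (hπ : Function.Surjective π) (R : Set (FreeGroup α)) (hR : R.Finite)
    (hRπ : Subgroup.normalClosure R ≤ π.ker)
    (s : L →* FreeGroup α ⧸ Subgroup.normalClosure R)
    (hs : ∀ l, QuotientGroup.lift (Subgroup.normalClosure R) π hRπ (s l) = l) :
    FinitelyPresentedGroup L := by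
  classical
  have hv : ∀ i : α, ∃ v : FreeGroup α, (QuotientGroup.mk v : FreeGroup α ⧸ _) =
      s (π (FreeGroup.of i)) := fun i => QuotientGroup.mk_surjective _
  choose v hv using hv
  let R' : Finset (FreeGroup α) := hR.toFinset ∪
    Finset.univ.image (fun i => (v i)⁻¹ * FreeGroup.of i)
  have hker : Subgroup.normalClosure (R' : Set (FreeGroup α)) = π.ker := by
    apply le_antisymm
    · apply Subgroup.normalClosure_le_normal
      intro y hy
      simp only [R', Finset.coe_union, Set.mem_union, Set.Finite.coe_toFinset, Finset.coe_image,
        Set.mem_image, Finset.mem_coe, Finset.mem_univ, true_and, Finset.coe_univ,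
        Set.mem_univ] at hy
      rcases hy with hy | ⟨i, rfl⟩
      · exact hRπ (Subgroup.subset_normalClosure hy)
      · show _ ∈ π.ker
        rw [MonoidHom.mem_ker, map_mul, map_inv]
        have := hs (π (FreeGroup.of i))
        rw [← hv, QuotientGroup.lift_mk] at this
        rw [this]; simp
    · have hle : Subgroup.normalClosure R ≤
          (QuotientGroup.mk' (Subgroup.normalClosure (R' : Set (FreeGroup α)))).ker := by
        rw [QuotientGroup.ker_mk']
        apply Subgroup.normalClosure_mono
        intro y hy
        simp [R', hy]
      let q' := QuotientGroup.lift (Subgroup.normalClosure R)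
        (QuotientGroup.mk' (Subgroup.normalClosure (R' : Set (FreeGroup α)))) hle
      have heq : (q'.comp s).comp π =
          QuotientGroup.mk' (Subgroup.normalClosure (R' : Set (FreeGroup α))) := by
        apply FreeGroup.ext_hom
        intro i
        show q' (s (π (FreeGroup.of i))) = _
        rw [← hv]
        show QuotientGroup.mk' _ (v i) = QuotientGroup.mk' _ (FreeGroup.of i)
        rw [QuotientGroup.mk'_apply, QuotientGroup.mk'_apply]
        apply QuotientGroup.eq.2
        apply Subgroup.subset_normalClosure
        simp [R']
      intro y hy
      rw [MonoidHom.mem_ker] at hy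
      have h2 := DFunLike.congr_fun heq y
      simp only [MonoidHom.comp_apply, hy, map_one] at h2
      rw [← QuotientGroup.ker_mk' (Subgroup.normalClosure (R' : Set (FreeGroup α)))]
      exact h2.symm
  refine ⟨α, inferInstance, R', ⟨?_⟩⟩
  exact (QuotientGroup.quotientMulEquivOfEq hker).trans
    (QuotientGroup.quotientKerEquivOfSurjective π hπ)


/-! ### Lifting the right translation actions -/

section Step6

variable {G : Type} [Group G]

theorem orb_out (L : Subgroup G) (q : Quotient (QuotientGroup.rightRel L)) :
    orb L (Quotient.out q) = q := Quotient.out_eq q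

theorem orb_out_mul (L : Subgroup G) (h g : G) :
    orb L (Quotient.out (orb L h) * g) = orb L (h * g) := by
  obtain ⟨l, hl, h1⟩ := orb_eq.1 (orb_out L (orb L h)).symm
  rw [h1, mul_assoc, orb_mul hl]

/-- a single right translation lifts to `Λ0 × Q` -/
theorem exists_lift_perm (L : Subgroup G) {Λ0 : Type} [Group Λ0] (π : Λ0 →* L)
    (hπ : Function.Surjective π) (g : G) :
    ∃ T : Equiv.Perm (Λ0 × Quotient (QuotientGroup.rightRel L)),
      (∀ y, (π (T y).1 : G) * Quotient.out (T y).2 = (π y.1 : G) * Quotient.out y.2 * g) ∧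
      ∀ c y, T (c * y.1, y.2) = (c * (T y).1, (T y).2) := by
  classical
  have hq : ∀ q : Quotient (QuotientGroup.rightRel L), ∃ c : Λ0,
      (π c : G) * Quotient.out (orb L (Quotient.out q * g)) = Quotient.out q * g := by
    intro q
    obtain ⟨l, hl, h1⟩ := orb_eq.1 (orb_out L (orb L (Quotient.out q * g)))
    obtain ⟨c, hc⟩ := hπ ⟨l, hl⟩
    refine ⟨c, ?_⟩
    rw [hc]
    exact h1.symm
  choose c hc using hq
  have h1 : ∀ q : Quotient (QuotientGroup.rightRel L),
      orb L (Quotient.out (orb L (Quotient.out q * g)) * g⁻¹) = q := by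
    intro q
    rw [orb_out_mul, mul_inv_cancel_right, orb_out]
  have h2 : ∀ q : Quotient (QuotientGroup.rightRel L),
      orb L (Quotient.out (orb L (Quotient.out q * g⁻¹)) * g) = q := by
    intro q
    rw [orb_out_mul, inv_mul_cancel_right, orb_out]
  refine ⟨⟨fun y => (y.1 * c y.2, orb L (Quotient.out y.2 * g)),
    fun y => (y.1 * (c (orb L (Quotient.out y.2 * g⁻¹)))⁻¹, orb L (Quotient.out y.2 * g⁻¹)),
    ?_, ?_⟩, ?_, ?_⟩
  · rintro ⟨a, q⟩
    simp only [h1, mul_inv_cancel_right]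
  · rintro ⟨a, q⟩
    simp only [h2, inv_mul_cancel_right]
  · rintro ⟨a, q⟩
    simp only [Equiv.coe_fn_mk, map_mul, Subgroup.coe_mul]
    rw [mul_assoc, hc, mul_assoc]
  · rintro d ⟨a, q⟩
    simp [mul_assoc]

theorem exists_lift_data {κ : Type} (t : G) (ht : ∀ m : ℤ, t ^ m = 1 → m = 0) (n : ℕ)
    (e : ℕ → ℤ) (ιA : FreeGroup κ →* G) (hιA : Function.Injective ιA) (w : ℕ → FreeGroup κ)
    (P : ℕ → G) (hP : P = prodTo (fun j => t ^ e j * ιA (w j))) (hP1 : P n = 1)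
    (L : Subgroup G) {Λ0 : Type} [Group Λ0] (π : Λ0 →* L) (hπ : Function.Surjective π) :
    ∃ (th et : G → Λ0) (cA : FreeGroup κ → Quotient (QuotientGroup.rightRel L) → Λ0)
      (cT ρ : Quotient (QuotientGroup.rightRel L) → Λ0),
      (∀ p, (π (th p) : G) * Quotient.out (orb L p) = p) ∧
      (∀ p, (π (et p) : G) * Quotient.out (orb L p) = p) ∧
      (∀ p a, th (p * ιA a) = th p * cA a (orb L p)) ∧
      (∀ p, et (p * t) = et p * cT (orb L p)) ∧
      ∀ g, cellProd t n P e (fun p => et p * (th p)⁻¹) g = th g * ρ (orb L g) * (th g)⁻¹ := by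
  classical
  let Y := Λ0 × Quotient (QuotientGroup.rightRel L)
  let Pr : Y → G := fun y => (π y.1 : G) * Quotient.out y.2
  let sm : Λ0 → Y → Y := fun c y => (c * y.1, y.2)
  have sm_sm : ∀ c d y, sm c (sm d y) = sm (c * d) y := by
    intro c d y; simp only [sm, mul_assoc]
  have hPr2 : ∀ y : Y, y.2 = orb L (Pr y) := by
    intro y
    simp only [Pr]
    rw [orb_mul (π y.1).2, orb_out]
  -- permutations
  choose Tg hTg1 hTg2 using exists_lift_perm L π hπ
  let αY : FreeGroup κ →* (Equiv.Perm Y)ᵐᵒᵖ :=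
    FreeGroup.lift (fun i => MulOpposite.op (Tg (ιA (FreeGroup.of i))))
  let good : G → Equiv.Perm Y → Prop := fun g T =>
    (∀ y, Pr (T y) = Pr y * g) ∧ ∀ c y, T (sm c y) = sm c (T y)
  have good_Tg : ∀ g, good g (Tg g) := fun g => ⟨hTg1 g, fun c y => hTg2 g c y⟩
  have good_one : good 1 1 := ⟨by simp, by simp⟩
  have good_mul : ∀ g h T S, good g T → good h S → good (g * h) (S * T) := by
    intro g h T S hT hS
    refine ⟨fun y => ?_, fun c y => ?_⟩
    · rw [Equiv.Perm.mul_apply, hS.1, hT.1, mul_assoc]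
    · rw [Equiv.Perm.mul_apply, hT.2, hS.2, Equiv.Perm.mul_apply]
  have hTi : ∀ (T : Equiv.Perm Y) (y : Y), T (T⁻¹ y) = y := fun T y => T.apply_symm_apply y
  have good_inv : ∀ g T, good g T → good g⁻¹ T⁻¹ := by
    intro g T hT
    refine ⟨fun y => ?_, fun c y => ?_⟩
    · have := hT.1 (T⁻¹ y)
      rw [hTi] at this
      rw [this, mul_inv_cancel_right]
    · rw [Equiv.Perm.inv_eq_iff_eq, hT.2, hTi]
  have good_A : ∀ a, good (ιA a) (αY a).unop := by
    intro a
    induction a using FreeGroup.induction_on with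
    | C1 => simpa using good_one
    | of i => simpa [αY] using good_Tg (ιA (FreeGroup.of i))
    | inv_of i h => simpa using good_inv _ _ h
    | mul x y hx hy =>
      rw [map_mul, map_mul, MulOpposite.unop_mul]
      exact good_mul _ _ _ _ hx hy
  let T := Tg t
  have good_T : ∀ m : ℤ, good (t ^ m) (T ^ m) := by
    have hn : ∀ m : ℕ, good (t ^ m) (T ^ m) := by
      intro m
      induction m with
      | zero => simpa using good_one
      | succ m ih =>
        rw [pow_succ, pow_succ']
        exact good_mul _ _ _ _ ih (good_Tg t)
    intro m
    obtain ⟨m, rfl | rfl⟩ := m.eq_nat_or_neg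
    · simpa using hn m
    · rw [zpow_neg, zpow_neg, zpow_natCast, zpow_natCast]
      exact good_inv _ _ (hn m)
  -- sections
  have hs0 : ∀ g : G, ∃ y : Y, Pr y = g := by
    intro g
    obtain ⟨l, hl, h1⟩ := orb_eq.1 (orb_out L (orb L g))
    obtain ⟨c, hc⟩ := hπ ⟨l, hl⟩
    refine ⟨(c, orb L g), ?_⟩
    simp only [Pr, hc]
    exact h1.symm
  choose s0 hs0 using hs0
  obtain ⟨rep, co, hr1, hr2, hr3⟩ := exists_coset_rep ιA hιA
  obtain ⟨rep', co', hr1', hr2', hr3'⟩ := exists_coset_rep (zpowersHom G t) (by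
    rw [injective_iff_map_eq_one]
    intro m hm
    have := ht (Multiplicative.toAdd m) (by simpa using hm)
    simpa using this)
  let θ : G → Y := fun p => (αY (co p)).unop (s0 (rep p))
  let η : G → Y := fun p => (T ^ (Multiplicative.toAdd (co' p))) (s0 (rep' p))
  have hθ : ∀ p, Pr (θ p) = p := by
    intro p
    simp only [θ]
    rw [(good_A _).1, hs0, ← hr1]
  have hη : ∀ p, Pr (η p) = p := by
    intro p
    simp only [η]
    rw [(good_T _).1, hs0]
    exact (hr1' p).symm
  have hθA : ∀ p a, θ (p * ιA a) = (αY a).unop (θ p) := by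
    intro p a
    simp only [θ]
    rw [hr2, hr3, map_mul, MulOpposite.unop_mul, Equiv.Perm.mul_apply]
  have hηT : ∀ p (m : ℤ), η (p * t ^ m) = (T ^ m) (η p) := by
    intro p m
    have e1 : t ^ m = zpowersHom G t (Multiplicative.ofAdd m) := by simp
    simp only [η]
    rw [e1, hr2', hr3', toAdd_mul, toAdd_ofAdd, add_comm, zpow_add, Equiv.Perm.mul_apply]
  have hθ2 : ∀ p, (θ p).2 = orb L p := fun p => by rw [hPr2, hθ]
  have hη2 : ∀ p, (η p).2 = orb L p := fun p => by rw [hPr2, hη]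
  have eta_sm : ∀ y : Y, y = sm y.1 (1, y.2) := by intro y; simp [sm]
  have hηθ : ∀ p, η p = sm ((η p).1 * (θ p).1⁻¹) (θ p) := by
    intro p
    refine Prod.ext ?_ ?_
    · simp [sm]
    · simp only [sm, hη2, hθ2]
  have hθη : ∀ p, θ p = sm ((η p).1 * (θ p).1⁻¹)⁻¹ (η p) := by
    intro p
    conv_rhs => rw [hηθ p]
    rw [sm_sm]
    simp [sm]
  let fh : G → Λ0 := fun p => (η p).1 * (θ p).1⁻¹
  let W : ℕ → (Equiv.Perm Y)ᵐᵒᵖ := fun j => prodTo (fun j => MulOpposite.op T ^ e j * αY (w j)) j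
  have hTθ : ∀ p (m : ℤ), (T ^ m) (θ p) = sm ((fh p)⁻¹ * fh (p * t ^ m)) (θ (p * t ^ m)) := by
    intro p m
    conv_lhs => rw [hθη p]
    rw [(good_T m).2, ← hηT, hηθ (p * t ^ m), sm_sm]
  have hPsucc : ∀ j, P (j + 1) = P j * (t ^ e j * ιA (w j)) := by intro j; rw [hP]; rfl
  have hP0 : P 0 = 1 := by rw [hP]; rfl
  have hW : ∀ g j, (W j).unop (θ g) = sm (cellProd t j P e fh g) (θ (g * P j)) := by
    intro g j
    induction j with
    | zero => simp [W, prodTo, hP0, cellProd, sm]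
    | succ j ih =>
      have e1 : (W (j + 1)).unop (θ g) =
          (αY (w j)).unop ((T ^ e j) ((W j).unop (θ g))) := by
        simp only [W, prodTo]
        rw [MulOpposite.unop_mul, Equiv.Perm.mul_apply, MulOpposite.unop_mul,
          Equiv.Perm.mul_apply, ← MulOpposite.op_zpow, MulOpposite.unop_op]
      rw [e1, ih, (good_T _).2, hTθ, sm_sm, (good_A _).2, ← hθA, hPsucc]
      simp [cellProd, prodTo, mul_assoc]
  have good_W : ∀ j c y, (W j).unop (sm c y) = sm c ((W j).unop y) := by
    intro j
    induction j with
    | zero => intro c y; simp [W, prodTo]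
    | succ j ih =>
      intro c y
      have e1 : ∀ z, (W (j + 1)).unop z =
          (αY (w j)).unop ((T ^ e j) ((W j).unop z)) := by
        intro z
        simp only [W, prodTo]
        rw [MulOpposite.unop_mul, Equiv.Perm.mul_apply, MulOpposite.unop_mul,
          Equiv.Perm.mul_apply, ← MulOpposite.op_zpow, MulOpposite.unop_op]
      rw [e1, e1, ih, (good_T _).2, (good_A _).2]
  refine ⟨fun p => (θ p).1, fun p => (η p).1, fun a q => ((αY a).unop (1, q)).1,
    fun q => (T (1, q)).1, fun q => ((W n).unop (1, q)).1, ?_, ?_, ?_, ?_, ?_⟩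
  · intro p
    have := hθ p
    simp only [Pr] at this
    rwa [hθ2] at this
  · intro p
    have := hη p
    simp only [Pr] at this
    rwa [hη2] at this
  · intro p a
    show (θ (p * ιA a)).1 = _
    rw [hθA]
    conv_lhs => rw [eta_sm (θ p)]
    rw [(good_A a).2, hθ2]
  · intro p
    have := hηT p 1
    rw [zpow_one, zpow_one] at this
    show (η (p * t)).1 = _
    rw [this]
    conv_lhs => rw [eta_sm (η p)]
    have h3 := (good_T 1).2
    rw [zpow_one] at h3
    rw [h3, hη2]
  · intro g
    have h1 := hW g n
    rw [hP1, mul_one] at h1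
    conv_lhs at h1 => rw [eta_sm (θ g)]
    rw [good_W, hθ2] at h1
    have h2 := congrArg Prod.fst h1
    simp only [sm] at h2
    show cellProd t n P e fh g = _
    rw [h2, mul_inv_cancel_right]

/-- finite paths -/
theorem exists_path_set {A : Type} [Group A] (t : G) (ιA : A →* G)
    (hgen : ∀ H : Subgroup G, t ∈ H → (∀ a, ιA a ∈ H) → ∀ g, g ∈ H) (g : G) :
    ∀ p : G, ∃ B : Finset G, ∀ Q : G → Prop, (∀ p a, Q p ↔ Q (p * ιA a)) →
      (∀ r ∈ B, Q r ↔ Q (r * t)) → (Q p ↔ Q (p * g)) := by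
  classical
  let H : Subgroup G :=
    { carrier := {g | ∀ p : G, ∃ B : Finset G, ∀ Q : G → Prop, (∀ p a, Q p ↔ Q (p * ιA a)) →
        (∀ r ∈ B, Q r ↔ Q (r * t)) → (Q p ↔ Q (p * g))}
      one_mem' := by
        intro p
        refine ⟨∅, fun Q _ _ => by rw [mul_one]⟩
      mul_mem' := by
        intro a b ha hb p
        obtain ⟨B1, h1⟩ := ha p
        obtain ⟨B2, h2⟩ := hb (p * a)
        refine ⟨B1 ∪ B2, fun Q hQ hB => ?_⟩
        rw [h1 Q hQ (fun r hr => hB r (Finset.mem_union_left _ hr)),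
          h2 Q hQ (fun r hr => hB r (Finset.mem_union_right _ hr)), mul_assoc]
      inv_mem' := by
        intro a ha p
        obtain ⟨B1, h1⟩ := ha (p * a⁻¹)
        refine ⟨B1, fun Q hQ hB => ?_⟩
        rw [h1 Q hQ hB, inv_mul_cancel_right] }
  refine hgen H ?_ ?_ g
  · intro p
    exact ⟨{p}, fun Q _ hB => hB p (by simp)⟩
  · intro a p
    exact ⟨∅, fun Q hQ _ => hQ p a⟩

end Step6


/-! ### Abstract coherence -/

section Step7

variable {G : Type} [Group G]

theorem cellProd_map (t : G) (n : ℕ) (P : ℕ → G) (e : ℕ → ℤ) {Λ Λ' : Type} [Group Λ] [Group Λ']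
    (φ : Λ →* Λ') (f : G → Λ) (g : G) :
    φ (cellProd t n P e f g) = cellProd t n P e (fun p => φ (f p)) g := by
  simp only [cellProd]
  rw [prodTo_map]
  apply prodTo_congr
  intro j _
  simp

theorem abstract_coherence [Countable G] {κ : Type} (t : G) (ht : ∀ m : ℤ, t ^ m = 1 → m = 0)
    (k N : ℕ) (hk : 0 < k) (hN : 0 < N) (e : ℕ → ℤ) (he : ∀ j, e (j + k) = e j) (he0 : e 0 ≠ 0)
    (ιA : FreeGroup κ →* G) (hιA : Function.Injective ιA) (w : ℕ → FreeGroup κ)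
    (hw : ∀ j, w (j + k) = w j)
    (hP1 : prodTo (fun j => t ^ e j * ιA (w j)) (k * N) = 1)
    (huniv : ∀ (M : Type) [Group M] (T : M) (α : FreeGroup κ →* M),
      prodTo (fun j => T ^ e j * α (w j)) (k * N) = 1 →
        ∃ φ : G →* M, φ t = T ∧ ∀ a, φ (ιA a) = α a)
    (hgen : ∀ H : Subgroup G, t ∈ H → (∀ a, ιA a ∈ H) → ∀ g, g ∈ H)
    {K : Type} [Group K] (ι : K →* G) (hι : Function.Injective ι) (τ : K) (ξ : ℕ → K)
    (hτ : ι τ = t) (hξ : ∀ j, ι (ξ j) = ιA (w j))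
    (hunivK : ∀ (M : Type) [Group M] (T : M) (X : ℕ → M), (∀ j, X (j + k) = X j) →
      prodTo (fun j => T ^ e j * X j) (k * N) = 1 → ∃ φ : K →* M, φ τ = T ∧ ∀ j, φ (ξ j) = X j)
    (hgenK : ∀ H : Subgroup K, τ ∈ H → (∀ j, ξ j ∈ H) → ∀ κ, κ ∈ H)
    (L : Subgroup G) (hL : L.FG) : FinitelyPresentedGroup L := by
  classical
  obtain ⟨S, hS⟩ := hL
  have hSL : ∀ x : ↥S, (x : G) ∈ L := fun x => by
    rw [← hS]; exact Subgroup.subset_closure x.2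
  let π : FreeGroup ↥S →* L := FreeGroup.lift (fun x => ⟨x, hSL x⟩)
  have hind : ∀ Q : L → Prop, Q 1 → (∀ x : ↥S, Q ⟨x, hSL x⟩) → (∀ a b, Q a → Q b → Q (a * b)) →
      (∀ a, Q a → Q a⁻¹) → ∀ l, Q l := by
    intro Q q1 qS qm qi l
    obtain ⟨l, hl⟩ := l
    have hl' := hl
    rw [← hS] at hl'
    have : ∃ h : l ∈ L, Q ⟨l, h⟩ := by
      induction hl' using Subgroup.closure_induction with
      | mem x hx => exact ⟨hSL ⟨x, hx⟩, qS ⟨x, hx⟩⟩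
      | one => exact ⟨L.one_mem, q1⟩
      | mul x y hx hy ihx ihy =>
        obtain ⟨h1, h2⟩ := ihx (by rw [← hS]; exact hx)
        obtain ⟨h3, h4⟩ := ihy (by rw [← hS]; exact hy)
        exact ⟨L.mul_mem h1 h3, qm _ _ h2 h4⟩
      | inv x hx ihx =>
        obtain ⟨h1, h2⟩ := ihx (by rw [← hS]; exact hx)
        exact ⟨L.inv_mem h1, qi _ h2⟩
    exact this.2
  have hπ : Function.Surjective π := by
    refine hind _ ⟨1, map_one _⟩ ?_ ?_ ?_
    · intro x
      exact ⟨FreeGroup.of x, by simp [π]⟩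
    · rintro _ _ ⟨a, rfl⟩ ⟨b, rfl⟩
      exact ⟨a * b, map_mul _ _ _⟩
    · rintro _ ⟨a, rfl⟩
      exact ⟨a⁻¹, map_inv _ _⟩
  let n := k * N
  have hn : 0 < n := Nat.mul_pos hk hN
  let P : ℕ → G := prodTo (fun j => t ^ e j * ιA (w j))
  obtain ⟨th, et, cA, cT, ρ, hth, het, hthA, hetT, hcell⟩ :=
    exists_lift_data t ht n e ιA hιA w P rfl hP1 L π hπ
  choose Bp hBp using exists_path_set t ιA hgen
  let B0 : Finset G := S.biUnion (fun g => Bp g 1)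
  obtain ⟨E0, hE0, hfin, hB, hY⟩ := thmY t ht L n hn P e he0 B0
  let fh : G → FreeGroup ↥S := fun p => et p * (th p)⁻¹
  have hfh : ∀ p, π (fh p) = 1 := by
    intro p
    have h1 : (π (et p) : G) = π (th p) := mul_right_cancel ((het p).trans (hth p).symm)
    have h2 : π (et p) = π (th p) := Subtype.ext h1
    simp only [fh]
    rw [map_mul, map_inv, h2, mul_inv_cancel]
  let R : Set (FreeGroup ↥S) := ρ '' (orb L '' CC t n P e E0)
  have hR : R.Finite := hfin.image _
  have hRπ : Subgroup.normalClosure R ≤ π.ker := by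
    apply Subgroup.normalClosure_le_normal
    rintro _ ⟨_, ⟨g, hg, rfl⟩, rfl⟩
    show _ ∈ π.ker
    have h1 := congrArg π (hcell g)
    rw [cellProd_map] at h1
    have h2 : cellProd t n P e (fun p => π (et p * (th p)⁻¹)) g = 1 := by
      have : (fun p => π (et p * (th p)⁻¹)) = fun _ => 1 := funext hfh
      rw [this]
      exact (cellProd_map t n P e (1 : L →* L) (fun _ => 1) g).symm
    rw [h2, map_mul, map_mul, map_inv] at h1
    rw [MonoidHom.mem_ker]
    have h3 : π (th g) * π (ρ (orb L g)) = π (th g) := by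
      rw [← mul_inv_eq_one]; exact h1.symm
    exact mul_eq_left.1 h3
  let Λ := FreeGroup ↥S ⧸ Subgroup.normalClosure R
  let mk : FreeGroup ↥S →* Λ := QuotientGroup.mk' _
  let πb : Λ →* L := QuotientGroup.lift (Subgroup.normalClosure R) π hRπ
  have hπb : ∀ x, πb (mk x) = π x := fun x => rfl
  let f : G → πb.ker := fun p => ⟨mk (fh p), by rw [MonoidHom.mem_ker, hπb, hfh]⟩
  have hf : ∀ g ∈ CC t n P e E0, cellProd t n P e f g = 1 := by
    intro g hg
    apply Subtype.ext
    have h1 := cellProd_map t n P e πb.ker.subtype f g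
    rw [Subgroup.subtype_apply] at h1
    rw [h1]
    have h2 : (fun p => πb.ker.subtype (f p)) = fun p => mk (fh p) := rfl
    rw [h2, ← cellProd_map, hcell, map_mul, map_mul, map_inv]
    have h3 : mk (ρ (orb L g)) = 1 := by
      apply (QuotientGroup.eq_one_iff _).2
      exact Subgroup.subset_normalClosure ⟨_, ⟨g, hg, rfl⟩, rfl⟩
    rw [h3]; simp
  obtain ⟨E, f', hE, hline, hE0E, hf', hclosed, hf'c⟩ := hY _ f hf
  obtain ⟨σ, hσE, hσc⟩ := step4 t k N hk hN e (fun j => ιA (w j)) he (fun j => by rw [hw]) P rfl hP1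
    ι hι τ ξ hτ hξ hunivK hgenK E hE hline f' hclosed hf'c
  obtain ⟨F, hF1, hFA, hFt⟩ := step5 t n e ιA w P rfl hP1 huniv hgen σ hσc
  let θ : G → Λ := fun p => (F p : Λ) * mk (th p)
  have hθA : ∀ p a, θ (p * ιA a) = θ p * mk (cA a (orb L p)) := by
    intro p a
    simp only [θ]
    rw [hFA, hthA, map_mul, mul_assoc]
  have hθt : ∀ p, E0 p (p * t) → θ (p * t) = θ p * mk (cT (orb L p)) := by
    intro p hp
    have h1 := hFt p 1
    rw [zpow_one, hσE _ _ (hE0E _ _ hp), hf' _ _ hp] at h1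
    simp only [θ]
    rw [h1]
    simp only [Subgroup.coe_mul, Subgroup.coe_inv, f, fh, hetT, map_mul, map_inv]
    group
  have hcan : ∀ a b c : Λ, a * c * (b * c)⁻¹ = a * b⁻¹ := by intro a b c; group
  have hD : ∀ l ∈ L, ∀ x ∈ S, θ (l * x) * (θ x)⁻¹ = θ l * (θ 1)⁻¹ := by
    intro l hl x hx
    have := hBp x 1 (fun p => θ (l * p) * (θ p)⁻¹ = θ l * (θ 1)⁻¹) ?_ ?_
    · rw [one_mul, mul_one] at this
      exact this.1 rfl
    · intro p a
      rw [← mul_assoc, hθA, hθA, orb_mul hl, hcan]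
    · intro r hr
      have h1 : E0 r (r * t) := hB r (Finset.mem_biUnion.2 ⟨x, hx, hr⟩)
      have h2 : E0 (l * r) (l * r * t) := by rw [mul_assoc]; exact hE0.inv l _ _ hl h1
      rw [← mul_assoc, hθt _ h1, hθt _ h2, orb_mul hl, hcan]
  let s0 : L → Λ := fun l => θ l * (θ 1)⁻¹
  have hs1 : s0 1 = 1 := by simp [s0]
  have hsmul : ∀ b a : L, s0 (a * b) = s0 a * s0 b := by
    refine hind _ ?_ ?_ ?_ ?_
    · intro a; rw [mul_one, hs1, mul_one]
    · intro x a
      have := hD a a.2 x x.2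
      simp only [s0, Subgroup.coe_mul]
      rw [← this]
      group
    · intro b c hb hc a
      rw [← mul_assoc, hc, hb, hc, mul_assoc]
    · intro b hb a
      have h1 : ∀ a, s0 (a * b⁻¹) = s0 a * (s0 b)⁻¹ := by
        intro a
        rw [eq_mul_inv_iff_mul_eq, ← hb, inv_mul_cancel_right]
      have h2 := h1 1
      rw [one_mul, hs1, one_mul] at h2
      rw [h1, h2]
  let s : L →* Λ := ⟨⟨s0, hs1⟩, fun a b => hsmul b a⟩
  refine finitelyPresented_of_retract π hπ R hR hRπ s ?_
  intro l
  show πb (s0 l) = l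
  have hπθ : ∀ p, (πb (θ p) : G) * Quotient.out (orb L p) = p := by
    intro p
    simp only [θ]
    rw [map_mul, (F p).2, one_mul, hπb, hth]
  have h1 := hπθ l
  have h2 := hπθ 1
  have h3 : orb L (l : G) = orb L 1 := by
    have := orb_mul (L := L) (g := 1) l.2
    rwa [mul_one] at this
  rw [h3] at h1
  apply Subtype.ext
  simp only [s0, map_mul, map_inv, Subgroup.coe_mul, Subgroup.coe_inv]
  rw [← eq_inv_mul_iff_mul_eq] at h2
  rw [mul_one] at h2
  rw [h2] at h1
  exact h1

end Step7


/-! ### Ping-pong -/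

section PingPong

/-- the elements whose reduced word starts with a given letter -/
def St (a : ℕ × Bool) : Set (FreeGroup ℕ) := {z | z.toWord.head? = some a}

theorem St_disj {a b : ℕ × Bool} (h : a ≠ b) {z : FreeGroup ℕ} (hz : z ∈ St a) : z ∉ St b := by
  intro hz'
  have h1 : z.toWord.head? = some a := hz
  have h2 : z.toWord.head? = some b := hz'
  rw [h1] at h2
  exact h (Option.some.inj h2)

theorem St_cons (i : ℕ) (b : Bool) {z : FreeGroup ℕ} (hz : z ∉ St (i, !b)) :
    FreeGroup.mk [(i, b)] * z ∈ St (i, b) := by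
  have hz' : ¬ z.toWord.head? = some (i, !b) := hz
  show (FreeGroup.mk [(i, b)] * z).toWord.head? = some (i, b)
  have h1 : (FreeGroup.mk [(i, b)] * z).toWord = FreeGroup.reduce ((i, b) :: z.toWord) := by
    rw [FreeGroup.toWord_mul]
    simp
  rw [h1, FreeGroup.reduce.cons, FreeGroup.reduce_toWord]
  generalize z.toWord = l at hz'
  cases l with
  | nil => simp
  | cons hd tl =>
    obtain ⟨x, y⟩ := hd
    simp only [List.head?_cons, Option.some.injEq, Prod.mk.injEq] at hz'
    have : ¬ (i = x ∧ b = !y) := by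
      rintro ⟨rfl, rfl⟩
      simp at hz'
    simp only [this, if_false, List.head?_cons]

theorem St_of (i : ℕ) {z : FreeGroup ℕ} (hz : z ∉ St (i, false)) :
    FreeGroup.of i * z ∈ St (i, true) := St_cons i true hz

theorem St_of_inv (i : ℕ) {z : FreeGroup ℕ} (hz : z ∉ St (i, true)) :
    (FreeGroup.of i)⁻¹ * z ∈ St (i, false) := St_cons i false hz

theorem St_zpow (i : ℕ) (b : Bool) (hi : i ≠ 0) {z : FreeGroup ℕ} (hz : z ∈ St (i, b)) (n : ℤ)
    (hn : n ≠ 0) : ∃ c, (FreeGroup.of 0) ^ n * z ∈ St (0, c) := by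
  have hp : ∀ n : ℕ, (FreeGroup.of 0) ^ (n + 1) * z ∈ St (0, true) := by
    intro n
    induction n with
    | zero =>
      rw [zero_add, pow_one]
      exact St_of 0 (St_disj (by simp [hi]) hz)
    | succ n ih =>
      rw [pow_succ', mul_assoc]
      exact St_of 0 (St_disj (by simp) ih)
  have hm : ∀ n : ℕ, ((FreeGroup.of 0)⁻¹) ^ (n + 1) * z ∈ St (0, false) := by
    intro n
    induction n with
    | zero =>
      rw [zero_add, pow_one]
      exact St_of_inv 0 (St_disj (by simp [hi]) hz)
    | succ n ih =>
      rw [pow_succ', mul_assoc]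
      exact St_of_inv 0 (St_disj (by simp) ih)
  obtain ⟨m, rfl | rfl⟩ := n.eq_nat_or_neg
  · obtain ⟨m, rfl⟩ := Nat.exists_eq_succ_of_ne_zero (n := m) (by simpa using hn)
    refine ⟨true, ?_⟩
    rw [zpow_natCast]
    exact hp m
  · obtain ⟨m, rfl⟩ := Nat.exists_eq_succ_of_ne_zero (n := m) (by simpa using hn)
    refine ⟨false, ?_⟩
    rw [zpow_neg, zpow_natCast, ← inv_pow]
    exact hm m

theorem St_zpow_not (i : ℕ) (b : Bool) (hi : i ≠ 0) {z : FreeGroup ℕ} (hz : z ∈ St (i, b)) (n : ℤ)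
    (hn : n ≠ 0) (j : ℕ) (hj : j ≠ 0) (c : Bool) : (FreeGroup.of 0) ^ n * z ∉ St (j, c) := by
  obtain ⟨d, hd⟩ := St_zpow i b hi hz n hn
  exact St_disj (by simp [hj.symm]) hd

theorem ping_pos (e : ℕ → ℤ) (m : ℕ) (he : ∀ j, j < m → e (j + 1) ≠ 0) (j : ℕ) (hj : j < m)
    (z : FreeGroup ℕ) (hz : z ∉ St (j + 1, false)) :
    (FreeGroup.of 0) ^ (-e 1) *
      (prodTo (fun j => (FreeGroup.of 0) ^ e (j + 1) * FreeGroup.of (j + 1)) (j + 1) * z) ∈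
      St (1, true) := by
  induction j generalizing z with
  | zero =>
    have := St_of 1 hz
    simpa [prodTo, mul_assoc] using this
  | succ j ih =>
    have h1 := St_of (j + 1 + 1) hz
    have h2 := St_zpow_not _ _ (by omega) h1 (e (j + 1 + 1)) (he _ hj) (j + 1) (by omega) false
    have h3 := ih (by omega) _ h2
    rw [prodTo]
    simpa only [mul_assoc] using h3

theorem ping_neg (e : ℕ → ℤ) (m : ℕ) (he : ∀ j, j < m → e (j + 1) ≠ 0) (j : ℕ) (hj : j < m)
    (z : FreeGroup ℕ) (hz : (FreeGroup.of 0) ^ (-e 1) * z ∉ St (1, true)) :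
    (prodTo (fun j => (FreeGroup.of 0) ^ e (j + 1) * FreeGroup.of (j + 1)) (j + 1))⁻¹ * z ∈
      St (j + 1, false) := by
  induction j with
  | zero =>
    have := St_of_inv 1 hz
    simpa [prodTo, mul_assoc] using this
  | succ j ih =>
    have h3 := ih (by omega)
    have h2 := St_zpow_not _ _ (by omega) h3 (-e (j + 1 + 1)) (neg_ne_zero.2 (he _ hj))
      (j + 1 + 1) (by omega) true
    have h1 := St_of_inv (j + 1 + 1) h2
    rw [prodTo]
    simpa only [mul_assoc, mul_inv_rev, zpow_neg] using h1

open scoped Pointwise in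
theorem ping_free (e : ℕ → ℤ) (m : ℕ) (hm : 0 < m) (he : ∀ j, j < m + 1 → e j ≠ 0) :
    Function.Injective (FreeGroup.lift (fun i : Fin (m + 1) => if i = 0 then
      (prodTo (fun j => (FreeGroup.of 0) ^ e (j + 1) * FreeGroup.of (j + 1)) m *
        (FreeGroup.of 0) ^ e 0)⁻¹ else FreeGroup.of (i : ℕ))) := by
  classical
  have he' : ∀ j, j < m → e (j + 1) ≠ 0 := fun j hj => he _ (by omega)
  have he1 : e 1 ≠ 0 := he' 0 hm
  have he0 : e 0 ≠ 0 := he 0 (by omega)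
  obtain ⟨m', rfl⟩ : ∃ m', m = m' + 1 := ⟨m - 1, by omega⟩
  set V := prodTo (fun j => (FreeGroup.of 0 : FreeGroup ℕ) ^ e (j + 1) * FreeGroup.of (j + 1))
    (m' + 1) with hV
  let XV : Set (FreeGroup ℕ) := {z | (FreeGroup.of 0) ^ (-e 1) * z ∈ St (1, true)}
  let XV' : Set (FreeGroup ℕ) := {z | (FreeGroup.of 0) ^ (e 0) * z ∈ St (m' + 1, false)}
  have hXV : ∀ z ∈ XV, ∀ j, j ≠ 0 → ∀ c, z ∉ St (j, c) := by
    intro z hz j hj c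
    have := St_zpow_not 1 true (by simp) hz (e 1) he1 j hj c
    simpa using this
  have hXV' : ∀ z ∈ XV', ∀ j, j ≠ 0 → ∀ c, z ∉ St (j, c) := by
    intro z hz j hj c
    have := St_zpow_not (m' + 1) false (by simp) hz (-e 0) (by simpa using he0) j hj c
    simpa using this
  have hXX : ∀ z ∈ XV, z ∉ XV' := by
    intro z hz hz'
    by_cases h0 : e 0 + e 1 = 0
    · have h1 : (FreeGroup.of 0) ^ (-e 1) * z ∈ St (m' + 1, false) := by
        have : -e 1 = e 0 := by omega
        rw [this]; exact hz'
      exact St_disj (by simp) h1 hz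
    · have h2 := St_zpow_not 1 true (by simp) hz (e 0 + e 1) h0 (m' + 1) (by simp) false
      apply h2
      rw [← mul_assoc, ← zpow_add]
      rw [add_neg_cancel_right]
      exact hz'
  have hnz : ∀ i : Fin (m' + 1 + 1), i ≠ 0 → (i : ℕ) ≠ 0 := by
    intro i hi h; exact hi (Fin.ext h)
  have hne : ∀ i j : Fin (m' + 1 + 1), i ≠ j → (i : ℕ) ≠ j := by
    intro i j hi h; exact hi (Fin.ext h)
  refine FreeGroup.injective_lift_of_ping_pong _
    (fun i : Fin (m' + 1 + 1) => if i = 0 then XV' else St (i, true))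
    (fun i : Fin (m' + 1 + 1) => if i = 0 then XV else St (i, false)) ?_ ?_ ?_ ?_ ?_ ?_
  · intro i
    by_cases hi : i = 0
    · simp only [hi, if_true]
      refine ⟨(FreeGroup.of 0) ^ (-e 0) * (FreeGroup.of (m' + 1))⁻¹, ?_⟩
      show (FreeGroup.of 0) ^ (e 0) * _ ∈ St (m' + 1, false)
      rw [← mul_assoc, ← zpow_add, add_neg_cancel, zpow_zero, one_mul]
      have := St_of_inv (m' + 1) (z := 1) (by simp [St])
      simpa using this
    · simp only [hi, if_false]
      exact ⟨FreeGroup.of (i : ℕ), by simp [St]⟩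
  · intro i j hij
    simp only [Function.onFun]
    rw [Set.disjoint_left]
    intro z
    split_ifs with h1 h2 h2
    · exact absurd (h1.trans h2.symm) hij
    · intro hz; exact hXV' z hz _ (hnz j h2) _
    · intro hz hz'; exact hXV' z hz' _ (hnz i h1) _ hz
    · intro hz; exact St_disj (by simp [hne i j hij]) hz
  · intro i j hij
    simp only [Function.onFun]
    rw [Set.disjoint_left]
    intro z
    split_ifs with h1 h2 h2
    · exact absurd (h1.trans h2.symm) hij
    · intro hz; exact hXV z hz _ (hnz j h2) _
    · intro hz hz'; exact hXV z hz' _ (hnz i h1) _ hz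
    · intro hz; exact St_disj (by simp [hne i j hij]) hz
  · intro i j
    rw [Set.disjoint_left]
    intro z
    split_ifs with h1 h2 h2
    · intro hz hz'; exact hXX z hz' hz
    · intro hz; exact hXV' z hz _ (hnz j h2) _
    · intro hz hz'; exact hXV z hz' _ (hnz i h1) _ hz
    · intro hz; exact St_disj (by simp) hz
  · intro i
    rw [Set.smul_set_subset_iff]
    intro z hz
    by_cases hi : i = 0
    · simp only [hi, if_true, Set.mem_compl_iff, smul_eq_mul] at hz ⊢
      have := ping_neg e (m' + 1) he' m' (by omega) z hz
      show (FreeGroup.of 0) ^ (e 0) * _ ∈ St (m' + 1, false)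
      rw [mul_inv_rev, mul_assoc, mul_inv_cancel_left]
      exact this
    · simp only [hi, if_false, Set.mem_compl_iff, smul_eq_mul] at hz ⊢
      exact St_of _ hz
  · intro i
    rw [Set.smul_set_subset_iff]
    intro z hz
    rw [Pi.inv_apply]
    by_cases hi : i = 0
    · simp only [hi, if_true, Set.mem_compl_iff, smul_eq_mul, inv_inv] at hz ⊢
      have := ping_pos e (m' + 1) he' m' (by omega) ((FreeGroup.of 0) ^ (e 0) * z) hz
      show (FreeGroup.of 0) ^ (-e 1) * _ ∈ St (1, true)
      rw [mul_assoc]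
      exact this
    · simp only [hi, if_false, Set.mem_compl_iff, smul_eq_mul] at hz ⊢
      exact St_of_inv _ hz

theorem exists_free_solution (k : ℕ) (hk : 0 < k) (e : ℕ → ℤ) (he : ∀ j, j < k → e j ≠ 0) :
    ∃ (M : Type) (_ : Group M) (T : M) (X : ℕ → M),
      prodTo (fun j => T ^ e j * X j) k = 1 ∧
      Function.Injective (FreeGroup.lift (fun i : Fin k => X i)) := by
  obtain ⟨m, rfl⟩ : ∃ m, k = m + 1 := ⟨k - 1, by omega⟩
  rcases Nat.eq_zero_or_pos m with rfl | hm
  · refine ⟨Multiplicative ℤ, inferInstance, Multiplicative.ofAdd 1,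
      fun _ => Multiplicative.ofAdd (-e 0), ?_, ?_⟩
    · simp [prodTo, ← ofAdd_zsmul, ← ofAdd_add]
    · have hz : ∀ z : FreeGroup (Fin (0 + 1)), ∃ n : ℤ, z = FreeGroup.of 0 ^ n := by
        intro z
        induction z using FreeGroup.induction_on with
        | C1 => exact ⟨0, by simp⟩
        | of i => exact ⟨1, by rw [zpow_one]; congr 1; ext; omega⟩
        | inv_of i h => obtain ⟨n, h⟩ := h; exact ⟨-n, by rw [h, zpow_neg]⟩
        | mul x y hx hy =>
          obtain ⟨a, hx⟩ := hx
          obtain ⟨b, hy⟩ := hy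
          exact ⟨a + b, by rw [hx, hy, zpow_add]⟩
      rw [injective_iff_map_eq_one]
      intro z h
      obtain ⟨n, rfl⟩ := hz z
      rw [map_zpow, FreeGroup.lift_apply_of, ← ofAdd_zsmul, ofAdd_eq_one, smul_eq_mul,
        mul_eq_zero] at h
      rcases h with h | h
      · rw [h, zpow_zero]
      · exact absurd (neg_eq_zero.1 h) (he 0 (by omega))
  · refine ⟨FreeGroup ℕ, inferInstance, FreeGroup.of 0, fun i => if i = 0 then
      (prodTo (fun j => (FreeGroup.of 0) ^ e (j + 1) * FreeGroup.of (j + 1)) m *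
        (FreeGroup.of 0) ^ e 0)⁻¹ else FreeGroup.of i, ?_, ?_⟩
    · rw [add_comm m 1, prodTo_add]
      have h1 : (fun j => (FreeGroup.of 0 : FreeGroup ℕ) ^ e (1 + j) * (if 1 + j = 0 then
        (prodTo (fun j => (FreeGroup.of 0) ^ e (j + 1) * FreeGroup.of (j + 1)) m *
        (FreeGroup.of 0) ^ e 0)⁻¹ else FreeGroup.of (1 + j))) =
        fun j => (FreeGroup.of 0) ^ e (j + 1) * FreeGroup.of (j + 1) := by
        funext j
        rw [if_neg (by omega), add_comm 1 j]
      rw [h1]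
      simp only [prodTo, if_true, one_mul]
      group
    · have h2 := ping_free e m hm he
      have h3 : ∀ i : Fin (m + 1), ((i : ℕ) = 0) = (i = 0) := by
        intro i; rw [Fin.ext_iff]; rfl
      simpa only [h3] using h2

end PingPong


/-! ### The concrete group -/

/-- the two factors of an amalgam -/
def AmFam (A K : Type) : Bool → Type
  | false => K
  | true => A

instance amFamGroup (A K : Type) [hA : Group A] [hK : Group K] : ∀ b, Group (AmFam A K b)
  | false => hK
  | true => hA

/-- the two embeddings of the amalgamated subgroup -/
def amHom {A K H : Type} [Group A] [Group K] [Group H] (α : H →* A) (β : H →* K) :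
    ∀ b, H →* AmFam A K b
  | false => β
  | true => α

theorem exists_amalgam {A K H : Type} [Group A] [Group K] [Group H] (α : H →* A) (β : H →* K)
    (hα : Function.Injective α) (hβ : Function.Injective β) :
    ∃ (M : Type) (_ : Group M) (i : A →* M) (j : K →* M), Function.Injective i ∧
      Function.Injective j ∧ ∀ h, i (α h) = j (β h) := by
  let φ := amHom α β
  have hφ : ∀ b, Function.Injective (φ b)
    | false => hβ
    | true => hα
  refine ⟨Monoid.PushoutI φ, inferInstance, Monoid.PushoutI.of (φ := φ) true,
    Monoid.PushoutI.of (φ := φ) false, Monoid.PushoutI.of_injective hφ true,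
    Monoid.PushoutI.of_injective hφ false, fun h => ?_⟩
  exact (Monoid.PushoutI.of_apply_eq_base φ true h).trans
    (Monoid.PushoutI.of_apply_eq_base φ false h).symm

theorem range_map_prod {M : Type*} [Monoid M] (g : ℕ → M) (n : ℕ) :
    ((List.range n).map g).prod = prodTo g n := by
  induction n with
  | zero => simp [prodTo]
  | succ n ih => rw [List.range_succ]; simp [prodTo, ih]

theorem mk_flatten_map {β : Type} {ι : Type} (l : List ι) (f : ι → List (β × Bool)) :
    FreeGroup.mk ((l.map f).flatten) = (l.map (fun i => FreeGroup.mk (f i))).prod := by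
  induction l with
  | nil => rfl
  | cons a l ih =>
    simp only [List.map_cons, List.flatten_cons, List.prod_cons]
    rw [← ih, FreeGroup.mul_mk]

theorem mk_letterPow {β : Type} (a : β) (m : ℤ) :
    FreeGroup.mk (letterPow a m) = FreeGroup.of a ^ m := by
  have hp : ∀ n : ℕ, FreeGroup.mk (List.replicate n (a, true)) = FreeGroup.of a ^ n := by
    intro n
    induction n with
    | zero => rfl
    | succ n ih =>
      rw [pow_succ', ← ih, List.replicate_succ]
      rfl
  have hm : ∀ n : ℕ, FreeGroup.mk (List.replicate n (a, false)) = (FreeGroup.of a)⁻¹ ^ n := by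
    intro n
    induction n with
    | zero => rfl
    | succ n ih =>
      rw [pow_succ', ← ih, List.replicate_succ]
      rfl
  unfold letterPow
  rcases le_or_gt m 0 with h | h
  · have h1 : decide (0 < m) = false := by simpa using h
    have h2 : m = -(m.natAbs : ℤ) := by omega
    rw [h1, hm]
    conv_rhs => rw [h2]
    rw [zpow_neg, zpow_natCast, inv_pow]
  · have h1 : decide (0 < m) = true := by simpa using h
    have h2 : m = (m.natAbs : ℤ) := by omega
    rw [h1, hp]
    conv_rhs => rw [h2]
    rw [zpow_natCast]

theorem mk_windmillWord (r k : ℕ) (hk : 0 < k) (ε : Fin k → ℤ) (Wi : Fin k → List (Fin r × Bool)) :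
    FreeGroup.mk (windmillWord r k ε Wi) =
      prodTo (fun j => FreeGroup.of (Sum.inr ()) ^ ε ⟨j % k, Nat.mod_lt _ hk⟩ *
        FreeGroup.map Sum.inl (FreeGroup.mk (Wi ⟨j % k, Nat.mod_lt _ hk⟩))) k := by
  unfold windmillWord
  rw [mk_flatten_map, ← range_map_prod, ← List.map_coe_finRange_eq_range, List.map_map]
  congr 1
  apply List.map_congr_left
  intro i _
  have h1 : (⟨(i : ℕ) % k, Nat.mod_lt _ hk⟩ : Fin k) = i := Fin.ext (Nat.mod_eq_of_lt i.2)
  simp only [Function.comp_apply, h1]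
  rw [← FreeGroup.mul_mk, mk_letterPow, FreeGroup.map.mk]
  rfl

/-- **Windmills and extreme 2-cells, special case of Corollary `cor:t-windmills`.**
If `W = t^{ε₁} W₁ ⋯ t^{ε_k} W_k` with each `εᵢ` a nonzero integer and each `Wᵢ` a
nonempty reduced word in `a₁, …, a_r`, and `W₁, …, W_k` freely generate a subgroup of
the free group on `a₁, …, a_r`, then `G = ⟨a₁, …, a_r, t ∣ W^N⟩` is coherent. -/
theorem coherence_one_relator_t_windmill
    (r k N : ℕ) (hr : 1 ≤ r) (hk : 1 ≤ k) (hN : 1 ≤ N)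
    (ε : Fin k → ℤ) (hε : ∀ i, ε i ≠ 0)
    (Wi : Fin k → List (Fin r × Bool))
    (hne : ∀ i, Wi i ≠ []) (hred : ∀ i, WordReduced (Wi i))
    (hfree : Function.Injective
      (FreeGroup.lift (fun i : Fin k => FreeGroup.mk (Wi i)) :
        FreeGroup (Fin k) →* FreeGroup (Fin r))) :
    CoherentGroup (PresentedGroup
      ({FreeGroup.mk (windmillWord r k ε Wi) ^ N} : Set (FreeGroup (Fin r ⊕ Unit)))) := by
  classical
  let c : ℕ → Fin k := fun j => ⟨j % k, Nat.mod_lt _ hk⟩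
  have hc : ∀ j, c (j + k) = c j := fun j => Fin.ext (Nat.add_mod_right j k)
  have hci : ∀ i : Fin k, c i = i := fun i => Fin.ext (Nat.mod_eq_of_lt i.2)
  let e : ℕ → ℤ := fun j => ε (c j)
  have he : ∀ j, e (j + k) = e j := fun j => by simp only [e, hc]
  have hene : ∀ j, e j ≠ 0 := fun j => hε _
  let w : ℕ → FreeGroup (Fin r) := fun j => FreeGroup.mk (Wi (c j))
  have hw : ∀ j, w (j + k) = w j := fun j => by simp only [w, hc]
  set rels : Set (FreeGroup (Fin r ⊕ Unit)) := {FreeGroup.mk (windmillWord r k ε Wi) ^ N}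
    with hrels
  have hrel : FreeGroup.mk (windmillWord r k ε Wi) ^ N =
      prodTo (fun j => FreeGroup.of (Sum.inr ()) ^ e j * FreeGroup.map Sum.inl (w j)) (k * N) := by
    rw [prodTo_periodic_mul _ k (fun j => by simp only [he, hw]), mk_windmillWord r k hk]
  -- the group G
  let t : PresentedGroup rels := PresentedGroup.mk rels (FreeGroup.of (Sum.inr ()))
  let ιA : FreeGroup (Fin r) →* PresentedGroup rels :=
    (PresentedGroup.mk rels).comp (FreeGroup.map Sum.inl)
  have hP1 : prodTo (fun j => t ^ e j * ιA (w j)) (k * N) = 1 := by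
    have h1 : PresentedGroup.mk rels (FreeGroup.mk (windmillWord r k ε Wi) ^ N) = 1 :=
      (QuotientGroup.eq_one_iff _).2 (Subgroup.subset_normalClosure (by simp [hrels]))
    rw [hrel, prodTo_map] at h1
    rw [← h1]
    apply prodTo_congr
    intro j _
    rw [map_mul, map_zpow]
    rfl
  have huniv : ∀ (M : Type) [Group M] (T : M) (α : FreeGroup (Fin r) →* M),
      prodTo (fun j => T ^ e j * α (w j)) (k * N) = 1 →
        ∃ φ : PresentedGroup rels →* M, φ t = T ∧ ∀ a, φ (ιA a) = α a := by
    intro M _ T α hT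
    let f : Fin r ⊕ Unit → M := Sum.elim (fun i => α (FreeGroup.of i)) (fun _ => T)
    have hfα : (FreeGroup.lift f).comp (FreeGroup.map Sum.inl) = α := by
      apply FreeGroup.ext_hom
      intro i
      simp [f]
    have hfα' : ∀ a, FreeGroup.lift f (FreeGroup.map Sum.inl a) = α a :=
      fun a => DFunLike.congr_fun hfα a
    have hf : ∀ x ∈ rels, FreeGroup.lift f x = 1 := by
      intro x hx
      rw [hrels, Set.mem_singleton_iff] at hx
      rw [hx, hrel, prodTo_map, ← hT]
      apply prodTo_congr
      intro j _
      rw [map_mul, map_zpow, hfα', FreeGroup.lift_apply_of]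
      rfl
    refine ⟨PresentedGroup.toGroup hf, ?_, ?_⟩
    · show FreeGroup.lift f (FreeGroup.of (Sum.inr ())) = T
      simp [f]
    · intro a
      exact hfα' a
  have hgen : ∀ H : Subgroup (PresentedGroup rels), t ∈ H → (∀ a, ιA a ∈ H) → ∀ g, g ∈ H := by
    intro H h1 h2 g
    apply PresentedGroup.generated_by rels H
    rintro (i | ⟨⟩)
    · have := h2 (FreeGroup.of i)
      simp only [ιA, MonoidHom.comp_apply, FreeGroup.map.of] at this
      exact this
    · exact h1
  -- the group K
  let relsK : Set (FreeGroup (Fin k ⊕ Unit)) :=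
    {prodTo (fun j => FreeGroup.of (Sum.inr ()) ^ e j * FreeGroup.of (Sum.inl (c j))) (k * N)}
  let K := PresentedGroup relsK
  let τ : K := PresentedGroup.of (Sum.inr ())
  let ξ : ℕ → K := fun j => PresentedGroup.of (Sum.inl (c j))
  have hrelK : prodTo (fun j => τ ^ e j * ξ j) (k * N) = 1 := by
    have h1 : PresentedGroup.mk relsK (prodTo (fun j => FreeGroup.of (Sum.inr ()) ^ e j *
        FreeGroup.of (Sum.inl (c j))) (k * N)) = 1 :=
      (QuotientGroup.eq_one_iff _).2 (Subgroup.subset_normalClosure (by simp [relsK]))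
    rw [prodTo_map] at h1
    rw [← h1]
    apply prodTo_congr
    intro j _
    rw [map_mul, map_zpow]
    rfl
  have hunivK : ∀ (M : Type) [Group M] (T : M) (X : ℕ → M), (∀ j, X (j + k) = X j) →
      prodTo (fun j => T ^ e j * X j) (k * N) = 1 →
      ∃ φ : K →* M, φ τ = T ∧ ∀ j, φ (ξ j) = X j := by
    intro M _ T X hX hT
    have hXc : ∀ j, X (c j) = X j := fun j => by
      have hper : Function.Periodic X k := hX
      exact hper.map_mod_nat j
    let f : Fin k ⊕ Unit → M := Sum.elim (fun i => X i) (fun _ => T)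
    have hf : ∀ x ∈ relsK, FreeGroup.lift f x = 1 := by
      intro x hx
      have hx' : x = _ := hx
      rw [hx', prodTo_map, ← hT]
      apply prodTo_congr
      intro j _
      rw [map_mul, map_zpow, FreeGroup.lift_apply_of, FreeGroup.lift_apply_of, ← hXc]
      rfl
    refine ⟨PresentedGroup.toGroup hf, ?_, ?_⟩
    · exact PresentedGroup.toGroup.of hf
    · intro j
      rw [← hXc]
      exact PresentedGroup.toGroup.of hf
  have hgenK : ∀ H : Subgroup K, τ ∈ H → (∀ j, ξ j ∈ H) → ∀ κ, κ ∈ H := by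
    intro H h1 h2 g
    apply PresentedGroup.generated_by relsK H
    rintro (i | ⟨⟩)
    · have := h2 i
      simp only [ξ, hci] at this
      exact this
    · exact h1
  obtain ⟨ι, hιτ, hιξ⟩ := hunivK _ t (fun j => ιA (w j)) (fun j => by rw [hw]) hP1
  -- the elements x are free in K
  let β : FreeGroup (Fin k) →* K := FreeGroup.lift (fun i : Fin k => ξ i)
  have hβ : Function.Injective β := by
    obtain ⟨M, _, T, X, h1, h2⟩ := exists_free_solution k hk e (fun j _ => hene j)
    obtain ⟨φ, h3, h4⟩ := hunivK M T (fun j => X (c j)) (fun j => by rw [hc]) (by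
      rw [prodTo_periodic_mul _ k (fun j => by simp only [he, hc])]
      have : prodTo (fun j => T ^ e j * X (c j)) k = prodTo (fun j => T ^ e j * X j) k := by
        apply prodTo_congr
        intro j hj
        have : ((c j : Fin k) : ℕ) = j := Nat.mod_eq_of_lt hj
        rw [this]
      rw [this, h1, one_pow])
    have h5 : φ.comp β = FreeGroup.lift (fun i : Fin k => X i) := by
      apply FreeGroup.ext_hom
      intro i
      simp only [β, MonoidHom.comp_apply, FreeGroup.lift_apply_of, h4, hci]
    rw [← h5] at h2
    exact Function.Injective.of_comp (f := φ) (by simpa using h2)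
  obtain ⟨M, _, iA, iK, hiA, hiK, hAK⟩ := exists_amalgam _ β hfree hβ
  have hAK' : ∀ j, iA (w j) = iK (ξ j) := by
    intro j
    have := hAK (FreeGroup.of (c j))
    simp only [β, FreeGroup.lift_apply_of] at this
    have h2 : ξ (c j) = ξ j := by simp only [ξ, hci]
    rw [h2] at this
    exact this
  obtain ⟨Φ, hΦt, hΦA⟩ := huniv M (iK τ) iA (by
    simp only [hAK']
    have := congrArg iK hrelK
    rw [prodTo_map, map_one] at this
    rw [← this]
    apply prodTo_congr
    intro j _
    rw [map_mul, map_zpow])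
  have hιA : Function.Injective ιA := by
    intro a b hab
    apply hiA
    rw [← hΦA, ← hΦA, hab]
  have hΦK : ∀ κ, Φ (ι κ) = iK κ := by
    refine hgenK ((Φ.comp ι).eqLocus iK) ?_ ?_
    · show Φ (ι τ) = iK τ
      rw [hιτ, hΦt]
    · intro j
      show Φ (ι (ξ j)) = iK (ξ j)
      rw [hιξ, hΦA, hAK']
  have hι : Function.Injective ι := by
    intro a b hab
    apply hiK
    rw [← hΦK, ← hΦK, hab]
  have ht : ∀ m : ℤ, t ^ m = 1 → m = 0 := by
    intro m hm
    rw [← hιτ, ← map_zpow] at hm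
    have h1 : τ ^ m = 1 := hι (by rw [hm, map_one])
    obtain ⟨φ, h3, -⟩ := hunivK (Multiplicative ℤ) (Multiplicative.ofAdd 1)
      (fun j => Multiplicative.ofAdd (-e j)) (fun j => by rw [he]) (by
        have : (fun j => Multiplicative.ofAdd (1 : ℤ) ^ e j * Multiplicative.ofAdd (-e j)) =
            fun _ => (1 : Multiplicative ℤ) := by
          funext j
          rw [← ofAdd_zsmul, ← ofAdd_add]
          simp
        rw [this]
        exact (prodTo_map (1 : Multiplicative ℤ →* Multiplicative ℤ) (fun _ => 1) (k * N)).symm)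
    have h2 := congrArg φ h1
    rw [map_zpow, h3, map_one φ, ← ofAdd_zsmul, ofAdd_eq_one] at h2
    simpa using h2
  have : Countable (FreeGroup (Fin r ⊕ Unit)) := FreeGroup.toWord_injective.countable
  have : Countable (PresentedGroup rels) := (PresentedGroup.mk_surjective rels).countable
  intro L hL
  exact abstract_coherence t ht k N hk hN e he (hene 0) ιA hιA w hw hP1 huniv hgen ι hι τ ξ
    hιτ hιξ hunivK hgenK L hL
end

section
/- Let p ≥ 1, r ≥ 1 and n ≥ 1 be integers. Consider the alphabet consisting of letters a_1, …, a_p and b. For each i let ε_i ∈ {+1, −1} and let W_i be a nonempty reduced word in the letters a_1, …, a_p, and set W = b^{ε_1} W_1 b^{ε_2} W_2 ⋯ b^{ε_r} W_r. Suppose that W_1, …, W_r freely generate a subgroup of the free group on a_1, …, a_p (this guarantees the injectivity hypothesis on the separating graph ∂A). Let G = ⟨a_1, …, a_p, b ∣ W^n⟩. Then every nonempty reduced word P over the alphabet {a_1, …, a_p, b} representing the trivial element of G contains a contiguous subword Q for which there exists a word S such that the concatenation Q·S is, as a word, a cyclic conjugate of the word W^n or of the inverse word of W^n, and the letter b (with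 either exponent +1 or −1) occurs at most once in S. -/
/-- The inverse of a word: reverse the list and negate each exponent. -/
def wordInv {α : Type*} (w : List (α × Bool)) : List (α × Bool) :=
  (w.map fun p => (p.1, !p.2)).reverse

/-- The `n`-th power of a word: the word concatenated with itself `n` times. -/
def wordPow {α : Type*} (w : List (α × Bool)) (n : ℕ) : List (α × Bool) :=
  (List.replicate n w).flatten

/-- The word `W = b^{ε₁} W₁ b^{ε₂} W₂ ⋯ b^{ε_r} W_r` over the alphabet
`Fin p ⊕ Unit`, where `Sum.inl i` is the generator `aᵢ`, `Sum.inr ()` is `b`,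
and the Boolean `ε i` records the sign of the exponent `±1` of the `i`-th
occurrence of `b`. -/
def bWord (p r : ℕ) (ε : Fin r → Bool) (Wi : Fin r → List (Fin p × Bool)) :
    List ((Fin p ⊕ Unit) × Bool) :=
  ((List.finRange r).map fun i =>
    ((Sum.inr (), ε i) : (Fin p ⊕ Unit) × Bool) :: embedWord Sum.inl (Wi i)).flatten


/-! ### Amalgamated products -/

/-- Tails of reduced expressions in an amalgamated product. -/
inductive ATail {A B M : Type} [Group A] [Group B] [Group M] (iA : A →* M) (iB : B →* M)
    (KA : Subgroup A) (KB : Subgroup B) : M → Prop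
  | base (a : A) : ATail iA iB KA KB (iA a)
  | cons (a : A) (b : B) (t : M) : a ∉ KA → b ∉ KB → ATail iA iB KA KB t →
      ATail iA iB KA KB (iA a * iB b * t)

/-- The two-element family of groups. -/
def AFam (A B : Type) : Bool → Type
  | true => A
  | false => B

instance AFam.group (A B : Type) [Group A] [Group B] : ∀ i, Group (AFam A B i)
  | true => inferInstanceAs (Group A)
  | false => inferInstanceAs (Group B)

/-- The two-element family of maps. -/
def AFam.map {A B K : Type} [Group A] [Group B] [Group K] (α : K →* A) (β : K →* B) :
    ∀ i, K →* AFam A B i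
  | true => α
  | false => β

theorem amalg_cons_prod {ι H : Type} {G : ι → Type} [∀ i, Group (G i)] [Group H]
    {φ : ∀ i, H →* G i} {i : ι} (g : G i) (w : Monoid.CoprodI.Word G)
    (h1 : w.fstIdx ≠ some i) (h2 : g ≠ 1) :
    Monoid.PushoutI.ofCoprodI (φ := φ) (Monoid.CoprodI.Word.cons g w h1 h2).prod =
      Monoid.PushoutI.of i g * Monoid.PushoutI.ofCoprodI w.prod := by
  simp

theorem amalg_word {A B K : Type} [Group A] [Group B] [Group K] (α : K →* A) (β : K →* B)
    (iA : A →* Monoid.PushoutI (AFam.map α β)) (iB : B →* Monoid.PushoutI (AFam.map α β))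
    (hA : iA = Monoid.PushoutI.of (φ := AFam.map α β) true)
    (hB : iB = Monoid.PushoutI.of (φ := AFam.map α β) false)
    (t : Monoid.PushoutI (AFam.map α β))
    (ht : ATail iA iB α.range β.range t) :
    ∀ b : B, b ∉ β.range → ∃ w : Monoid.CoprodI.Word (AFam A B),
      Monoid.PushoutI.Reduced (AFam.map α β) w ∧
      w.fstIdx = some false ∧ Monoid.PushoutI.ofCoprodI w.prod = iB b * t := by
  have hcomm : ∀ k, iA (α k) = iB (β k) := by
    intro k
    rw [hA, hB]
    exact (Monoid.PushoutI.of_apply_eq_base (AFam.map α β) true k).trans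
      (Monoid.PushoutI.of_apply_eq_base (AFam.map α β) false k).symm
  induction ht with
  | base a =>
    intro b hb
    by_cases ha : a ∈ α.range
    · obtain ⟨k, rfl⟩ := ha
      have hb' : b * β k ∉ β.range := fun h => hb (by
        have := mul_mem h (inv_mem (MonoidHom.mem_range.2 ⟨k, rfl⟩ : β k ∈ β.range))
        simpa using this)
      refine ⟨⟨[⟨false, (b * β k : B)⟩], ?_, ?_⟩, ?_, rfl, ?_⟩
      · simp only [List.mem_singleton, forall_eq]
        rintro h
        exact hb' (h ▸ one_mem _)
      · simp
      · intro g hg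
        simp only [List.mem_singleton] at hg
        subst hg
        exact hb'
      · rw [hcomm, ← map_mul, hB]
        simp only [Monoid.CoprodI.Word.prod, List.map_cons, List.map_nil, List.prod_cons,
          List.prod_nil, mul_one]
        exact Monoid.PushoutI.ofCoprodI_of false _
    · refine ⟨⟨[⟨false, b⟩, ⟨true, a⟩], ?_, ?_⟩, ?_, rfl, ?_⟩
      · simp only [List.mem_cons, List.not_mem_nil, or_false, forall_eq_or_imp, forall_eq]
        exact ⟨fun h => hb (h ▸ one_mem _), fun h => ha (h ▸ one_mem _)⟩
      · simp
      · intro g hg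
        simp only [List.mem_cons, List.not_mem_nil, or_false] at hg
        rcases hg with rfl | rfl
        · exact hb
        · exact ha
      · rw [hA, hB]
        simp only [Monoid.CoprodI.Word.prod, List.map_cons, List.map_nil, List.prod_cons,
          List.prod_nil, mul_one, map_mul]
        exact congrArg₂ (· * ·) (Monoid.PushoutI.ofCoprodI_of false _)
          (Monoid.PushoutI.ofCoprodI_of true _)
  | cons a b' t ha hb' _ ih =>
    intro b hb
    obtain ⟨w, hw, hf, hp⟩ := ih b' hb'
    have ha1 : (a : AFam A B true) ≠ 1 := fun h => ha (h ▸ one_mem _)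
    have hb1 : (b : AFam A B false) ≠ 1 := fun h => hb (h ▸ one_mem _)
    refine ⟨Monoid.CoprodI.Word.cons (i := false) b
      (Monoid.CoprodI.Word.cons (i := true) a w (by rw [hf]; simp) ha1) (by exact fun h => Bool.noConfusion (Option.some.inj h)) hb1,
      ?_, rfl, ?_⟩
    · intro g hg
      simp only [Monoid.CoprodI.Word.cons, List.mem_cons] at hg
      rcases hg with rfl | rfl | hg
      · exact hb
      · exact ha
      · exact hw g hg
    · refine (amalg_cons_prod _ _ _ _).trans ?_
      refine (congrArg (_ * ·) (amalg_cons_prod _ _ _ _)).trans ?_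
      rw [hp, mul_assoc, hA, hB]
      rfl

theorem amalg_exists {A B K : Type} [Group A] [Group B] [Group K] (α : K →* A) (β : K →* B)
    (hα : Function.Injective α) (hβ : Function.Injective β) :
    ∃ (M : Type) (_ : Group M) (iA : A →* M) (iB : B →* M),
      (∀ k, iA (α k) = iB (β k)) ∧ Function.Injective iA ∧
      ∀ t, ATail iA iB α.range β.range t → ∀ b, b ∉ β.range → ∀ a, iB b * t ≠ iA a := by
  have hφ : ∀ i, Function.Injective (AFam.map α β i)
    | true => hα
    | false => hβ
  refine ⟨Monoid.PushoutI (AFam.map α β), inferInstance,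
    Monoid.PushoutI.of (φ := AFam.map α β) true,
    Monoid.PushoutI.of (φ := AFam.map α β) false, ?_, ?_, ?_⟩
  · intro k
    exact (Monoid.PushoutI.of_apply_eq_base (AFam.map α β) true k).trans
      (Monoid.PushoutI.of_apply_eq_base (AFam.map α β) false k).symm
  · exact Monoid.PushoutI.of_injective hφ true
  · intro t ht b hb a hab
    obtain ⟨w, hw, hf, hp⟩ := amalg_word α β _ _ rfl rfl t ht b hb
    by_cases ha : a ∈ α.range
    · obtain ⟨k, rfl⟩ := ha
      have := hw.eq_empty_of_mem_range hφ (by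
        rw [hp, hab]
        exact ⟨k, (Monoid.PushoutI.of_apply_eq_base (AFam.map α β) true k).symm⟩)
      rw [this] at hf
      simp [Monoid.CoprodI.Word.fstIdx] at hf
    · have ha' : a⁻¹ ∉ α.range := fun h => ha (by simpa using inv_mem h)
      have ha1 : (a⁻¹ : AFam A B true) ≠ 1 := fun h => ha' (h ▸ one_mem _)
      have := Monoid.PushoutI.Reduced.eq_empty_of_mem_range hφ (w := Monoid.CoprodI.Word.cons
        (i := true) (a⁻¹ : AFam A B true) w (by rw [hf]; simp) ha1) (by
          intro g hg
          simp only [Monoid.CoprodI.Word.cons, List.mem_cons] at hg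
          rcases hg with rfl | hg
          · exact ha'
          · exact hw g hg) (by
          rw [amalg_cons_prod, hp, hab]
          refine (Subgroup.mem_carrier).1 ?_
          have : (Monoid.PushoutI.of (φ := AFam.map α β) true) (a⁻¹ : AFam A B true) *
            (Monoid.PushoutI.of (φ := AFam.map α β) true) (a : AFam A B true) = 1 := by
            exact ((Monoid.PushoutI.of (φ := AFam.map α β) true).map_mul
              (a⁻¹ : AFam A B true) (a : AFam A B true)).symm.trans
              ((congrArg _ (inv_mul_cancel a)).trans (map_one _))
          exact ⟨1, (map_one _).trans this.symm⟩)
      have h2 := congrArg Monoid.CoprodI.Word.toList this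
      simp [Monoid.CoprodI.Word.cons] at h2

/-! ### The group `E = (ℤ × ℤ/r) * ℤ/N` -/

/-- Sign of a Boolean exponent. -/
def sg (s : Bool) : ℤ := if s then 1 else -1

/-- The element `b ^ c * y ^ i`. -/
def ph {r : ℕ} (c : ℤ) (i : Fin r) : Multiplicative (ℤ × Fin r) := Multiplicative.ofAdd (c, i)

/-- Next index in the direction `s`. -/
def nx {r : ℕ} [NeZero r] (s : Bool) (i : Fin r) : Fin r := if s then i + 1 else i - 1

/-- Sign of the `b` that follows the `i`-th letter in the direction `s`. -/
def dl {r : ℕ} [NeZero r] (ε : Fin r → Bool) (s : Bool) (i : Fin r) : Bool :=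
  if s then ε (i + 1) else !(ε i)

/-- The part of a letter before `u`. -/
def preP {r : ℕ} [NeZero r] (ε : Fin r → Bool) (i : Fin r) (s : Bool) :
    Multiplicative (ℤ × Fin r) :=
  if s then ph (-sg (ε i)) (-i) else ph 0 (-(i + 1))

/-- The part of a letter after `u`. -/
def postP {r : ℕ} [NeZero r] (ε : Fin r → Bool) (i : Fin r) (s : Bool) :
    Multiplicative (ℤ × Fin r) :=
  if s then ph 0 (i + 1) else ph (sg (ε i)) i

theorem sg_inj {s t : Bool} (h : sg s = sg t) : s = t := by
  cases s <;> cases t <;> simp [sg] at h ⊢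

theorem sg_not (s : Bool) : sg (!s) = - sg s := by
  cases s <;> simp [sg]

theorem sg_mul_self (s : Bool) : sg s * sg s = 1 := by
  cases s <;> simp [sg]

theorem ph_mul {r : ℕ} [NeZero r] (c d : ℤ) (i j : Fin r) :
    ph c i * ph d j = ph (c + d) (i + j) := rfl

theorem ph_eq_one {r : ℕ} [NeZero r] {c : ℤ} {i : Fin r} :
    ph c i = 1 ↔ c = 0 ∧ i = 0 := by
  constructor
  · intro h
    have h2 : ((c, i) : ℤ × Fin r) = 0 := h
    exact ⟨congrArg Prod.fst h2, congrArg Prod.snd h2⟩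
  · rintro ⟨rfl, rfl⟩
    rfl

theorem mid_eq_one {r : ℕ} [NeZero r] (ε : Fin r → Bool) (i j : Fin r) (s t : Bool) (m : ℤ)
    (h : postP ε j t * (ph m 0 * preP ε i s) = 1) :
    (s = t ∧ i = nx t j ∧ m = sg (dl ε t j)) ∨ (s ≠ t ∧ i = j ∧ m = 0) := by
  cases s <;> cases t <;>
    simp only [postP, preP, ph_mul, ph_eq_one, if_true, if_false, Bool.false_eq_true, zero_add,
      add_zero] at h <;> obtain ⟨h1, h2⟩ := h
  · left
    refine ⟨rfl, ?_, ?_⟩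
    · simp only [nx, Bool.false_eq_true, if_false]
      rw [← sub_eq_add_neg, sub_eq_zero] at h2
      rw [h2]; abel
    · simp only [dl, Bool.false_eq_true, if_false, sg_not]
      linarith
  · right
    refine ⟨by simp, ?_, h1⟩
    rw [← sub_eq_add_neg, sub_eq_zero] at h2
    exact (add_right_cancel h2).symm
  · right
    rw [← sub_eq_add_neg, sub_eq_zero] at h2
    subst h2
    exact ⟨by simp, rfl, by linarith⟩
  · left
    rw [← sub_eq_add_neg, sub_eq_zero] at h2
    refine ⟨rfl, ?_, ?_⟩
    · simp [nx, h2]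
    · simp only [dl, if_true, h2]
      linarith

/-- A run of `k` letters of the relator. -/
def Run {r : ℕ} [NeZero r] (ε : Fin r → Bool) : Bool → Fin r → ℕ →
    List (Fin r × Bool) → List (Bool × FreeGroup (Fin r)) → Prop
  | _, _, 0, _, _ => False
  | s, i, 1, κ, _ => ∃ κ', κ = (i, s) :: κ'
  | s, i, (k + 2), κ, l => κ = [(i, s)] ∧ ∃ k1 l', l = (dl ε s i, k1) :: l' ∧
      Run ε s (nx s i) (k + 1) k1.toWord l'

/-- The structured pattern with `q` occurrences of `b`. -/
def BPat {r : ℕ} [NeZero r] {V : Type} (ε : Fin r → Bool) (w : Bool → Fin r → V) :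
    Bool → Fin r → ℕ → List (Bool × V) → Prop
  | _, _, 0, _ => True
  | s, i, (q + 1), l => ∃ v l', l = (dl ε s i, v) :: l' ∧
      (q = 0 ∨ (v = w s (nx s i) ∧ BPat ε w s (nx s i) q l'))

/-- No suffix starts with the pattern. -/
def NoPat {r : ℕ} [NeZero r] {V : Type} (ε : Fin r → Bool) (w : Bool → Fin r → V) (q : ℕ)
    (l : List (Bool × V)) : Prop :=
  ∀ t, t <:+ l → ∀ s i, ¬ BPat ε w s i q t

/-- Reduced structured words. -/
def SRed {V : Type} [One V] (l : List (Bool × V)) : Prop :=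
  l.IsChain (fun p q => p.2 = 1 → q.1 = p.1)

/-- Letters of the free group. -/
def wK {r : ℕ} (s : Bool) (i : Fin r) : FreeGroup (Fin r) := FreeGroup.mk [(i, s)]

theorem Run.bPat {r : ℕ} [NeZero r] (ε : Fin r → Bool) (s : Bool) (k : ℕ) :
    ∀ (i : Fin r) (κ : List (Fin r × Bool)) (l : List (Bool × FreeGroup (Fin r))),
    Run ε s i (k + 1) κ l → BPat ε wK s i k l := by
  induction k with
  | zero => intro i κ l _; trivial
  | succ k ih =>
    intro i κ l h
    obtain ⟨h1, k1, l', rfl, h2⟩ := h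
    refine ⟨k1, l', rfl, ?_⟩
    rcases k with _ | k
    · exact Or.inl rfl
    · right
      refine ⟨?_, ih _ _ _ h2⟩
      obtain ⟨h3, -⟩ := h2
      rw [wK, ← h3, FreeGroup.mk_toWord]

theorem NoPat.tail {r : ℕ} [NeZero r] {V : Type} {ε : Fin r → Bool} {w : Bool → Fin r → V}
    {q : ℕ} {x : Bool × V} {l : List (Bool × V)} (h : NoPat ε w q (x :: l)) : NoPat ε w q l :=
  fun t ht => h t (ht.trans (List.suffix_cons x l))

section E

variable {r N : ℕ} [NeZero r] (ε : Fin r → Bool) {E : Type} [Group E]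
  (iP : Multiplicative (ℤ × Fin r) →* E) (iC : Multiplicative (ZMod N) →* E)

/-- Powers of the element `u`. -/
def uu (k : ℤ) : E := iC (Multiplicative.ofAdd (k : ZMod N))

theorem uu_add (k l : ℤ) : uu iC (k + l) = uu iC k * uu iC l := by
  simp [uu, ofAdd_add]

/-- The map from the free group of rank `r`. -/
def psi : FreeGroup (Fin r) →* E :=
  FreeGroup.lift fun i => iP (ph (-sg (ε i)) (-i)) * uu iC 1 * iP (ph 0 (i + 1))

theorem psi_letter (i : Fin r) (s : Bool) :
    psi ε iP iC (FreeGroup.mk [(i, s)]) =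
      iP (preP ε i s) * uu iC (sg s) * iP (postP ε i s) := by
  cases s
  · have h1 : (ph (-sg (ε i)) (-i))⁻¹ = ph (sg (ε i)) i := by
      apply inv_eq_of_mul_eq_one_right
      rw [ph_mul, ph_eq_one]; simp
    have h2 : (ph 0 (i + 1))⁻¹ = ph 0 (-(i + 1)) := by
      apply inv_eq_of_mul_eq_one_right
      rw [ph_mul, ph_eq_one]; simp
    have h3 : (uu iC 1)⁻¹ = uu iC (-1) := by
      apply inv_eq_of_mul_eq_one_right
      rw [← uu_add]; simp [uu]
    simp only [psi, FreeGroup.lift_mk, List.map_cons, List.map_nil, List.prod_cons,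
      List.prod_nil, cond_false, mul_one, mul_inv_rev, preP, postP, sg, Bool.false_eq_true,
      if_false]
    rw [← map_inv, ← map_inv, h3, h2]
    simp only [sg] at h1
    rw [h1, mul_assoc]
  · simp [psi, preP, postP, sg]

/-- Value of a structured word. -/
def evalL {V M : Type} [Group M] (B : Bool → M) (f : V → M) (l : List (Bool × V)) : M :=
  (l.map fun x => B x.1 * f x.2).prod

/-- The image of `b` in `E`. -/
def bE (δ : Bool) : E := iP (ph (sg δ) 0)

/-- Value in `E`. -/
def evE (l : List (Bool × FreeGroup (Fin r))) : E := evalL (bE iP) (psi ε iP iC) l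

/-- Invariant for a nonempty word `κ` followed by `l`. -/
def InvK (κ : List (Fin r × Bool)) (l : List (Bool × FreeGroup (Fin r))) (g : E) : Prop :=
  ∃ i s, ∃ (k : ℕ) (t : E), Run ε s i k κ l ∧ (∃ κ', κ = (i, s) :: κ') ∧ 1 ≤ k ∧ k < N ∧
    ATail iP iC ⊥ ⊥ t ∧ g = iP (preP ε i s) * (uu iC (sg s * k) * t)

/-- Invariant for a word that starts with `b`. -/
def InvB : List (Bool × FreeGroup (Fin r)) → E → Prop
  | [], g => g = 1
  | (δ, k1) :: l', g => ∃ m : ℤ, 1 ≤ sg δ * m ∧ (g = iP (ph m 0) ∨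
      ∃ i s, ∃ (k : ℕ) (t : E), 1 ≤ k ∧ k < N ∧ ATail iP iC ⊥ ⊥ t ∧
        g = iP (ph m 0) * (iP (preP ε i s) * (uu iC (sg s * k) * t)) ∧
        (m = sg δ → Run ε s i k k1.toWord l'))

theorem uu_not_mem (s : Bool) (k : ℕ) (h1 : 1 ≤ k) (h2 : k < N) :
    Multiplicative.ofAdd ((sg s * k : ℤ) : ZMod N) ∉ (⊥ : Subgroup (Multiplicative (ZMod N))) := by
  rw [Subgroup.mem_bot]
  intro h
  have h3 : ((sg s * k : ℤ) : ZMod N) = 0 := h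
  rw [ZMod.intCast_zmod_eq_zero_iff_dvd] at h3
  have h4 : (N : ℤ) ∣ k := by
    have := Dvd.dvd.mul_left h3 (sg s)
    rwa [← mul_assoc, sg_mul_self, one_mul] at this
  have h5 := Nat.le_of_dvd h1 (Int.natCast_dvd_natCast.1 h4)
  omega

theorem InvK.cons_letter (hN : 2 ≤ N) {κ : List (Fin r × Bool)}
    {l : List (Bool × FreeGroup (Fin r))} {g : E} (j : Fin r) (t : Bool)
    (hred : FreeGroup.IsReduced ((j, t) :: κ)) (h : InvK ε iP iC κ l g) :
    InvK ε iP iC ((j, t) :: κ) l (psi ε iP iC (FreeGroup.mk [(j, t)]) * g) := by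
  obtain ⟨i, s, k, τ, hrun, ⟨κ', rfl⟩, hk1, hk2, hτ, rfl⟩ := h
  refine ⟨j, t, 1, iP (postP ε j t * (ph 0 0 * preP ε i s)) * uu iC (sg s * k) * τ, ⟨_, rfl⟩,
    ⟨_, rfl⟩, le_rfl, by omega, ?_, ?_⟩
  · refine ATail.cons _ _ _ ?_ (uu_not_mem s k hk1 hk2) hτ
    rw [Subgroup.mem_bot]
    intro h1
    have hred := List.isChain_cons_cons.1 hred
    rcases mid_eq_one _ _ _ _ _ _ h1 with ⟨-, -, h2⟩ | ⟨h2, h3, -⟩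
    · generalize dl ε t j = d at h2
      cases d <;> simp [sg] at h2
    · exact h2 (hred.1 h3.symm).symm
  · have h0 : (ph 0 0 : Multiplicative (ℤ × Fin r)) = 1 := ph_eq_one.2 ⟨rfl, rfl⟩
    rw [psi_letter, h0]
    simp [mul_assoc]

theorem InvB.cons_letter (hN : 2 ≤ N)
    {l : List (Bool × FreeGroup (Fin r))} {g : E} (j : Fin r) (t : Bool)
    (hpat : NoPat ε wK (N - 1) l) (h : InvB ε iP iC l g) :
    InvK ε iP iC [(j, t)] l (psi ε iP iC (FreeGroup.mk [(j, t)]) * g) := by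
  rcases l with _ | ⟨⟨δ, k1⟩, l'⟩
  · have h : g = 1 := h
    subst h
    refine ⟨j, t, 1, iP (postP ε j t), ⟨_, rfl⟩, ⟨_, rfl⟩, le_rfl, by omega, ATail.base _, ?_⟩
    rw [psi_letter]
    simp [mul_assoc]
  · obtain ⟨m, hm, rfl | ⟨i, s, k, τ, hk1, hk2, hτ, rfl, hrun⟩⟩ := h
    · refine ⟨j, t, 1, iP (postP ε j t * ph m 0), ⟨_, rfl⟩, ⟨_, rfl⟩, le_rfl, by omega,
        ATail.base _, ?_⟩
      rw [psi_letter]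
      simp [mul_assoc]
    · by_cases h1 : postP ε j t * (ph m 0 * preP ε i s) = 1
      · rcases mid_eq_one _ _ _ _ _ _ h1 with ⟨rfl, rfl, h2⟩ | ⟨-, -, rfl⟩
        · have hδ : dl ε s j = δ := by
            rw [h2] at hm
            generalize dl ε s j = d at hm ⊢
            cases d <;> cases δ <;> simp [sg] at hm ⊢
          rw [hδ] at h2
          have hr := hrun h2
          have hr2 : Run ε s j (k + 1) [(j, s)] ((δ, k1) :: l') := by
            obtain ⟨k, rfl⟩ : ∃ k', k = k' + 1 := ⟨k - 1, by omega⟩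
            exact ⟨rfl, k1, l', by rw [hδ], hr⟩
          have hkN : k + 1 ≠ N := by
            intro h3
            refine hpat _ List.suffix_rfl s j ?_
            have := hr2.bPat
            rwa [show N - 1 = k by omega]
          refine ⟨j, s, k + 1, τ, hr2, ⟨_, rfl⟩, by omega, by omega, hτ, ?_⟩
          rw [psi_letter]
          have h4 : iP (postP ε j s) * (iP (ph m 0) * iP (preP ε (nx s j) s)) = 1 := by
            rw [← map_mul, ← map_mul, h1, map_one]
          have h5 : uu iC (sg s * (k + 1 : ℕ)) = uu iC (sg s) * uu iC (sg s * k) := by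
            rw [← uu_add]; congr 1; push_cast; ring
          calc _ = iP (preP ε j s) * uu iC (sg s) * (iP (postP ε j s) *
                (iP (ph m 0) * iP (preP ε (nx s j) s))) * (uu iC (sg s * k) * τ) := by
                simp only [mul_assoc]
            _ = _ := by rw [h4, h5]; simp only [mul_assoc, mul_one]
        · simp at hm
      · refine ⟨j, t, 1, iP (postP ε j t * (ph m 0 * preP ε i s)) * uu iC (sg s * k) * τ,
          ⟨_, rfl⟩, ⟨_, rfl⟩, le_rfl, by omega, ?_, ?_⟩
        · exact ATail.cons _ _ _ (by rwa [Subgroup.mem_bot]) (uu_not_mem s k hk1 hk2) hτ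
        · rw [psi_letter]
          simp [mul_assoc]

theorem InvB.invK (hN : 2 ≤ N)
    {l : List (Bool × FreeGroup (Fin r))} {g : E}
    (hpat : NoPat ε wK (N - 1) l) (h : InvB ε iP iC l g) (κ : List (Fin r × Bool))
    (hne : κ ≠ []) (hred : FreeGroup.IsReduced κ) :
    InvK ε iP iC κ l (psi ε iP iC (FreeGroup.mk κ) * g) := by
  induction κ with
  | nil => exact absurd rfl hne
  | cons x κ ih =>
    obtain ⟨j, t⟩ := x
    by_cases hκ : κ = []
    · subst hκ
      exact InvB.cons_letter ε iP iC hN j t hpat h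
    · have h1 := InvK.cons_letter ε iP iC hN j t hred
        (ih hκ (List.IsChain.tail hred))
      rwa [← mul_assoc, ← map_mul, FreeGroup.mul_mk] at h1

theorem evE_invB (hN : 2 ≤ N) (l : List (Bool × FreeGroup (Fin r)))
    (hred : SRed l) (hpat : NoPat ε wK (N - 1) l) : InvB ε iP iC l (evE ε iP iC l) := by
  induction l with
  | nil => exact rfl
  | cons x l ih =>
    obtain ⟨δ, k1⟩ := x
    have ih := ih hred.tail hpat.tail
    have hev : evE ε iP iC ((δ, k1) :: l) = iP (ph (sg δ) 0) * (psi ε iP iC k1 * evE ε iP iC l) := by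
      simp [evE, evalL, bE, mul_assoc]
    rw [hev]
    by_cases hk : k1 = 1
    · subst hk
      rw [map_one, one_mul]
      rcases l with _ | ⟨⟨δ', k2⟩, l⟩
      · refine ⟨sg δ, by rw [sg_mul_self], Or.inl ?_⟩
        simp [evE, evalL]
      · have hδ : δ' = δ := (List.isChain_cons_cons.1 hred).1 rfl
        subst hδ
        obtain ⟨m, hm, h⟩ := ih
        have hadd : ph (sg δ' + m) (0 : Fin r) = ph (sg δ') 0 * ph m 0 := by
          rw [ph_mul]; simp
        refine ⟨sg δ' + m, by rw [mul_add, sg_mul_self]; linarith, ?_⟩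
        rcases h with h | ⟨i, s, k, τ, hk1, hk2, hτ, h, -⟩
        · left
          rw [h, hadd, map_mul]
        · right
          refine ⟨i, s, k, τ, hk1, hk2, hτ, ?_, ?_⟩
          · rw [h, hadd, map_mul, mul_assoc]
          · intro h2
            have : m = 0 := by linarith
            simp [this] at hm
    · have hk' : k1.toWord ≠ [] := fun h => hk (FreeGroup.toWord_eq_nil_iff.1 h)
      have h := InvB.invK ε iP iC hN hpat.tail ih k1.toWord hk' FreeGroup.isReduced_toWord
      rw [FreeGroup.mk_toWord] at h
      obtain ⟨i, s, k, τ, hrun, -, hk1, hk2, hτ, h⟩ := h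
      refine ⟨sg δ, by rw [sg_mul_self], Or.inr ⟨i, s, k, τ, hk1, hk2, hτ, ?_, fun _ => hrun⟩⟩
      rw [h]

theorem evE_ne_one (hN : 2 ≤ N) (hinj : Function.Injective iP)
    (hT : ∀ t, ATail iP iC ⊥ ⊥ t → ∀ b, b ∉ (⊥ : Subgroup (Multiplicative (ZMod N))) →
      ∀ a, iC b * t ≠ iP a)
    (l : List (Bool × FreeGroup (Fin r))) (hne : l ≠ [])
    (hred : SRed l) (hpat : NoPat ε wK (N - 1) l) : evE ε iP iC l ≠ 1 := by
  have h := evE_invB ε iP iC hN l hred hpat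
  rcases l with _ | ⟨⟨δ, k1⟩, l⟩
  · exact absurd rfl hne
  obtain ⟨m, hm, h | ⟨i, s, k, τ, hk1, hk2, hτ, h, -⟩⟩ := h
  · rw [h]
    intro h1
    rw [← map_one iP] at h1
    have := (ph_eq_one.1 (hinj h1)).1
    simp [this] at hm
  · rw [h]
    intro h1
    refine hT τ hτ _ (uu_not_mem s k hk1 hk2) ((ph m 0 * preP ε i s)⁻¹) ?_
    rw [← mul_assoc, ← map_mul] at h1
    rw [map_inv]
    exact (inv_eq_of_mul_eq_one_right h1).symm

theorem psi_injective (hN : 2 ≤ N)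
    (hT : ∀ t, ATail iP iC ⊥ ⊥ t → ∀ b, b ∉ (⊥ : Subgroup (Multiplicative (ZMod N))) →
      ∀ a, iC b * t ≠ iP a) : Function.Injective (psi ε iP iC) := by
  rw [injective_iff_map_eq_one]
  intro x hx
  by_contra hne
  have hpat : NoPat ε wK (N - 1) ([] : List (Bool × FreeGroup (Fin r))) := by
    intro t ht s i hb
    have : t = [] := List.suffix_nil.1 ht
    subst this
    obtain ⟨q, hq⟩ : ∃ q, N - 1 = q + 1 := ⟨N - 2, by omega⟩
    rw [hq] at hb
    obtain ⟨v, l', h, -⟩ := hb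
    simp at h
  have h := InvB.invK ε iP iC hN (l := []) (g := 1) hpat rfl x.toWord
    (fun h => hne (FreeGroup.toWord_eq_nil_iff.1 h)) FreeGroup.isReduced_toWord
  rw [FreeGroup.mk_toWord, hx, mul_one] at h
  obtain ⟨i, s, k, τ, -, -, hk1, hk2, hτ, h⟩ := h
  refine hT τ hτ _ (uu_not_mem s k hk1 hk2) ((preP ε i s)⁻¹) ?_
  rw [map_inv]
  exact (inv_eq_of_mul_eq_one_right h.symm).symm

end E

/-! ### The amalgam `F *_K E` -/

theorem bPat_transfer {r : ℕ} [NeZero r] {V V' : Type} (ε : Fin r → Bool)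
    (w : Bool → Fin r → V) (w' : Bool → Fin r → V') (f : V → V')
    (hf : ∀ s i, f (w s i) = w' s i) (s : Bool) (δ : Bool) (k : V) (v : V')
    (l2 : List (Bool × V')) (t1 : List (Bool × V)) :
    ∀ (i : Fin r) (q : ℕ), BPat ε w s i q (t1 ++ [(δ, k)]) →
      BPat ε w' s i q (t1.map (fun x => (x.1, f x.2)) ++ (δ, v) :: l2) := by
  induction t1 with
  | nil =>
    intro i q h
    rcases q with _ | q
    · trivial
    obtain ⟨v', l', h1, h2⟩ := h
    simp only [List.nil_append, List.cons.injEq, Prod.mk.injEq] at h1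
    obtain ⟨⟨rfl, rfl⟩, rfl⟩ := h1
    refine ⟨v, l2, rfl, ?_⟩
    rcases h2 with h2 | ⟨-, h2⟩
    · exact Or.inl h2
    · rcases q with _ | q
      · exact Or.inl rfl
      · obtain ⟨_, _, h3, -⟩ := h2
        simp at h3
  | cons x t1 ih =>
    intro i q h
    rcases q with _ | q
    · trivial
    obtain ⟨v', l', h1, h2⟩ := h
    simp only [List.cons_append, List.cons.injEq] at h1
    obtain ⟨rfl, rfl⟩ := h1
    refine ⟨f v', _, rfl, ?_⟩
    rcases h2 with h2 | ⟨rfl, h2⟩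
    · exact Or.inl h2
    · exact Or.inr ⟨hf _ _, ih _ _ h2⟩

theorem noPat_block {r : ℕ} [NeZero r] {V V' : Type} (ε : Fin r → Bool)
    (w : Bool → Fin r → V) (w' : Bool → Fin r → V') (f : V → V')
    (hf : ∀ s i, f (w s i) = w' s i) (δ : Bool) (k : V) (v : V')
    (l2 : List (Bool × V')) (l1 : List (Bool × V)) (q : ℕ) (hq : 1 ≤ q)
    (h : NoPat ε w' q (l1.map (fun x => (x.1, f x.2)) ++ (δ, v) :: l2)) :
    NoPat ε w q (l1 ++ [(δ, k)]) := by
  intro t ht s i hb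
  obtain ⟨u, hu⟩ := ht
  rcases List.eq_nil_or_concat t with rfl | ⟨t1, x, rfl⟩
  · obtain ⟨q, rfl⟩ : ∃ q', q = q' + 1 := ⟨q - 1, by omega⟩
    obtain ⟨_, _, h3, -⟩ := hb
    simp at h3
  · rw [List.concat_eq_append] at hu hb
    rw [← List.append_assoc] at hu
    have h1 := List.append_inj' hu rfl
    obtain ⟨rfl, h2⟩ := h1
    simp only [List.cons.injEq, and_true] at h2
    subst h2
    refine h _ ?_ s i (bPat_transfer ε w w' f hf s δ k v l2 t1 i q hb)
    refine ⟨u.map (fun x => (x.1, f x.2)), ?_⟩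
    simp

theorem sRed_block {V V' : Type} [Group V] [Group V'] (f : V →* V')
    (δ : Bool) (k : V) (v : V') (l2 : List (Bool × V')) (l1 : List (Bool × V))
    (h : SRed (l1.map (fun x => (x.1, f x.2)) ++ (δ, v) :: l2)) : SRed (l1 ++ [(δ, k)]) := by
  induction l1 with
  | nil => exact List.isChain_singleton _
  | cons x l1 ih =>
    have ih := ih h.tail
    rcases l1 with _ | ⟨y, l1⟩
    · refine List.isChain_cons_cons.2 ⟨?_, ih⟩
      intro h1
      exact (List.isChain_cons_cons.1 h).1 (by simp [h1])
    · refine List.isChain_cons_cons.2 ⟨?_, ih⟩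
      intro h1
      exact (List.isChain_cons_cons.1 h).1 (by simp [h1])

theorem block_decomp {r : ℕ} [NeZero r] {F E M : Type} [Group F] [Group E] [Group M]
    (ε : Fin r → Bool) (α : FreeGroup (Fin r) →* F)
    (ψ : FreeGroup (Fin r) →* E) (bb : Bool → E) (iF : F →* M) (iE : E →* M)
    (hcomm : ∀ k, iF (α k) = iE (ψ k))
    (wF : Bool → Fin r → F) (hw : ∀ s i, α (wK s i) = wF s i) (q : ℕ) (hq : 1 ≤ q)
    (hev : ∀ l : List (Bool × FreeGroup (Fin r)), l ≠ [] → SRed l → NoPat ε wK q l →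
      evalL bb ψ l ≠ 1)
    (l : List (Bool × F)) (hne : l ≠ []) (hred : SRed l) (hpat : NoPat ε wF q l) :
    ∃ (l1 : List (Bool × FreeGroup (Fin r))) (δ : Bool) (v : F) (l2 : List (Bool × F)) (t : M),
      l = l1.map (fun x => (x.1, α x.2)) ++ (δ, v) :: l2 ∧
      ATail iF iE α.range ψ.range t ∧ evalL bb ψ l1 * bb δ ∉ ψ.range ∧
      evalL (fun d => iE (bb d)) iF l = iE (evalL bb ψ l1 * bb δ) * t := by
  have hnot : ∀ (l1 : List (Bool × FreeGroup (Fin r))) (δ : Bool) (v : F) (l2 : List (Bool × F)),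
      SRed (l1.map (fun x => (x.1, α x.2)) ++ (δ, v) :: l2) →
      NoPat ε wF q (l1.map (fun x => (x.1, α x.2)) ++ (δ, v) :: l2) →
      evalL bb ψ l1 * bb δ ∉ ψ.range := by
    intro l1 δ v l2 h1 h2 ⟨k, hk⟩
    refine hev (l1 ++ [(δ, k⁻¹)]) (by simp) (sRed_block α _ _ _ _ _ h1)
      (noPat_block ε wK wF α hw _ _ _ _ _ q hq h2) ?_
    have : evalL bb ψ (l1 ++ [(δ, k⁻¹)]) = evalL bb ψ l1 * bb δ * (ψ k)⁻¹ := by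
      simp [evalL, mul_assoc]
    rw [this, hk, mul_inv_cancel]
  induction l with
  | nil => exact absurd rfl hne
  | cons x l ih =>
    obtain ⟨δ, v⟩ := x
    by_cases hl : l = []
    · subst hl
      refine ⟨[], δ, v, [], iF v, rfl, ATail.base _, hnot [] δ v [] hred hpat, ?_⟩
      simp [evalL]
    · obtain ⟨l1, δ', v', l2, t, rfl, ht, hn, he⟩ := ih hl hred.tail hpat.tail
      by_cases hv : v ∈ α.range
      · obtain ⟨k, rfl⟩ := hv
        refine ⟨(δ, k) :: l1, δ', v', l2, t, rfl, ht, hnot ((δ, k) :: l1) δ' v' l2 hred hpat, ?_⟩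
        have : ∀ l, evalL (fun d => iE (bb d)) iF ((δ, α k) :: l) =
            iE (bb δ) * iF (α k) * evalL (fun d => iE (bb d)) iF l := by
          intro l; simp [evalL]
        rw [this, he, hcomm]
        simp [evalL, mul_assoc]
      · refine ⟨[], δ, v, _, iF v * iE (evalL bb ψ l1 * bb δ') * t, rfl,
          ATail.cons _ _ _ hv hn ht, hnot [] δ v _ hred hpat, ?_⟩
        have : ∀ l, evalL (fun d => iE (bb d)) iF ((δ, v) :: l) =
            iE (bb δ) * iF v * evalL (fun d => iE (bb d)) iF l := by
          intro l; simp [evalL]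
        rw [this, he]
        simp [evalL, mul_assoc]

theorem main_struct (r N : ℕ) [NeZero r] (hN : 2 ≤ N) (ε : Fin r → Bool) {F : Type} [Group F]
    (α : FreeGroup (Fin r) →* F) (hα : Function.Injective α)
    (wF : Bool → Fin r → F) (hw : ∀ s i, α (wK s i) = wF s i) :
    ∃ (M : Type) (_ : Group M) (iF : F →* M) (B : Bool → M) (Y : Fin r → M) (U : M),
      Function.Injective iF ∧ B false = (B true)⁻¹ ∧ U ^ N = 1 ∧
      (∀ i, B (ε i) * iF (wF true i) = (Y i)⁻¹ * U * Y (i + 1)) ∧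
      ∀ l : List (Bool × F), l ≠ [] → SRed l → NoPat ε wF (N - 1) l →
        ∀ a, evalL B iF l ≠ iF a := by
  obtain ⟨E, _, iP, iC, -, hinj, hT⟩ := amalg_exists
    (1 : PUnit.{1} →* Multiplicative (ℤ × Fin r)) (1 : PUnit.{1} →* Multiplicative (ZMod N))
    (fun _ _ _ => rfl) (fun _ _ _ => rfl)
  rw [MonoidHom.range_one, MonoidHom.range_one] at hT
  obtain ⟨M, _, iF, iE, hcomm, hiF, hT2⟩ := amalg_exists α (psi ε iP iC) hα
    (psi_injective ε iP iC hN hT)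
  refine ⟨M, inferInstance, iF, fun d => iE (bE iP d), fun i => iE (iP (ph 0 i)),
    iE (uu iC 1), hiF, ?_, ?_, ?_, ?_⟩
  · change iE (iP (ph (sg false) 0)) = (iE (iP (ph (sg true) 0)))⁻¹
    rw [← map_inv, ← map_inv]
    congr 2
    symm
    apply inv_eq_of_mul_eq_one_right
    rw [ph_mul, ph_eq_one]
    simp [sg]
  · rw [← map_pow, uu, ← map_pow, ← ofAdd_nsmul]
    simp
  · intro i
    have h2 : (ph 0 i)⁻¹ = ph 0 (-i) := by
      apply inv_eq_of_mul_eq_one_right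
      rw [ph_mul, ph_eq_one]; simp
    rw [← hw, hcomm, ← map_mul, ← map_inv, ← map_mul, ← map_mul, wK, psi_letter]
    congr 1
    rw [← map_inv, h2, bE, ← mul_assoc, ← mul_assoc, ← map_mul]
    simp [preP, postP, ph_mul, sg]
  · intro l hne hred hpat a
    obtain ⟨l1, δ, v, l2, t, -, ht, hn, he⟩ := block_decomp ε α (psi ε iP iC) (bE iP) iF iE hcomm
      wF hw (N - 1) (by omega) (evE_ne_one ε iP iC hN hinj hT) l hne hred hpat
    rw [he]
    exact hT2 t ht _ hn a

/-! ### Words -/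

section Words

variable {p r : ℕ}

/-- The letter `b`. -/
def bl (δ : Bool) : (Fin p ⊕ Unit) × Bool := (Sum.inr (), δ)

/-- The word `W_i` or its inverse. -/
def wd (Wi : Fin r → List (Fin p × Bool)) (s : Bool) (i : Fin r) : List (Fin p × Bool) :=
  if s then Wi i else wordInv (Wi i)

/-- One block of the relator. -/
def blk [NeZero r] (ε : Fin r → Bool) (Wi : Fin r → List (Fin p × Bool)) (s : Bool)
    (i : Fin r) : List ((Fin p ⊕ Unit) × Bool) :=
  bl (dl ε s i) :: embedWord Sum.inl (wd Wi s (nx s i))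

/-- Blocks of the relator. -/
def Bls [NeZero r] (ε : Fin r → Bool) (Wi : Fin r → List (Fin p × Bool)) (s : Bool) :
    ℕ → Fin r → List ((Fin p ⊕ Unit) × Bool)
  | 0, _ => []
  | q + 1, i => blk ε Wi s i ++ Bls ε Wi s q (nx s i)

/-- Blocks of the relator, without the last `W`. -/
def Qw [NeZero r] (ε : Fin r → Bool) (Wi : Fin r → List (Fin p × Bool)) (s : Bool) :
    ℕ → Fin r → List ((Fin p ⊕ Unit) × Bool)
  | 0, _ => []
  | 1, i => [bl (dl ε s i)]
  | q + 2, i => blk ε Wi s i ++ Qw ε Wi s (q + 1) (nx s i)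

/-- Structured words to words. -/
def unp (l : List (Bool × List (Fin p × Bool))) : List ((Fin p ⊕ Unit) × Bool) :=
  (l.map fun x => bl x.1 :: embedWord Sum.inl x.2).flatten

theorem wordReduced_iff {α : Type*} (w : List (α × Bool)) :
    WordReduced w ↔ FreeGroup.IsReduced w := by
  have : (fun p q : α × Bool => ¬(p.1 = q.1 ∧ p.2 = !q.2)) = fun p q => p.1 = q.1 → p.2 = q.2 := by
    funext a b
    obtain ⟨a1, a2⟩ := a
    obtain ⟨b1, b2⟩ := b
    cases a2 <;> cases b2 <;> simp
  unfold WordReduced FreeGroup.IsReduced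
  rw [← this]
  exact Iff.rfl

theorem count_embed (w : List (Fin p × Bool)) :
    (embedWord (Sum.inl : Fin p → Fin p ⊕ Unit) w).countP
      (fun q => decide (q.1 = (Sum.inr () : Fin p ⊕ Unit))) = 0 := by
  rw [List.countP_eq_zero]
  intro a ha
  simp only [embedWord, List.mem_map] at ha
  obtain ⟨x, -, rfl⟩ := ha
  simp

theorem Bls_eq_Qw [NeZero r] (ε : Fin r → Bool) (Wi : Fin r → List (Fin p × Bool)) (s : Bool)
    (q : ℕ) : ∀ i : Fin r, ∃ S, Bls ε Wi s (q + 1) i = Qw ε Wi s q i ++ S ∧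
      S.countP (fun q => decide (q.1 = (Sum.inr () : Fin p ⊕ Unit))) ≤ 1 := by
  induction q with
  | zero =>
    intro i
    refine ⟨blk ε Wi s i, by simp [Bls, Qw], ?_⟩
    simp [blk, count_embed, bl]
  | succ q ih =>
    intro i
    rcases q with _ | q
    · refine ⟨embedWord Sum.inl (wd Wi s (nx s i)) ++ blk ε Wi s (nx s i), ?_, ?_⟩
      · simp [Bls, Qw, blk]
      · simp [blk, count_embed, bl]
    · obtain ⟨S, h1, h2⟩ := ih (nx s i)
      refine ⟨S, ?_, h2⟩
      rw [Bls, h1, Qw, List.append_assoc]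

theorem Qw_prefix [NeZero r] (ε : Fin r → Bool) (Wi : Fin r → List (Fin p × Bool)) (s : Bool)
    (hred : ∀ i, FreeGroup.IsReduced (wd Wi s i)) (t : List (Bool × List (Fin p × Bool))) :
    ∀ (q : ℕ) (i : Fin r), (∀ x ∈ t, FreeGroup.IsReduced x.2) →
    BPat ε (fun s i => FreeGroup.mk (wd Wi s i)) s i q (t.map fun x => (x.1, FreeGroup.mk x.2)) →
    Qw ε Wi s q i <+: unp t := by
  induction t with
  | nil =>
    intro q i _ h
    rcases q with _ | q
    · simp [Qw]
    · obtain ⟨_, _, h, -⟩ := h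
      simp at h
  | cons x t ih =>
    intro q i hx h
    rcases q with _ | q
    · simp [Qw]
    obtain ⟨v, l', h1, h2⟩ := h
    simp only [List.map_cons, List.cons.injEq, Prod.mk.injEq] at h1
    obtain ⟨⟨h3, rfl⟩, rfl⟩ := h1
    have hu : unp (x :: t) = bl x.1 :: embedWord Sum.inl x.2 ++ unp t := by simp [unp]
    rcases q with _ | q
    · rw [hu, Qw, h3]
      exact ⟨_, rfl⟩
    · obtain ⟨h4, h5⟩ := h2.resolve_left (by simp)
      have h6 : x.2 = wd Wi s (nx s i) := by
        have := congrArg FreeGroup.toWord h4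
        rwa [FreeGroup.toWord_mk, FreeGroup.toWord_mk, (hx x (by simp)).reduce_eq,
          (hred _).reduce_eq] at this
      rw [hu, Qw, blk, h6, h3]
      exact (List.prefix_append_right_inj _).2 (ih (q + 1) _ (fun y hy => hx y (by simp [hy])) h5)

theorem parse (P : List ((Fin p ⊕ Unit) × Bool)) (hP : FreeGroup.IsReduced P) :
    ∃ (V : List (Fin p × Bool)) (l : List (Bool × List (Fin p × Bool))),
      P = embedWord Sum.inl V ++ unp l ∧ FreeGroup.IsReduced V ∧
      (∀ x ∈ l, FreeGroup.IsReduced x.2) ∧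
      l.IsChain (fun x y => x.2 = [] → y.1 = x.1) := by
  induction P with
  | nil => exact ⟨[], [], rfl, List.isChain_nil, by simp, List.isChain_nil⟩
  | cons x P ih =>
    obtain ⟨V, l, rfl, hV, hl, hc⟩ := ih hP.tail
    obtain ⟨a | u, s⟩ := x
    · refine ⟨(a, s) :: V, l, by simp [embedWord], ?_, hl, hc⟩
      rcases V with _ | ⟨y, V⟩
      · exact List.isChain_singleton _
      · refine List.isChain_cons_cons.2 ⟨?_, hV⟩
        have := (List.isChain_cons_cons.1 hP).1
        intro h
        exact this (congrArg Sum.inl h)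
    · refine ⟨[], (s, V) :: l, by simp [embedWord, unp, bl], List.isChain_nil, ?_, ?_⟩
      · simp only [List.mem_cons, forall_eq_or_imp]
        exact ⟨hV, hl⟩
      · rcases l with _ | ⟨y, l⟩
        · exact List.isChain_singleton _
        · refine List.isChain_cons_cons.2 ⟨?_, hc⟩
          rintro (rfl : V = [])
          exact ((List.isChain_cons_cons.1 hP).1 rfl).symm

theorem Bls_add [NeZero r] (ε : Fin r → Bool) (Wi : Fin r → List (Fin p × Bool)) (s : Bool)
    (a b : ℕ) : ∀ i : Fin r,
    Bls ε Wi s (a + b) i = Bls ε Wi s a i ++ Bls ε Wi s b ((nx s)^[a] i) := by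
  induction a with
  | zero => intro i; simp [Bls]
  | succ a ih =>
    intro i
    rw [Nat.succ_add_eq_add_succ, Nat.add_succ, Bls, Bls, ih, Function.iterate_succ_apply,
      List.append_assoc]

theorem Bls_snoc [NeZero r] (ε : Fin r → Bool) (Wi : Fin r → List (Fin p × Bool)) (s : Bool)
    (a : ℕ) (i : Fin r) :
    Bls ε Wi s (a + 1) i = Bls ε Wi s a i ++ blk ε Wi s ((nx s)^[a] i) := by
  rw [Bls_add]
  simp [Bls]

theorem nx_iter_true [NeZero r] (a : ℕ) (i : Fin r) : (nx true)^[a] i = i + a • (1 : Fin r) := by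
  induction a with
  | zero => simp
  | succ a ih =>
    rw [Function.iterate_succ_apply', ih, succ_nsmul, nx, if_pos rfl, add_assoc]

theorem nx_iter_false [NeZero r] (a : ℕ) (i : Fin r) : (nx false)^[a] i = i - a • (1 : Fin r) := by
  induction a with
  | zero => simp
  | succ a ih =>
    rw [Function.iterate_succ_apply', ih, succ_nsmul, nx, if_neg (by simp), sub_sub]

theorem fin_nsmul_self [NeZero r] : r • (1 : Fin r) = 0 := by
  have := card_nsmul_eq_zero' (G := Fin r) (x := 1)
  simpa using this

theorem fin_nsmul_mul [NeZero r] (n : ℕ) : (n * r) • (1 : Fin r) = 0 := by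
  rw [mul_nsmul', fin_nsmul_self, nsmul_zero]

theorem nx_iter [NeZero r] (s : Bool) (n : ℕ) (i : Fin r) : (nx s)^[n * r] i = i := by
  cases s
  · rw [nx_iter_false, fin_nsmul_mul, sub_zero]
  · rw [nx_iter_true, fin_nsmul_mul, add_zero]

theorem Bls_rot_step [NeZero r] (ε : Fin r → Bool) (Wi : Fin r → List (Fin p × Bool)) (s : Bool)
    (n : ℕ) (i : Fin r) : Bls ε Wi s (n * r) i ~r Bls ε Wi s (n * r) (nx s i) := by
  have h := nx_iter s n i
  generalize n * r = N at h ⊢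
  rcases N with _ | q
  · exact List.IsRotated.refl _
  · rw [Bls, Bls_snoc, ← Function.iterate_succ_apply, h]
    exact List.isRotated_append

theorem Bls_rot_iter [NeZero r] (ε : Fin r → Bool) (Wi : Fin r → List (Fin p × Bool)) (s : Bool)
    (n a : ℕ) (i : Fin r) : Bls ε Wi s (n * r) i ~r Bls ε Wi s (n * r) ((nx s)^[a] i) := by
  induction a with
  | zero => exact List.IsRotated.refl _
  | succ a ih =>
    rw [Function.iterate_succ_apply']
    exact ih.trans (Bls_rot_step ε Wi s n _)

theorem fin_nsmul_val [NeZero r] (i : Fin r) : (i : ℕ) • (1 : Fin r) = i := by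
  have h : ∀ a : ℕ, ((a • (1 : Fin r) : Fin r) : ℕ) = a % r := by
    intro a
    induction a with
    | zero => simp
    | succ a ih => rw [succ_nsmul, Fin.val_add, ih, Fin.val_one', ← Nat.add_mod]
  apply Fin.ext
  rw [h, Nat.mod_eq_of_lt i.isLt]

theorem Bls_rot [NeZero r] (ε : Fin r → Bool) (Wi : Fin r → List (Fin p × Bool))
    (n : ℕ) (i j : Fin r) : Bls ε Wi true (n * r) i ~r Bls ε Wi true (n * r) j := by
  have := Bls_rot_iter ε Wi true n ((j - i : Fin r) : ℕ) i
  rwa [nx_iter_true, fin_nsmul_val, add_sub_cancel] at this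

theorem Bls_eq_range [NeZero r] (ε : Fin r → Bool) (Wi : Fin r → List (Fin p × Bool)) (s : Bool)
    (q : ℕ) (i : Fin r) :
    Bls ε Wi s q i = ((List.range q).map fun t => blk ε Wi s ((nx s)^[t] i)).flatten := by
  induction q with
  | zero => simp [Bls]
  | succ q ih => rw [Bls_snoc, ih, List.range_succ]; simp

theorem bWord_eq [NeZero r] (ε : Fin r → Bool) (Wi : Fin r → List (Fin p × Bool)) :
    bWord p r ε Wi = Bls ε Wi true r (-1) := by
  rw [Bls_eq_range, bWord, ← List.map_coe_finRange_eq_range, List.map_map]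
  congr 1
  apply List.map_congr_left
  intro a _
  simp only [Function.comp_apply, nx_iter_true, fin_nsmul_val, blk, bl, dl, wd, nx, if_true]
  rw [show (-1 : Fin r) + a + 1 = a by abel]

theorem wordPow_eq [NeZero r] (ε : Fin r → Bool) (Wi : Fin r → List (Fin p × Bool)) (n : ℕ) :
    wordPow (bWord p r ε Wi) n = Bls ε Wi true (n * r) (-1) := by
  induction n with
  | zero => simp [wordPow, Bls]
  | succ n ih =>
    have h1 : wordPow (bWord p r ε Wi) (n + 1) =
        bWord p r ε Wi ++ wordPow (bWord p r ε Wi) n := by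
      simp [wordPow, List.replicate_succ]
    have h2 := nx_iter true 1 (-1 : Fin r)
    rw [one_mul] at h2
    rw [h1, ih, add_mul, one_mul, add_comm, Bls_add, h2, bWord_eq]

theorem wordInv_append {α : Type*} (u v : List (α × Bool)) :
    wordInv (u ++ v) = wordInv v ++ wordInv u := by
  simp [wordInv]

theorem wordInv_embed (w : List (Fin p × Bool)) :
    wordInv (embedWord (Sum.inl : Fin p → Fin p ⊕ Unit) w) = embedWord Sum.inl (wordInv w) := by
  simp [wordInv, embedWord, List.map_reverse, Function.comp_def]

theorem wordInv_blk [NeZero r] (ε : Fin r → Bool) (Wi : Fin r → List (Fin p × Bool)) (i : Fin r) :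
    wordInv (blk ε Wi true i) =
      embedWord Sum.inl (wordInv (Wi (i + 1))) ++ [bl (!(ε (i + 1)))] := by
  have : blk ε Wi true i = [bl (ε (i + 1))] ++ embedWord Sum.inl (Wi (i + 1)) := rfl
  rw [this, wordInv_append, wordInv_embed]
  rfl

theorem wordInv_Bls [NeZero r] (ε : Fin r → Bool) (Wi : Fin r → List (Fin p × Bool)) (q : ℕ) :
    ∀ i : Fin r, wordInv (Bls ε Wi true q i) ++ embedWord Sum.inl (wordInv (Wi i)) =
      embedWord Sum.inl (wordInv (Wi (i + q • (1 : Fin r)))) ++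
        Bls ε Wi false q (i + q • (1 : Fin r)) := by
  induction q with
  | zero => intro i; simp [Bls, wordInv]
  | succ q ih =>
    intro i
    have h1 : Bls ε Wi false (q + 1) (i + (q + 1) • (1 : Fin r)) =
        Bls ε Wi false q (i + (q + 1) • (1 : Fin r)) ++
          (bl (!(ε (i + 1))) :: embedWord Sum.inl (wordInv (Wi i))) := by
      rw [Bls_snoc, nx_iter_false, succ_nsmul',
        show i + (1 + q • (1 : Fin r)) - q • (1 : Fin r) = i + 1 by abel]
      simp [blk, dl, wd, nx]
    have h2 := ih (i + 1)
    rw [show i + 1 + q • (1 : Fin r) = i + (q + 1) • (1 : Fin r) by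
      rw [succ_nsmul', add_assoc]] at h2
    rw [h1, ← List.append_assoc, ← h2, Bls, wordInv_append, wordInv_blk]
    simp [nx]

theorem Bls_false_rot [NeZero r] (ε : Fin r → Bool) (Wi : Fin r → List (Fin p × Bool)) (n : ℕ)
    (i : Fin r) : Bls ε Wi false (n * r) i ~r wordInv (Bls ε Wi true (n * r) i) := by
  have h := fin_nsmul_mul (r := r) n
  generalize n * r = N at h ⊢
  rcases N with _ | q
  · exact List.IsRotated.refl _
  · have h1 := wordInv_Bls ε Wi q (i + 1)
    rw [add_assoc, ← succ_nsmul', h, add_zero] at h1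
    have h2 : q • (1 : Fin r) = -1 := by
      rw [succ_nsmul] at h
      exact eq_neg_of_add_eq_zero_left h
    rw [Bls_snoc ε Wi false, Bls, wordInv_append, wordInv_blk, nx_iter_false, h2, nx, if_pos rfl,
      ← List.append_assoc, h1]
    rw [List.append_assoc]
    refine List.IsRotated.trans ?_ List.isRotated_append
    have : blk ε Wi false (i - -1) = [bl (!(ε (i + 1)))] ++ embedWord Sum.inl (wordInv (Wi i)) := by
      simp [blk, dl, wd, nx]
    rw [this, List.append_assoc]

theorem mk_wordInv {α : Type*} (w : List (α × Bool)) :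
    FreeGroup.mk (wordInv w) = (FreeGroup.mk w)⁻¹ := by
  rw [FreeGroup.inv_mk]
  rfl

theorem wordInv_isReduced {α : Type*} (w : List (α × Bool)) (h : FreeGroup.IsReduced w) :
    FreeGroup.IsReduced (wordInv w) := by
  unfold FreeGroup.IsReduced at h ⊢
  rw [wordInv, List.isChain_reverse, List.isChain_map]
  refine h.imp ?_
  intro a b hab h1
  simp [hab h1.symm]

/-- The homomorphism to the amalgam. -/
def theta {M : Type} [Group M] (iF : FreeGroup (Fin p) →* M) (b : M) :
    FreeGroup (Fin p ⊕ Unit) →* M :=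
  FreeGroup.lift (Sum.elim (fun a => iF (FreeGroup.of a)) (fun _ => b))

theorem theta_embed {M : Type} [Group M] (iF : FreeGroup (Fin p) →* M) (b : M)
    (V : List (Fin p × Bool)) :
    theta iF b (FreeGroup.mk (embedWord Sum.inl V)) = iF (FreeGroup.mk V) := by
  have h : (theta iF b).comp (FreeGroup.map Sum.inl) = iF := by
    ext a
    simp [theta]
  have h2 := DFunLike.congr_fun h (FreeGroup.mk V)
  rw [MonoidHom.comp_apply, FreeGroup.map.mk] at h2
  exact h2

theorem theta_bl {M : Type} [Group M] (iF : FreeGroup (Fin p) →* M) (B : Bool → M)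
    (hB : B false = (B true)⁻¹) (δ : Bool) :
    theta iF (B true) (FreeGroup.mk [bl δ]) = B δ := by
  cases δ <;> simp [theta, bl, hB]

theorem theta_cons {M : Type} [Group M] (iF : FreeGroup (Fin p) →* M) (B : Bool → M)
    (hB : B false = (B true)⁻¹) (δ : Bool) (V : List (Fin p × Bool))
    (w : List ((Fin p ⊕ Unit) × Bool)) :
    theta iF (B true) (FreeGroup.mk (bl δ :: embedWord Sum.inl V ++ w)) =
      B δ * iF (FreeGroup.mk V) * theta iF (B true) (FreeGroup.mk w) := by
  have : bl δ :: embedWord Sum.inl V ++ w = [bl δ] ++ (embedWord Sum.inl V ++ w) := rfl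
  rw [this, ← FreeGroup.mul_mk, ← FreeGroup.mul_mk, map_mul, map_mul, theta_bl iF B hB,
    theta_embed, mul_assoc]

theorem theta_unp {M : Type} [Group M] (iF : FreeGroup (Fin p) →* M) (B : Bool → M)
    (hB : B false = (B true)⁻¹) (l : List (Bool × List (Fin p × Bool))) :
    theta iF (B true) (FreeGroup.mk (unp l)) =
      evalL B iF (l.map fun x => (x.1, FreeGroup.mk x.2)) := by
  induction l with
  | nil => exact map_one _
  | cons x l ih =>
    have hu : unp (x :: l) = bl x.1 :: embedWord Sum.inl x.2 ++ unp l := by simp [unp]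
    rw [hu, theta_cons iF B hB, ih]
    simp [evalL]

theorem theta_Bls [NeZero r] {M : Type} [Group M] (iF : FreeGroup (Fin p) →* M) (B : Bool → M)
    (hB : B false = (B true)⁻¹) (ε : Fin r → Bool) (Wi : Fin r → List (Fin p × Bool))
    (Y : Fin r → M) (U : M)
    (hY : ∀ i, B (ε i) * iF (FreeGroup.mk (wd Wi true i)) = (Y i)⁻¹ * U * Y (i + 1)) (q : ℕ) :
    ∀ i : Fin r, theta iF (B true) (FreeGroup.mk (Bls ε Wi true q i)) =
      (Y (i + 1))⁻¹ * U ^ q * Y (i + 1 + q • (1 : Fin r)) := by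
  induction q with
  | zero => intro i; simp [Bls, ← FreeGroup.one_eq_mk]
  | succ q ih =>
    intro i
    have h1 := hY (i + 1)
    rw [Bls, blk, theta_cons iF B hB, ih]
    simp only [nx, dl, if_true]
    rw [h1, succ_nsmul', pow_succ', ← add_assoc]
    group

end Words
/-- **Theorem `thm:1rel-extreme` (spelling part).**  For the one-relator group
`G = ⟨a₁, …, a_p, b ∣ (b^{ε₁} W₁ ⋯ b^{ε_r} W_r)^n⟩`, where each `εᵢ = ±1`, the `Wᵢ`
are nonempty reduced words in the `aᵢ` freely generating a subgroup of the free group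
on `a₁, …, a_p`, every nonempty reduced word `P` representing the trivial element of
`G` contains a subword `Q` such that `Q ++ S` is a cyclic conjugate of `W^{±n}` for
some word `S` in which `b^{±1}` occurs at most once. -/
theorem one_relator_extreme_spelling
    (p r n : ℕ) (hp : 1 ≤ p) (hr : 1 ≤ r) (hn : 1 ≤ n)
    (ε : Fin r → Bool)
    (Wi : Fin r → List (Fin p × Bool))
    (hne : ∀ i, Wi i ≠ []) (hred : ∀ i, WordReduced (Wi i))
    (hfree : Function.Injective
      (FreeGroup.lift (fun i : Fin r => FreeGroup.mk (Wi i)) :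
        FreeGroup (Fin r) →* FreeGroup (Fin p)))
    (P : List ((Fin p ⊕ Unit) × Bool)) (hPne : P ≠ []) (hPred : WordReduced P)
    (hPtriv : FreeGroup.mk P ∈
      Subgroup.normalClosure ({FreeGroup.mk (bWord p r ε Wi) ^ n} :
        Set (FreeGroup (Fin p ⊕ Unit)))) :
    ∃ Q S : List ((Fin p ⊕ Unit) × Bool),
      Q <:+: P ∧
      ((Q ++ S) ~r wordPow (bWord p r ε Wi) n ∨
        (Q ++ S) ~r wordInv (wordPow (bWord p r ε Wi) n)) ∧
      S.countP (fun q => decide (q.1 = (Sum.inr () : Fin p ⊕ Unit))) ≤ 1 := by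
  haveI : NeZero r := ⟨by omega⟩
  have hNpos : 1 ≤ n * r := Nat.mul_pos hn hr
  -- it suffices to find the prefix of a sequence of blocks
  suffices h : ∃ (s : Bool) (i : Fin r), Qw ε Wi s (n * r - 1) i <:+: P by
    obtain ⟨s, i, hQ⟩ := h
    obtain ⟨S, hS, hcount⟩ := Bls_eq_Qw ε Wi s (n * r - 1) i
    rw [Nat.sub_add_cancel hNpos] at hS
    refine ⟨_, S, hQ, ?_, hcount⟩
    rw [← hS, wordPow_eq]
    cases s
    · right
      refine (Bls_false_rot ε Wi n i).trans ?_
      exact ((Bls_rot ε Wi n i (-1)).map _).reverse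
    · left
      exact Bls_rot ε Wi n i (-1)
  by_cases hN1 : n * r = 1
  · refine ⟨true, 0, ?_⟩
    rw [hN1]
    exact List.nil_infix
  have hN : 2 ≤ n * r := by omega
  have hredw : ∀ s i, FreeGroup.IsReduced (wd Wi s i) := by
    intro s i
    have := (wordReduced_iff _).1 (hred i)
    cases s
    · exact wordInv_isReduced _ this
    · exact this
  obtain ⟨V, l, rfl, hV, hl, hc⟩ := parse P ((wordReduced_iff _).1 hPred)
  by_cases hpat : NoPat ε (fun s i => FreeGroup.mk (wd Wi s i)) (n * r - 1)
      (l.map fun x => (x.1, FreeGroup.mk x.2))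
  · exfalso
    obtain ⟨M, _, iF, B, Y, U, hinj, hB, hU, hY, hmain⟩ := main_struct r (n * r) hN ε
      (FreeGroup.lift (fun i : Fin r => FreeGroup.mk (Wi i))) hfree
      (fun s i => FreeGroup.mk (wd Wi s i)) (by
        intro s i
        cases s
        · simp [wK, wd, mk_wordInv]
        · simp [wK, wd])
    have hker : Subgroup.normalClosure ({FreeGroup.mk (bWord p r ε Wi) ^ n} :
        Set (FreeGroup (Fin p ⊕ Unit))) ≤ (theta iF (B true)).ker := by
      apply Subgroup.normalClosure_le_normal
      rw [Set.singleton_subset_iff]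
      have h1 : FreeGroup.mk (bWord p r ε Wi) ^ n =
          FreeGroup.mk (wordPow (bWord p r ε Wi) n) := FreeGroup.pow_mk n
      rw [h1, wordPow_eq]
      change theta iF (B true) _ = 1
      rw [theta_Bls iF B hB ε Wi Y U hY, fin_nsmul_mul, hU]
      simp
    have htriv : theta iF (B true) (FreeGroup.mk (embedWord Sum.inl V ++ unp l)) = 1 :=
      hker hPtriv
    rw [← FreeGroup.mul_mk, map_mul, theta_embed, theta_unp iF B hB] at htriv
    by_cases hlne : l = []
    · subst hlne
      simp only [evalL, List.map_nil, List.prod_nil, mul_one] at htriv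
      rw [← map_one iF] at htriv
      have h2 := congrArg FreeGroup.toWord (hinj htriv)
      rw [FreeGroup.toWord_mk, hV.reduce_eq, FreeGroup.toWord_one] at h2
      subst h2
      exact hPne rfl
    · refine hmain (l.map fun x => (x.1, FreeGroup.mk x.2)) (by simpa using hlne) ?_ hpat
        (FreeGroup.mk V)⁻¹ ?_
      · unfold SRed
        rw [List.isChain_map]
        refine List.IsChain.imp_of_mem_imp ?_ hc
        intro x y hx _ hxy h1
        apply hxy
        have h2 := congrArg FreeGroup.toWord h1
        rwa [FreeGroup.toWord_mk, (hl x hx).reduce_eq, FreeGroup.toWord_one] at h2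
      · rw [map_inv]
        exact (inv_eq_of_mul_eq_one_right htriv).symm
  · simp only [NoPat, not_forall, not_not] at hpat
    obtain ⟨t, ⟨u, hu⟩, s, i, hb⟩ := hpat
    obtain ⟨l1, t0, rfl, -, rfl⟩ := List.map_eq_append_iff.1 hu.symm
    refine ⟨s, i, ?_⟩
    have h1 := Qw_prefix ε Wi s (hredw s) t0 _ i (fun x hx => hl x (by simp [hx])) hb
    refine h1.isInfix.trans ⟨embedWord Sum.inl V ++ unp l1, [], ?_⟩
    simp [unp]
end
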